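/- For every integer α ≥ 1 there exist integers d(0,0) and d(n,0), d(n,1), d(n,2) for n ≥ 1 such that, in the d_3 tower, L_{2α} = d(0,0)·7^α·p_0 + p_0·∑_{n≥1} d(n,0)·7^{⌊(7n−4)/4⌋+α}·t^n + p_1·∑_{n≥1} d(n,1)·7^{⌊(7n−7)/4⌋+α}·t^n + ∑_{n≥1} d(n,2)·7^{⌊(7n−7)/4⌋+α}·t^n, where the infinite sums converge coefficientwise since t^n has q-order n. -/

import Mathlib

noncomputable section

/-- `J b = ∏_{k=1}^∞ (1 - q^{b·k})` as a formal power series with integer coefficients. -/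
def J (b : ℕ) : PowerSeries ℤ :=
  PowerSeries.mk fun n =>
    PowerSeries.coeff n
      (∏ k ∈ Finset.range (n + 1), (1 - (PowerSeries.X : PowerSeries ℤ) ^ (b * (k + 1))))

/-- The coefficientwise-convergent sum `∑_{n≥0} c(n)·t^n`: since `t` has q-order 1, the
coefficient of `q^m` only receives contributions from `n ≤ m`. -/
def tpowSum (t : PowerSeries ℤ) (c : ℕ → ℤ) : PowerSeries ℤ :=
  PowerSeries.mk fun m =>
    ∑ n ∈ Finset.range (m + 1), c n * PowerSeries.coeff m (t ^ n)


namespace S12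
open PowerSeries Filter Topology
open scoped PowerSeries.WithPiTopology

def Pt (a r N : ℕ) : PowerSeries ℤ := ∏ k ∈ Finset.range N, (1 - (X : PowerSeries ℤ) ^ (a + r * k))

def Pinf (a r : ℕ) : PowerSeries ℤ := PowerSeries.mk fun n => coeff n (Pt a r (n + 1))

lemma J_eq (b : ℕ) : J b = Pinf b b := by
  ext n
  simp only [J, Pinf, Pt, coeff_mk]
  congr 1
  apply Finset.prod_congr rfl
  intro k _
  rw [mul_add, mul_one, add_comm]

lemma Pt_stab (a r : ℕ) (ha : 1 ≤ a) (hr : 1 ≤ r) (n N : ℕ) (h : n + 1 ≤ N) :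
    coeff n (Pt a r N) = coeff n (Pinf a r) := by
  induction N, h using Nat.le_induction with
  | base => simp [Pinf]
  | succ N hN ih =>
    rw [← ih, Pt, Finset.prod_range_succ, ← Pt, mul_sub, mul_one, map_sub, coeff_mul_X_pow',
      if_neg, sub_zero]
    have : N ≤ r * N := Nat.le_mul_of_pos_left _ hr
    omega

lemma Pt_tendsto (a r : ℕ) (ha : 1 ≤ a) (hr : 1 ≤ r) :
    Tendsto (Pt a r) atTop (𝓝 (Pinf a r)) := by
  rw [PowerSeries.WithPiTopology.tendsto_iff_coeff_tendsto]
  intro d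
  apply tendsto_const_nhds.congr'
  filter_upwards [eventually_ge_atTop (d + 1)] with N hN
  exact (Pt_stab a r ha hr d N hN).symm

lemma prod_range_split {M : Type*} [CommMonoid M] (f : ℕ → M) (s N : ℕ) :
    ∏ k ∈ Finset.range (s * N), f k = ∏ i ∈ Finset.range s, ∏ k ∈ Finset.range N, f (i + s * k) := by
  induction N with
  | zero => simp
  | succ N ih =>
    rw [mul_add, mul_one, Finset.prod_range_add, ih, ← Finset.prod_mul_distrib]
    apply Finset.prod_congr rfl
    intro i _
    rw [Finset.prod_range_succ, add_comm (s * N)]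

lemma Pinf_split (a r s : ℕ) (ha : 1 ≤ a) (hr : 1 ≤ r) (hs : 1 ≤ s) :
    ∏ i ∈ Finset.range s, Pinf (a + r * i) (r * s) = Pinf a r := by
  have h1 : Tendsto (fun N => ∏ i ∈ Finset.range s, Pt (a + r * i) (r * s) N) atTop
      (𝓝 (∏ i ∈ Finset.range s, Pinf (a + r * i) (r * s))) := by
    apply tendsto_finsetProd
    intro i _
    apply Pt_tendsto
    · omega
    · exact Nat.mul_pos hr hs
  have h2 : Tendsto (fun N => Pt a r (s * N)) atTop (𝓝 (Pinf a r)) := by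
    apply (Pt_tendsto a r ha hr).comp
    apply tendsto_atTop_mono _ tendsto_id
    intro n
    exact Nat.le_mul_of_pos_left _ hs
  refine tendsto_nhds_unique (h1.congr fun N => ?_) h2
  simp only [Pt]
  rw [prod_range_split]
  apply Finset.prod_congr rfl
  intro i _
  apply Finset.prod_congr rfl
  intro k _
  congr 2
  ring

lemma constCoeff_J (b : ℕ) (hb : 1 ≤ b) : constantCoeff (J b) = 1 := by
  rw [← coeff_zero_eq_constantCoeff_apply]
  simp [J]
  omega

lemma J_ne (b : ℕ) (hb : 1 ≤ b) : J b ≠ 0 := by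
  intro h
  have := constCoeff_J b hb
  rw [h] at this
  simp at this

/-! q-binomials -/
def gb {K : Type*} [CommRing K] (p : K) : ℕ → ℕ → K
  | _, 0 => 1
  | 0, _ + 1 => 0
  | N + 1, m + 1 => gb p N m + p ^ (m + 1) * gb p N (m + 1)

lemma gb_zero {K : Type*} [CommRing K] (p : K) (N : ℕ) : gb p N 0 = 1 := by
  cases N <;> rfl

lemma gb_gt {K : Type*} [CommRing K] (p : K) (N m : ℕ) (h : N < m) : gb p N m = 0 := by
  induction N generalizing m with
  | zero => cases m with
    | zero => omega
    | succ m => rfl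
  | succ N ih => cases m with
    | zero => omega
    | succ m => rw [gb, ih m (by omega), ih (m+1) (by omega)]; simp

lemma gb_map {K K' : Type*} [CommRing K] [CommRing K'] (φ : K →+* K') (p : K) (N m : ℕ) :
    φ (gb p N m) = gb (φ p) N m := by
  induction N generalizing m with
  | zero => cases m <;> simp [gb]
  | succ N ih => cases m with
    | zero => simp [gb]
    | succ m => simp [gb, ih]

lemma qbinom {K : Type*} [CommRing K] (p A B : K) (N : ℕ) :
    ∏ k ∈ Finset.range N, (A + B * p ^ k)
      = ∑ m ∈ Finset.range (N + 1), gb p N m * p ^ (m.choose 2) * A ^ (N - m) * B ^ m := by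
  induction N generalizing B with
  | zero => simp [gb]
  | succ N ih =>
    rw [Finset.prod_range_succ']
    have h : ∏ k ∈ Finset.range N, (A + B * p ^ (k + 1)) = ∏ k ∈ Finset.range N, (A + (B * p) * p ^ k) := by
      apply Finset.prod_congr rfl; intros; ring
    rw [h, ih, Finset.sum_range_succ' _ (N + 1)]
    have e : ∀ m, (m + 1).choose 2 = m.choose 2 + m := by
      intro m; rw [Nat.choose_succ_succ' m 1]; simp; ring
    simp only [gb, e, Nat.add_sub_add_right]
    have h3 : ∑ m ∈ Finset.range (N+1), (gb p N m + p ^ (m+1) * gb p N (m+1)) * p ^ (m.choose 2 + m)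
        * A ^ (N - m) * B ^ (m+1) = B * ∑ m ∈ Finset.range (N+1), gb p N m * p ^ (m.choose 2) * A ^ (N - m) * (B * p) ^ m
        + ∑ m ∈ Finset.range (N+1), p ^ (m+1) * gb p N (m+1) * p ^ (m.choose 2 + m) * A ^ (N - m) * B ^ (m+1) := by
      rw [Finset.mul_sum, ← Finset.sum_add_distrib]
      apply Finset.sum_congr rfl; intros; ring
    have h4 : A * ∑ m ∈ Finset.range (N+1), gb p N m * p ^ (m.choose 2) * A ^ (N - m) * (B * p) ^ m
       = ∑ m ∈ Finset.range (N+1), p ^ (m+1) * gb p N (m+1) * p ^ (m.choose 2 + m) * A ^ (N - m) * B ^ (m+1)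
         + A ^ (N + 1) := by
      rw [Finset.sum_range_succ', Finset.sum_range_succ _ N, gb_gt p N (N+1) (by omega), mul_add, Finset.mul_sum]
      simp only [gb_zero]
      simp only [mul_zero, zero_mul, add_zero, e]
      congr 1
      · apply Finset.sum_congr rfl
        intro m hm
        have : N - m = (N - (m + 1)) + 1 := by have := Finset.mem_range.1 hm; omega
        rw [this]; ring
      · simp; ring
    rw [h3]
    simp only [pow_zero, mul_one, gb_zero, Nat.choose_zero_succ, Nat.sub_zero, one_mul]
    linear_combination h4

lemma gb_fact {K : Type*} [CommRing K] (p : K) (m n : ℕ) :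
    gb p (m + n) m * (∏ k ∈ Finset.range m, (1 - p ^ (k + 1))) * (∏ k ∈ Finset.range n, (1 - p ^ (k + 1)))
      = ∏ k ∈ Finset.range (m + n), (1 - p ^ (k + 1)) := by
  induction' hN : m + n with N ih generalizing m n
  · obtain ⟨rfl, rfl⟩ : m = 0 ∧ n = 0 := by omega
    simp [gb]
  · cases m with
    | zero =>
      rw [gb_zero, show n = N + 1 by omega]; simp
    | succ m =>
      cases n with
      | zero =>
        have := ih m 0 (by omega)
        obtain rfl : N = m := by omega
        rw [gb, gb_gt p N (N+1) (by omega), Finset.prod_range_succ]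
        simp at this ⊢
        linear_combination (1 - p ^ (N + 1)) * this
      | succ n =>
        have h1 := ih m (n+1) (by omega)
        have h2 := ih (m+1) n (by omega)
        obtain rfl : N = m + n + 1 := by omega
        rw [gb, Finset.prod_range_succ _ (m + n + 1)]
        rw [Finset.prod_range_succ _ n] at h1 ⊢
        rw [Finset.prod_range_succ _ m] at h2 ⊢
        linear_combination (1 - p ^ (m + 1)) * h1 + p ^ (m+1) * (1 - p ^ (n+1)) * h2

end S12

namespace S12
open PowerSeries Filter Topology
open scoped PowerSeries.WithPiTopology

def tri (j : ℤ) : ℕ := (j * (j + 1) / 2).toNat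

lemma tri_spec (j : ℤ) : 2 * (tri j : ℤ) = j * (j + 1) := by
  unfold tri
  have h : 2 ∣ j * (j + 1) := (Int.even_mul_succ_self j).two_dvd
  have h2 : 0 ≤ j * (j + 1) := by
    rcases le_or_gt 0 j with h | h
    · positivity
    · nlinarith
  omega

lemma choose2 (m : ℕ) : 2 * (m.choose 2 : ℤ) = m * (m - 1) := by
  induction m with
  | zero => simp
  | succ m ih =>
    have : (m + 1).choose 2 = m.choose 2 + m := by
      rw [Nat.choose_succ_succ' m 1]; simp; ring
    rw [this]; push_cast; linarith

lemma finJTP_aux {K : Type*} [CommRing K] [IsDomain K] (x y : K) (hx : x ≠ 0) (hy : y ≠ 0) (n : ℕ) :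
    (∏ k ∈ Finset.range n, (1 - x * (x * y) ^ k)) * (∏ k ∈ Finset.range n, (1 - y * (x * y) ^ k))
     = ∑ m ∈ Finset.range (2 * n + 1), (-1) ^ (m + n) * x ^ (tri ((m : ℤ) - n)) * y ^ (tri ((m : ℤ) - n - 1))
        * gb (x * y) (2 * n) m := by
  have hp : x * y ≠ 0 := mul_ne_zero hx hy
  have hc : (x * y) ^ (n.choose 2 + n ^ 2) * (- x) ^ n ≠ 0 :=
    mul_ne_zero (pow_ne_zero _ hp) (pow_ne_zero _ (neg_ne_zero.2 hx))
  apply mul_left_cancel₀ hc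
  have h := qbinom (x * y) ((x * y) ^ n) (-x) (2 * n)
  have h1 : ∏ k ∈ Finset.range (2 * n), ((x * y) ^ n + -x * (x * y) ^ k)
     = (x * y) ^ (n.choose 2 + n ^ 2) * (- x) ^ n * ((∏ k ∈ Finset.range n, (1 - x * (x * y) ^ k)) * (∏ k ∈ Finset.range n, (1 - y * (x * y) ^ k))) := by
    rw [two_mul, Finset.prod_range_add]
    have e1 : ∏ k ∈ Finset.range n, ((x * y) ^ n + -x * (x * y) ^ k)
      = (x * y) ^ (n.choose 2) * (-x) ^ n * ∏ k ∈ Finset.range n, (1 - y * (x * y) ^ k) := by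
      rw [← Finset.prod_range_reflect (fun k => (1 - y * (x * y) ^ k))]
      have : (x * y) ^ (n.choose 2) = ∏ k ∈ Finset.range n, (x * y) ^ k := by
        rw [Finset.prod_pow_eq_pow_sum, Finset.sum_range_id, Nat.choose_two_right]
      rw [this]
      have : (-x) ^ n = ∏ k ∈ Finset.range n, (-x) := by simp
      rw [this, ← Finset.prod_mul_distrib, ← Finset.prod_mul_distrib]
      apply Finset.prod_congr rfl
      intro k hk
      have : n = k + (n - 1 - k) + 1 := by have := Finset.mem_range.1 hk; omega
      conv_lhs => rw [this]
      ring
    have e2 : ∏ k ∈ Finset.range n, ((x * y) ^ n + -x * (x * y) ^ (n + k))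
      = (x * y) ^ (n ^ 2) * ∏ k ∈ Finset.range n, (1 - x * (x * y) ^ k) := by
      have : (x * y) ^ (n ^ 2) = ∏ k ∈ Finset.range n, (x * y) ^ n := by simp; ring
      rw [this, ← Finset.prod_mul_distrib]
      apply Finset.prod_congr rfl
      intro k hk
      ring
    rw [e1, e2]; ring
  rw [← h1, h, Finset.mul_sum]
  apply Finset.sum_congr rfl
  intro m hm
  have hm : m ≤ 2 * n := by have := Finset.mem_range.1 hm; omega
  have key : m.choose 2 + n * (2 * n - m) = n.choose 2 + n ^ 2 + tri ((m : ℤ) - n - 1) := by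
    zify [hm]
    have := choose2 m
    have := choose2 n
    have := tri_spec ((m : ℤ) - n - 1)
    nlinarith
  have key2 : m + tri ((m : ℤ) - n - 1) = n + tri ((m : ℤ) - n) := by
    have := tri_spec ((m : ℤ) - n - 1)
    have := tri_spec ((m : ℤ) - n)
    zify
    nlinarith
  have e3 : (x * y) ^ m.choose 2 * ((x * y) ^ n) ^ (2 * n - m) = (x * y) ^ (n.choose 2 + n ^ 2) * (x * y) ^ tri ((m : ℤ) - n - 1) := by
    rw [← pow_mul, ← pow_add, ← pow_add, key]
  have e4 : x ^ m * x ^ tri ((m : ℤ) - n - 1) = x ^ n * x ^ tri ((m : ℤ) - n) := by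
    rw [← pow_add, ← pow_add, key2]
  have e5 : (-1 : K) ^ (m + n) * (-1) ^ n = (-1) ^ m := by
    rw [pow_add, mul_assoc, ← pow_add, ← two_mul, pow_mul]; simp
  rw [neg_pow x n, neg_pow x m, mul_assoc (gb _ _ _), e3]
  rw [mul_pow x y (tri _)]
  calc _ = gb (x * y) (2 * n) m * (x * y) ^ (n.choose 2 + n ^ 2) * y ^ tri ((m : ℤ) - n - 1) * (-1) ^ m * (x ^ m * x ^ tri ((m : ℤ) - n - 1)) := by ring
    _ = _ := by rw [e4, ← e5]; ring

lemma finJTP {K : Type*} [CommRing K] (x y : K) (n : ℕ) :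
    (∏ k ∈ Finset.range n, (1 - x * (x * y) ^ k)) * (∏ k ∈ Finset.range n, (1 - y * (x * y) ^ k))
     = ∑ m ∈ Finset.range (2 * n + 1), (-1) ^ (m + n) * x ^ (tri ((m : ℤ) - n)) * y ^ (tri ((m : ℤ) - n - 1))
        * gb (x * y) (2 * n) m := by
  have h := finJTP_aux (K := MvPolynomial (Fin 2) ℤ) (MvPolynomial.X 0) (MvPolynomial.X 1)
    (MvPolynomial.X_ne_zero _) (MvPolynomial.X_ne_zero _) n
  have h2 := congrArg (MvPolynomial.eval₂Hom (Int.castRingHom K) ![x, y]) h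
  simp only [map_mul, map_prod, map_sum, map_sub, map_pow, map_one, map_neg, gb_map,
    MvPolynomial.coe_eval₂Hom, MvPolynomial.eval₂_X] at h2
  simpa using h2

/-- bilateral series -/
def theta (c : ℤ → ℤ) (e : ℤ → ℕ) : PowerSeries ℤ :=
  PowerSeries.mk fun K => ∑ j ∈ Finset.Icc (-(K : ℤ) - 1) (K + 1), if e j = K then c j else 0

lemma theta_coeff (c : ℤ → ℤ) (e : ℤ → ℕ) (he : ∀ j, |j| ≤ e j + 1) (K : ℕ) (S : Finset ℤ)
    (hS : ∀ j, e j = K → j ∈ S) : coeff K (theta c e) = ∑ j ∈ S, if e j = K then c j else 0 := by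
  rw [theta, coeff_mk, ← Finset.sum_filter, ← Finset.sum_filter]
  congr 1
  ext j
  simp only [Finset.mem_filter, Finset.mem_Icc]
  constructor
  · rintro ⟨_, h⟩; exact ⟨hS j h, h⟩
  · rintro ⟨_, h⟩
    have := he j
    rw [abs_le] at this
    exact ⟨by omega, h⟩

/-- congruence mod X^(K+1) -/
lemma coeff_congr_mul (K : ℕ) (f g f' g' : PowerSeries ℤ) (h : ∀ i ≤ K, coeff i f = coeff i f')
    (h' : ∀ i ≤ K, coeff i g = coeff i g') : ∀ i ≤ K, coeff i (f * g) = coeff i (f' * g') := by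
  intro i hi
  rw [coeff_mul, coeff_mul]
  apply Finset.sum_congr rfl
  rintro ⟨u, v⟩ huv
  have := Finset.HasAntidiagonal.mem_antidiagonal.1 huv
  simp only at this ⊢
  rw [h u (by omega), h' v (by omega)]

lemma Pt_pow (r n : ℕ) : ∏ k ∈ Finset.range n, (1 - ((X : PowerSeries ℤ) ^ r) ^ (k + 1)) = Pt r r n := by
  rw [Pt]
  apply Finset.prod_congr rfl
  intro k _
  rw [← pow_mul]; congr 2; ring

lemma gb_lim (r : ℕ) (hr : 1 ≤ r) (m n K : ℕ) (hm : K + 1 ≤ m) (hn : K + 1 ≤ n) :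
    ∀ i ≤ K, coeff i (Pinf r r * gb ((X : PowerSeries ℤ) ^ r) (m + n) m) = coeff i (1 : PowerSeries ℤ) := by
  have h := gb_fact ((X : PowerSeries ℤ) ^ r) m n
  rw [Pt_pow, Pt_pow, Pt_pow] at h
  have hu : IsUnit (Pinf r r) := by
    rw [PowerSeries.isUnit_iff_constantCoeff, ← J_eq, constCoeff_J r hr]; exact isUnit_one
  obtain ⟨v, hv⟩ := hu.exists_left_inv
  set g := gb ((X : PowerSeries ℤ) ^ r) (m + n) m
  have c1 : ∀ i ≤ K, coeff i (g * Pt r r m * Pt r r n) = coeff i (g * Pinf r r * Pinf r r) := by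
    apply coeff_congr_mul
    · apply coeff_congr_mul
      · intros; rfl
      · intro i hi; exact Pt_stab r r hr hr i m (by omega)
    · intro i hi; exact Pt_stab r r hr hr i n (by omega)
  have c2 : ∀ i ≤ K, coeff i (g * Pinf r r * Pinf r r) = coeff i (Pinf r r) := by
    intro i hi
    rw [← c1 i hi, h, Pt_stab r r hr hr i _ (by omega)]
  have c3 := coeff_congr_mul K _ v _ v c2 (fun _ _ => rfl)
  intro i hi
  have := c3 i hi
  rw [mul_assoc, mul_comm (Pinf r r) v, hv, mul_one] at this
  rw [mul_comm, this]

lemma theta_lim (c : ℤ → ℤ) (e : ℤ → ℕ) (he : ∀ j, |j| ≤ e j + 1) (r : ℕ) (hr : 1 ≤ r) (F : PowerSeries ℤ)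
    (hF : Tendsto (fun n : ℕ => ∑ m ∈ Finset.range (2 * n + 1), C (c ((m : ℤ) - n)) *
      X ^ (e ((m : ℤ) - n)) * gb ((X : PowerSeries ℤ) ^ r) (2 * n) m) atTop (𝓝 F)) :
    Pinf r r * F = theta c e := by
  have h2 := (tendsto_const_nhds (x := Pinf r r)).mul hF
  refine tendsto_nhds_unique h2 ?_
  rw [PowerSeries.WithPiTopology.tendsto_iff_coeff_tendsto]
  intro K
  apply tendsto_const_nhds.congr'
  filter_upwards [eventually_ge_atTop (2 * K + 2)] with n hn
  rw [Finset.mul_sum, map_sum]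
  rw [theta_coeff c e he K ((Finset.range (2 * n + 1)).image (fun m : ℕ => (m : ℤ) - n))]
  · rw [Finset.sum_image (by intro a _ b _ h; simp only at h; omega)]
    apply Finset.sum_congr rfl
    intro m hm
    have hm := Finset.mem_range.1 hm
    set j := (m : ℤ) - n with hj
    have : Pinf r r * (C (c j) * X ^ e j * gb ((X : PowerSeries ℤ) ^ r) (2 * n) m)
      = C (c j) * ((Pinf r r * gb ((X : PowerSeries ℤ) ^ r) (2 * n) m) * X ^ e j) := by ring
    rw [this, coeff_C_mul, coeff_mul_X_pow']
    by_cases hK : e j ≤ K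
    · rw [if_pos hK]
      have hej := he j
      rw [abs_le] at hej
      have : 2 * n = m + (2 * n - m) := by omega
      rw [this, gb_lim r hr m (2 * n - m) K (by omega) (by omega) _ (by omega), coeff_one]
      by_cases h : e j = K
      · simp [h]
      · rw [if_neg h, if_neg (by omega)]; simp
    · rw [if_neg hK, if_neg (by omega)]; simp
  · intro j hj
    have hej := he j
    rw [abs_le] at hej
    rw [Finset.mem_image]
    refine ⟨(j + n).toNat, ?_, ?_⟩
    · rw [Finset.mem_range]; omega
    · omega

lemma pw_parity (m n : ℕ) : ((-1 : PowerSeries ℤ)) ^ (m + n) = C ((Int.negOnePow ((m : ℤ) - n) : ℤˣ) : ℤ) := by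
  have : Int.negOnePow ((m : ℤ) - n) = Int.negOnePow ((m + n : ℕ) : ℤ) := by
    rw [Int.negOnePow_eq_iff]
    push_cast
    exact ⟨-n, by ring⟩
  rw [this, Int.negOnePow_def, zpow_natCast]
  simp

/-- Jacobi triple product -/
lemma JTP (a b : ℕ) (ha : 1 ≤ a) (hb : 1 ≤ b) :
    Pinf (a + b) (a + b) * (Pinf a (a + b) * Pinf b (a + b))
      = theta (fun j => ((Int.negOnePow j : ℤˣ) : ℤ)) (fun j => a * tri j + b * tri (j - 1)) := by
  apply theta_lim
  · intro j
    have h1 := tri_spec j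
    have h2 := tri_spec (j - 1)
    have : |j| ≤ j ^ 2 := by
      rw [← sq_abs]
      rcases eq_or_ne j 0 with rfl | h
      · simp
      · have := Int.one_le_abs h; nlinarith
    push_cast
    have h3 : (tri j : ℤ) ≤ a * tri j := by
      have : (0 : ℤ) ≤ tri j := by positivity
      have : (1 : ℤ) ≤ a := by exact_mod_cast ha
      nlinarith
    have h4 : (tri (j - 1) : ℤ) ≤ b * tri (j - 1) := by
      have : (0 : ℤ) ≤ tri (j - 1) := by positivity
      have : (1 : ℤ) ≤ b := by exact_mod_cast hb
      nlinarith
    nlinarith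
  · omega
  · refine ((Pt_tendsto a (a + b) ha (by omega)).mul (Pt_tendsto b (a + b) hb (by omega))).congr ?_
    intro n
    have h := finJTP ((X : PowerSeries ℤ) ^ a) (X ^ b) n
    rw [← pow_add] at h
    have e : ∀ a' : ℕ, ∏ k ∈ Finset.range n, (1 - (X : PowerSeries ℤ) ^ a' * (X ^ (a + b)) ^ k) = Pt a' (a + b) n := by
      intro a'
      rw [Pt]
      apply Finset.prod_congr rfl
      intro k _
      rw [← pow_mul, ← pow_add]
    rw [e, e] at h
    rw [h]
    apply Finset.sum_congr rfl
    intro m _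
    rw [pw_parity, ← pow_mul, ← pow_mul, mul_assoc (C _), ← pow_add]

end S12

namespace S12
open PowerSeries Filter Topology
open scoped PowerSeries.WithPiTopology

abbrev sg (j : ℤ) : ℤ := ((Int.negOnePow j : ℤˣ) : ℤ)

lemma J1_theta : J 1 = theta sg (fun j => tri j + 2 * tri (j - 1)) := by
  have h := JTP 1 2 (by norm_num) (by norm_num)
  have h2 := Pinf_split 1 1 3 (by norm_num) (by norm_num) (by norm_num)
  simp only [Finset.prod_range_succ, Finset.prod_range_zero] at h2
  norm_num at h h2
  rw [J_eq, ← h2, ← h]; ring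

def Phi : PowerSeries ℤ := theta sg (fun j => j.natAbs ^ 2)

lemma J2_Phi : J 1 ^ 2 = J 2 * Phi := by
  have h := JTP 1 1 (by norm_num) (by norm_num)
  have h2 := Pinf_split 1 1 2 (by norm_num) (by norm_num) (by norm_num)
  simp only [Finset.prod_range_succ, Finset.prod_range_zero] at h2
  norm_num at h h2
  have : (fun j : ℤ => tri j + tri (j - 1)) = fun j => j.natAbs ^ 2 := by
    ext j
    zify
    rw [sq_abs]
    have := tri_spec j
    have := tri_spec (j - 1)
    nlinarith
  rw [this] at h
  rw [Phi, J_eq, J_eq, ← h2, ← h]; ring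

lemma snd_pow_aux (a b : ℕ) (g s : PowerSeries ℤ) :
    TrivSqZeroExt.snd ((TrivSqZeroExt.inl s : DualNumber (PowerSeries ℤ)) * (1 + DualNumber.eps) ^ a * (TrivSqZeroExt.inl X * (1 - DualNumber.eps)) ^ b * TrivSqZeroExt.inl g)
      = s * ((a : PowerSeries ℤ) - (b : PowerSeries ℤ)) * X ^ b * g := by
  have h1 : ∀ a : ℕ, (1 + DualNumber.eps : DualNumber (PowerSeries ℤ)) ^ a = TrivSqZeroExt.inl 1 + TrivSqZeroExt.inr (a : PowerSeries ℤ) := by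
    intro a
    induction a with
    | zero => ext <;> simp
    | succ a ih => rw [pow_succ, ih]; ext <;> simp [add_comm]
  have h2 : ∀ a : ℕ, (1 - DualNumber.eps : DualNumber (PowerSeries ℤ)) ^ a = TrivSqZeroExt.inl 1 - TrivSqZeroExt.inr (a : PowerSeries ℤ) := by
    intro a
    induction a with
    | zero => ext <;> simp
    | succ a ih => rw [pow_succ, ih]; ext <;> simp [sub_eq_add_neg, add_comm]
  rw [mul_pow, h1, h2]
  simp [TrivSqZeroExt.snd_pow]
  ring

lemma J_cube : J 1 ^ 3 = theta (fun j => - (sg j * j)) (fun j => tri (j - 1)) := by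
  have : theta (fun j => - (sg j * j)) (fun j => tri (j - 1)) = Pinf 1 1 * (Pinf 1 1 * Pinf 1 1) := by
    symm
    apply theta_lim
    · intro j
      have h1 := tri_spec (j - 1)
      rw [abs_le]
      constructor
      · rcases le_or_gt 0 j with h | h <;> nlinarith
      · rcases le_or_gt j 1 with h | h
        · nlinarith
        · nlinarith
    · norm_num
    · rw [← tendsto_add_atTop_iff_nat 1]
      have t1 := Pt_tendsto 1 1 (by norm_num) (by norm_num)
      refine (t1.mul ((tendsto_add_atTop_iff_nat 1).2 t1)).congr ?_
      intro n
      have h := finJTP (K := DualNumber (PowerSeries ℤ)) (1 + DualNumber.eps) (TrivSqZeroExt.inl X * (1 - DualNumber.eps)) (n + 1)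
      have hxy : (1 + DualNumber.eps) * (TrivSqZeroExt.inl X * (1 - DualNumber.eps)) = TrivSqZeroExt.inlHom (PowerSeries ℤ) (PowerSeries ℤ) X := by
        ext <;> simp
      rw [hxy] at h
      have h2 := congrArg TrivSqZeroExt.snd h
      have l1 : ∏ k ∈ Finset.range (n + 1), (1 - (1 + DualNumber.eps) * TrivSqZeroExt.inlHom (PowerSeries ℤ) (PowerSeries ℤ) X ^ k)
        = - DualNumber.eps * ∏ k ∈ Finset.range n, (1 - (1 + DualNumber.eps) * TrivSqZeroExt.inlHom (PowerSeries ℤ) (PowerSeries ℤ) X ^ (k+1)) := by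
        rw [Finset.prod_range_succ']; simp [mul_comm]
      rw [l1] at h2
      have f1 : TrivSqZeroExt.fst (∏ k ∈ Finset.range n, (1 - (1 + DualNumber.eps) * TrivSqZeroExt.inlHom (PowerSeries ℤ) (PowerSeries ℤ) X ^ (k+1))) = Pt 1 1 n := by
        have := map_prod (TrivSqZeroExt.fstHom (PowerSeries ℤ) (PowerSeries ℤ) (PowerSeries ℤ)) (fun k => (1 - (1 + DualNumber.eps) * TrivSqZeroExt.inlHom (PowerSeries ℤ) (PowerSeries ℤ) X ^ (k+1))) (Finset.range n)
        simp only [TrivSqZeroExt.fstHom_apply] at this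
        rw [this, Pt]
        apply Finset.prod_congr rfl
        intro k _
        simp [TrivSqZeroExt.fst_pow, add_comm]
      have f2 : TrivSqZeroExt.fst (∏ k ∈ Finset.range (n+1), (1 - (TrivSqZeroExt.inl X * (1 - DualNumber.eps)) * TrivSqZeroExt.inlHom (PowerSeries ℤ) (PowerSeries ℤ) X ^ k)) = Pt 1 1 (n + 1) := by
        have := map_prod (TrivSqZeroExt.fstHom (PowerSeries ℤ) (PowerSeries ℤ) (PowerSeries ℤ)) (fun k => (1 - (TrivSqZeroExt.inl X * (1 - DualNumber.eps)) * TrivSqZeroExt.inlHom (PowerSeries ℤ) (PowerSeries ℤ) X ^ k)) (Finset.range (n + 1))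
        simp only [TrivSqZeroExt.fstHom_apply] at this
        rw [this, Pt]
        apply Finset.prod_congr rfl
        intro k _
        simp [TrivSqZeroExt.fst_pow, add_comm, pow_succ']
      have l2 : ∀ A B : DualNumber (PowerSeries ℤ), TrivSqZeroExt.snd (- DualNumber.eps * A * B) = - (TrivSqZeroExt.fst A * TrivSqZeroExt.fst B) := by
        intro A B; simp [mul_comm]
      rw [l2, f1, f2, TrivSqZeroExt.snd_sum] at h2
      rw [← neg_inj, h2, ← Finset.sum_neg_distrib]
      apply Finset.sum_congr rfl
      intro m _
      have e1 : ((-1 : DualNumber (PowerSeries ℤ))) ^ (m + (n + 1)) = TrivSqZeroExt.inl ((-1) ^ (m + (n + 1))) := by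
        rw [← TrivSqZeroExt.inl_pow]; simp [TrivSqZeroExt.inl_neg]
      have e2 := gb_map (TrivSqZeroExt.inlHom (PowerSeries ℤ) (PowerSeries ℤ)) X (2 * (n + 1)) m
      rw [e1, ← e2, TrivSqZeroExt.inlHom_apply, snd_pow_aux, pw_parity]
      have e3 : ((tri ((m : ℤ) - (n + 1 : ℕ)) : ℕ) : PowerSeries ℤ) - (tri ((m : ℤ) - (n + 1 : ℕ) - 1) : ℕ) = C ((m : ℤ) - (n + 1 : ℕ)) := by
        have h1 := tri_spec ((m : ℤ) - (n + 1 : ℕ))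
        have h2 := tri_spec ((m : ℤ) - (n + 1 : ℕ) - 1)
        have : (tri ((m : ℤ) - (n + 1 : ℕ)) : ℤ) - tri ((m : ℤ) - (n + 1 : ℕ) - 1) = (m : ℤ) - (n + 1 : ℕ) := by nlinarith
        have h3 := congrArg (C (R := ℤ)) this
        simpa using h3
      rw [e3]
      simp
  rw [this, J_eq]; ring
end S12

namespace S12
open PowerSeries

abbrev R := LaurentSeries ℤ
abbrev io : PowerSeries ℤ →+* R := HahnSeries.ofPowerSeries ℤ ℤ

lemma io_inj : Function.Injective io := HahnSeries.ofPowerSeries_injective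

lemma io_coeff_nat (f : PowerSeries ℤ) (n : ℕ) : (io f).coeff (n : ℤ) = coeff n f :=
  HahnSeries.ofPowerSeries_apply_coeff f n

lemma io_coeff_neg (f : PowerSeries ℤ) (n : ℤ) (h : n < 0) : (io f).coeff n = 0 := by
  have := PowerSeries.coeff_coe (R := ℤ) f n
  rw [if_pos h] at this
  exact this

def qp (n : ℤ) : R := HahnSeries.single n 1

lemma qp_add (m n : ℤ) : qp (m + n) = qp m * qp n := by
  simp [qp, HahnSeries.single_mul_single]

lemma qp_zero : qp 0 = 1 := rfl

lemma qp_nat (n : ℕ) : qp n = io (X ^ n) := by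
  rw [qp, HahnSeries.ofPowerSeries_X_pow]

lemma qp_coeff (n m : ℤ) (f : R) : (qp n * f).coeff m = f.coeff (m - n) := by
  have := HahnSeries.coeff_single_mul_add (r := (1 : ℤ)) (x := f) (a := m - n) (b := n)
  rw [sub_add_cancel, one_mul] at this
  exact this

/-- the substitution q -> q^m -/
def V (m : ℕ) (hm : 0 < m) : R →+* R :=
  HahnSeries.embDomainRingHom (AddMonoidHom.mulLeft (m : ℤ))
    (by
      intro x y h
      have h : (m : ℤ) * x = m * y := h
      have : (m : ℤ) ≠ 0 := by omega
      exact mul_left_cancel₀ this h)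
    (by
      intro x y
      show (m : ℤ) * x ≤ m * y ↔ _
      have : (0 : ℤ) < m := by omega
      exact mul_le_mul_iff_right₀ this)

lemma V_coeff (m : ℕ) (hm : 0 < m) (f : R) (n : ℤ) : (V m hm f).coeff (m * n) = f.coeff n := by
  exact HahnSeries.embDomain_mk_coeff (Γ' := ℤ) (f := fun n : ℤ => (m : ℤ) * n) _ _

lemma V_coeff_not (m : ℕ) (hm : 0 < m) (f : R) (n : ℤ) (h : ¬ (m : ℤ) ∣ n) : (V m hm f).coeff n = 0 := by
  apply HahnSeries.embDomain_of_notMem_range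
  rintro ⟨k, hk⟩
  exact h ⟨k, hk.symm⟩

lemma V_inj (m : ℕ) (hm : 0 < m) : Function.Injective (V m hm) := by
  intro f g h
  ext n
  rw [← V_coeff m hm, h, V_coeff]

lemma V_io (m : ℕ) (hm : 0 < m) (f : PowerSeries ℤ) :
    V m hm (io f) = io (expand m hm.ne' f) := by
  ext n
  by_cases hd : (m : ℤ) ∣ n
  · obtain ⟨k, rfl⟩ := hd
    rw [V_coeff]
    rcases lt_or_ge k 0 with h | h
    · rw [io_coeff_neg _ _ h, io_coeff_neg]
      have : (0 : ℤ) < m := by omega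
      nlinarith
    · lift k to ℕ using h
      rw [io_coeff_nat, ← Nat.cast_mul, io_coeff_nat, coeff_expand_mul]
  · rw [V_coeff_not _ _ _ _ hd]
    rcases lt_or_ge n 0 with h | h
    · rw [io_coeff_neg _ _ h]
    · lift n to ℕ using h
      rw [io_coeff_nat, coeff_expand_of_not_dvd]
      exact_mod_cast hd

lemma V_qp (m : ℕ) (hm : 0 < m) (n : ℤ) : V m hm (qp n) = qp (m * n) := by
  ext k
  by_cases hd : (m : ℤ) ∣ k
  · obtain ⟨k, rfl⟩ := hd
    rw [V_coeff, qp, qp, HahnSeries.coeff_single, HahnSeries.coeff_single]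
    have : m ≠ 0 := by omega
    simp [this]
  · rw [V_coeff_not _ _ _ _ hd, qp, HahnSeries.coeff_single, if_neg]
    rintro rfl
    exact hd ⟨n, rfl⟩

lemma expand_J (m : ℕ) (hm : m ≠ 0) (b : ℕ) (hb : 1 ≤ b) : expand m hm (J b) = J (m * b) := by
  rw [J_eq, J_eq]
  ext n
  have h2 : ∀ N, expand m hm (Pt b b N) = Pt (m * b) (m * b) N := by
    intro N
    rw [Pt, Pt, map_prod]
    apply Finset.prod_congr rfl
    intro k _
    rw [map_sub, map_one, map_pow, expand_X, ← pow_mul]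
    congr 2; ring
  have hm1 : 1 ≤ m := Nat.one_le_iff_ne_zero.2 hm
  have hmb : 1 ≤ m * b := Nat.mul_pos hm1 hb
  rw [← Pt_stab _ _ hmb hmb n (n + 1) le_rfl, ← h2, coeff_expand, coeff_expand]
  split_ifs with h
  · rw [Pt_stab b b hb hb]
    have := Nat.div_le_self n m
    omega
  · rfl

/-! classes mod 7 -/
def Cls (r : ZMod 7) (f : R) : Prop := ∀ n : ℤ, f.coeff n ≠ 0 → (n : ZMod 7) = r

lemma Cls.mul {r s : ZMod 7} {f g : R} (hf : Cls r f) (hg : Cls s g) : Cls (r + s) (f * g) := by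
  intro n hn
  rw [HahnSeries.coeff_mul] at hn
  obtain ⟨⟨i, j⟩, hij, h⟩ := Finset.exists_ne_zero_of_sum_ne_zero hn
  simp only [Finset.mem_antidiagonal] at hij
  have h1 := left_ne_zero_of_mul h
  have h2 := right_ne_zero_of_mul h
  rw [← hf i h1, ← hg j h2, ← hij.2.2]
  push_cast; rfl

lemma Cls.add {r : ZMod 7} {f g : R} (hf : Cls r f) (hg : Cls r g) : Cls r (f + g) := by
  intro n hn
  by_contra h
  apply hn
  rw [HahnSeries.coeff_add]
  have h1 : f.coeff n = 0 := by by_contra h'; exact h (hf n h')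
  have h2 : g.coeff n = 0 := by by_contra h'; exact h (hg n h')
  rw [h1, h2]; rfl

lemma Cls.neg {r : ZMod 7} {f : R} (hf : Cls r f) : Cls r (-f) := by
  intro n hn
  apply hf
  intro h
  apply hn
  rw [HahnSeries.coeff_neg, h]; rfl

lemma Cls.sub {r : ZMod 7} {f g : R} (hf : Cls r f) (hg : Cls r g) : Cls r (f - g) := by
  rw [sub_eq_add_neg]; exact hf.add hg.neg

lemma Cls.zero (r : ZMod 7) : Cls r 0 := by
  intro n hn; exact absurd rfl hn

lemma Cls.one : Cls 0 1 := by
  intro n hn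
  rw [HahnSeries.coeff_one] at hn
  have : n = 0 := by by_contra h; simp [h] at hn
  simp [this]

lemma Cls.int (k : ℤ) : Cls 0 (k : R) := by
  induction k using Int.induction_on with
  | zero => simpa using Cls.zero 0
  | succ k ih => push_cast at *; exact ih.add Cls.one
  | pred k ih => push_cast at *; exact ih.sub Cls.one

lemma Cls.qp (n : ℤ) : Cls n (qp n) := by
  intro m hm
  rw [S12.qp, HahnSeries.coeff_single] at hm
  have : m = n := by by_contra h; simp [h] at hm
  rw [this]

lemma Cls.V7 (f : R) : Cls 0 (V 7 (by norm_num) f) := by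
  intro n hn
  by_contra h
  apply hn
  apply V_coeff_not
  rintro ⟨k, rfl⟩
  apply h
  push_cast
  rw [show (7 : ZMod 7) = 0 from rfl, zero_mul]

lemma Cls.cast {r s : ZMod 7} {f : R} (hf : Cls r f) (h : r = s) : Cls s f := h ▸ hf

lemma Cls.V2 {r : ZMod 7} {f : R} (hf : Cls r f) : Cls (2 * r) (V 2 (by norm_num) f) := by
  intro n hn
  have hd : ((2 : ℕ) : ℤ) ∣ n := by
    by_contra h; exact hn (V_coeff_not _ _ _ _ h)
  obtain ⟨k, rfl⟩ := hd
  rw [V_coeff] at hn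
  rw [← hf k hn]
  push_cast; rfl

/-- class decomposition is unique -/
lemma cls_sum {f : R} (g : ZMod 7 → R) (hg : ∀ r, Cls r (g r)) (h : f = ∑ r, g r) (n : ℤ) :
    f.coeff n = (g n).coeff n := by
  have e : f.coeff n = ∑ r, (g r).coeff n := by
    rw [h]
    simp
  rw [e]
  apply Finset.sum_eq_single
  · intro r _ hr
    by_contra h'
    exact hr (hg r n h').symm
  · simp

lemma cls_zero {f : R} (g : ZMod 7 → R) (hg : ∀ r, Cls r (g r)) (h : f = ∑ r, g r) (r : ZMod 7)
    (hf : ∀ n : ℤ, (n : ZMod 7) = r → f.coeff n = 0) : g r = 0 := by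
  ext n
  by_cases hn : (n : ZMod 7) = r
  · rw [← hn, ← cls_sum g hg h, hf n hn]; rfl
  · by_contra h'
    exact hn (hg r n h')

/-! The operator U -/

lemma U_add (U : R → R) (hU : ∀ (f : R) (n : ℤ), (U f).coeff n = f.coeff (7 * n)) (f g : R) : U (f + g) = U f + U g := by
  ext n; simp [hU]

lemma U_V7 (U : R → R) (hU : ∀ (f : R) (n : ℤ), (U f).coeff n = f.coeff (7 * n)) (f : R) : U (V 7 (by norm_num) f) = f := by
  ext n; rw [hU]; exact V_coeff 7 _ f n

lemma U_cls (U : R → R) (hU : ∀ (f : R) (n : ℤ), (U f).coeff n = f.coeff (7 * n)) (r : ZMod 7) (hr : r ≠ 0) (f : R) (hf : Cls r f) : U f = 0 := by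
  ext n
  rw [hU]
  by_contra h
  apply hr
  rw [← hf _ h]
  push_cast
  rw [show (7 : ZMod 7) = 0 from rfl, zero_mul]

lemma U_cls0 (U : R → R) (hU : ∀ (f : R) (n : ℤ), (U f).coeff n = f.coeff (7 * n)) (f : R) (hf : Cls 0 f) : V 7 (by norm_num) (U f) = f := by
  ext n
  by_cases h : (7 : ℤ) ∣ n
  · obtain ⟨k, rfl⟩ := h
    have := V_coeff 7 (by norm_num) (U f) k
    rw [hU] at this
    exact this
  · rw [V_coeff_not _ _ _ _ h]
    symm
    by_contra h'
    exact h ((ZMod.intCast_zmod_eq_zero_iff_dvd n 7).1 (hf n h'))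

lemma U_mul_V7 (U : R → R) (hU : ∀ (f : R) (n : ℤ), (U f).coeff n = f.coeff (7 * n)) (g f : R) : U (V 7 (by norm_num) g * f) = g * U f := by
  have h1 : U (V 7 (by norm_num) g * f) = U (V 7 (by norm_num) g * V 7 (by norm_num) (U f))
      + U (V 7 (by norm_num) g * (f - V 7 (by norm_num) (U f))) := by
    rw [← U_add U hU]; congr 1; ring
  have h2 : U (V 7 (by norm_num) g * (f - V 7 (by norm_num) (U f))) = 0 := by
    ext n
    rw [hU]
    by_contra hn
    rw [HahnSeries.coeff_mul] at hn
    obtain ⟨⟨i, j⟩, hij, h⟩ := Finset.exists_ne_zero_of_sum_ne_zero hn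
    simp only [Finset.mem_antidiagonal] at hij
    have h1 := left_ne_zero_of_mul h
    have h2 := right_ne_zero_of_mul h
    have hi : (7 : ℤ) ∣ i := by
      by_contra h'; exact h1 (V_coeff_not _ _ _ _ h')
    have hj : (7 : ℤ) ∣ j := by
      have := hij.2.2
      omega
    obtain ⟨k, rfl⟩ := hj
    apply h2
    rw [HahnSeries.coeff_sub]
    have := V_coeff 7 (by norm_num) (U f) k
    rw [hU] at this
    push_cast at this
    rw [this, sub_self]
  rw [h1, h2, add_zero, ← map_mul, U_V7 U hU]
end S12

namespace S12
open PowerSeries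

lemma theta_expand (c : ℤ → ℤ) (e : ℤ → ℕ) (he : ∀ j, |j| ≤ e j + 1) (N : ℕ) (hN : N ≠ 0) :
    expand N hN (theta c e) = theta c (fun j => N * e j) := by
  have hN1 : 1 ≤ N := Nat.one_le_iff_ne_zero.2 hN
  ext n
  rw [coeff_expand]
  have he' : ∀ j, |j| ≤ ((N * e j : ℕ) : ℤ) + 1 := by
    intro j
    have : e j ≤ N * e j := Nat.le_mul_of_pos_left _ hN1
    have := he j
    omega
  split_ifs with h
  · obtain ⟨k, rfl⟩ := h
    rw [Nat.mul_div_cancel_left _ hN1]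
    rw [theta_coeff _ _ he k (Finset.Icc (-(k : ℤ) - 1) (k + 1)), theta_coeff _ _ he' (N * k) (Finset.Icc (-(k : ℤ) - 1) (k + 1))]
    · apply Finset.sum_congr rfl
      intro j _
      simp [hN]
    · intro j hj
      have hj := Nat.eq_of_mul_eq_mul_left hN1 hj
      have := he j
      rw [abs_le] at this
      rw [Finset.mem_Icc]; omega
    · intro j hj
      have := he j
      rw [abs_le] at this
      rw [Finset.mem_Icc]; omega
  · rw [theta, coeff_mk]
    symm
    apply Finset.sum_eq_zero
    intro j _
    rw [if_neg]
    intro h'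
    exact h ⟨_, h'.symm⟩

lemma theta_single (c c' : ℤ → ℤ) (e e' : ℤ → ℕ) (he : ∀ j, |j| ≤ e j + 1) (he' : ∀ j, |j| ≤ e' j + 1)
    (n : ℕ) (s : ℤ) (K : ℕ) (ε : ℤ) (hn : ∀ j, e j = n → 7 ∣ j - s)
    (hm : ∀ m, e (7 * m + s) = e' m + K) (hc : ∀ m, c (7 * m + s) = ε * c' m) :
    coeff n (theta c e) = coeff n (C ε * (theta c' e' * X ^ K)) := by
  rw [coeff_C_mul, coeff_mul_X_pow']
  set S := Finset.Icc (-(n : ℤ) - 1) (n + 1) with hS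
  have key : ∀ j, e j = n → ∃ m ∈ S, 7 * m + s = j := by
    intro j hj
    obtain ⟨m, h⟩ := hn j hj
    have hj' : 7 * m + s = j := by omega
    refine ⟨m, ?_, hj'⟩
    have h1 := hm m
    rw [hj'] at h1
    have := he' m
    rw [abs_le] at this
    rw [hS, Finset.mem_Icc]; omega
  rw [theta_coeff c e he n (S.image (fun m => 7 * m + s))]
  · rw [Finset.sum_image (by intro a _ b _ h; simp only at h; omega)]
    split_ifs with h
    · rw [theta_coeff c' e' he' (n - K) S, Finset.mul_sum]
      · apply Finset.sum_congr rfl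
        intro m _
        rw [hm, hc]
        by_cases h2 : e' m + K = n
        · rw [if_pos h2, if_pos (by omega)]
        · rw [if_neg h2, if_neg (by omega), mul_zero]
      · intro m h2
        have := he' m
        rw [abs_le] at this
        rw [hS, Finset.mem_Icc]; omega
    · rw [mul_zero]
      apply Finset.sum_eq_zero
      intro m _
      rw [if_neg]
      rw [hm]; omega
  · intro j hj
    rw [Finset.mem_image]
    exact key j hj

lemma theta_pair (c c' : ℤ → ℤ) (e e' : ℤ → ℕ) (he : ∀ j, |j| ≤ e j + 1) (he' : ∀ j, |j| ≤ e' j + 1)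
    (n : ℕ) (s : ℤ) (hs : ¬ 7 ∣ 2 * s) (K : ℕ) (ε : ℤ) (hn : ∀ j, e j = n → 7 ∣ j - s ∨ 7 ∣ j + s)
    (hcc : ∀ j, c (-j) = c j) (hee : ∀ j, e (-j) = e j)
    (hm : ∀ m, e (7 * m + s) = e' m + K) (hc : ∀ m, c (7 * m + s) = ε * c' m) :
    coeff n (theta c e) = coeff n (C (2 * ε) * (theta c' e' * X ^ K)) := by
  rw [coeff_C_mul, coeff_mul_X_pow']
  set S := Finset.Icc (-(n : ℤ) - 1) (n + 1) with hS
  have mS : ∀ m, e' m + K = n → m ∈ S := by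
    intro m h
    have := he' m
    rw [abs_le] at this
    rw [hS, Finset.mem_Icc]; omega
  rw [theta_coeff c e he n (S.image (fun m => 7 * m + s) ∪ S.image (fun m => -(7 * m + s)))]
  · rw [Finset.sum_union, Finset.sum_image (by intro a _ b _ h; simp only at h; omega),
      Finset.sum_image (by intro a _ b _ h; simp only at h; omega)]
    · simp only [hee, hcc]
      rw [← two_mul, mul_assoc]
      congr 1
      split_ifs with h
      · rw [theta_coeff c' e' he' (n - K) S, Finset.mul_sum]
        · apply Finset.sum_congr rfl
          intro m _
          rw [hm, hc]
          by_cases h2 : e' m + K = n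
          · rw [if_pos h2, if_pos (by omega)]
          · rw [if_neg h2, if_neg (by omega), mul_zero]
        · intro m h2
          exact mS m (by omega)
      · rw [mul_zero]
        apply Finset.sum_eq_zero
        intro m _
        rw [if_neg]
        rw [hm]; omega
    · rw [Finset.disjoint_left]
      intro x hx hx'
      obtain ⟨m, _, h1⟩ := Finset.mem_image.1 hx
      obtain ⟨m', _, h2⟩ := Finset.mem_image.1 hx'
      omega
  · intro j hj
    rw [Finset.mem_union, Finset.mem_image, Finset.mem_image]
    rcases hn j hj with ⟨m, h⟩ | ⟨m, h⟩
    · left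
      have hj' : 7 * m + s = j := by omega
      refine ⟨m, mS m ?_, hj'⟩
      rw [← hm, hj', hj]
    · right
      have hj' : -(7 * (-m) + s) = j := by omega
      refine ⟨-m, mS _ ?_, hj'⟩
      rw [← hm, ← hee, hj', hj]

lemma theta_none (c : ℤ → ℤ) (e : ℤ → ℕ) (n : ℕ) (h : ∀ j, e j ≠ n) : coeff n (theta c e) = 0 := by
  rw [theta, coeff_mk]
  apply Finset.sum_eq_zero
  intro j _
  rw [if_neg (h j)]

def pr (r : ℕ) (f : PowerSeries ℤ) : PowerSeries ℤ := mk fun n => if n % 7 = r then coeff n f else 0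

lemma bound_pe (j : ℤ) : |j| ≤ ((tri j + 2 * tri (j - 1) : ℕ) : ℤ) + 1 := by
  have h1 := tri_spec j
  have h2 := tri_spec (j - 1)
  push_cast
  rw [abs_le]
  constructor
  · nlinarith
  · nlinarith

lemma sg_add (a b : ℤ) : sg (a + b) = sg a * sg b := by
  simp [sg, Int.negOnePow_add]

lemma sg_seven (m : ℤ) : sg (7 * m) = sg m := by
  have : Int.negOnePow (7 * m) = Int.negOnePow m := by
    rw [Int.negOnePow_eq_iff]; exact ⟨3 * m, by ring⟩
  simp [sg, this]

/-- j mod 7 decomposition -/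
lemma mod7 (j : ℤ) : ∃ k r : ℤ, j = 7 * k + r ∧ (r = 0 ∨ r = 1 ∨ r = 2 ∨ r = 3 ∨ r = 4 ∨ r = 5 ∨ r = 6) :=
  ⟨j / 7, j % 7, by omega, by omega⟩

lemma pe_mod (j : ℤ) (n : ℕ) (h : tri j + 2 * tri (j - 1) = n) :
    (n % 7 = 0 ∨ n % 7 = 1 ∨ n % 7 = 2 ∨ n % 7 = 5) ∧ (n % 7 = 2 → 7 ∣ j - (-1)) := by
  have h1 := tri_spec j
  have h2 := tri_spec (j - 1)
  have h3 : 2 * (n : ℤ) = 3 * (j * j) - j := by rw [← h]; push_cast; nlinarith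
  obtain ⟨k, r, rfl, hr⟩ := mod7 j
  rcases hr with rfl | rfl | rfl | rfl | rfl | rfl | rfl <;> ring_nf at h3 <;> omega

lemma J1_split : J 1 = pr 0 (J 1) + pr 1 (J 1) + pr 5 (J 1) - X ^ 2 * J 49 := by
  ext n
  simp only [map_sub, map_add, pr, coeff_mk]
  have hJ := J1_theta
  have h49 : J 49 = theta sg (fun j => 49 * (tri j + 2 * tri (j - 1))) := by
    rw [← theta_expand sg _ bound_pe 49 (by norm_num), ← hJ, expand_J _ _ _ le_rfl]
  by_cases h : n % 7 = 2
  · rw [if_neg (by omega), if_neg (by omega), if_neg (by omega)]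
    have := theta_single sg sg (fun j => tri j + 2 * tri (j - 1)) (fun j => 49 * (tri j + 2 * tri (j - 1))) bound_pe
      (by intro j; have := bound_pe j; push_cast at *; omega) n (-1) 2 (-1)
      (fun j hj => (pe_mod j n hj).2 h)
      (by
        intro m
        have h1 := tri_spec (7 * m + -1)
        have h2 := tri_spec (7 * m + -1 - 1)
        have h3 := tri_spec m
        have h4 := tri_spec (m - 1)
        zify
        nlinarith)
      (by intro m; rw [sg_add, sg_seven]; simp [sg])
    rw [← hJ, ← h49] at this
    rw [this]
    simp [mul_comm]
  · have hz : coeff n (X ^ 2 * J 49) = 0 := by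
      rw [coeff_X_pow_mul']
      split_ifs with h2
      · have : J 49 = expand 49 (by norm_num) (J 1) := by rw [expand_J _ _ _ le_rfl]
        rw [this, coeff_expand_of_not_dvd]
        intro h3; omega
      · rfl
    rw [hz]
    by_cases h2 : n % 7 = 0 ∨ n % 7 = 1 ∨ n % 7 = 5
    · rcases h2 with h2 | h2 | h2 <;> simp [h2]
    · rw [hJ, theta_none]
      · simp
      · intro j hj
        have := (pe_mod j n hj).1
        omega

lemma J_cube_zero (n : ℕ) (h : n % 7 = 2 ∨ n % 7 = 4 ∨ n % 7 = 5) : coeff n (J 1 ^ 3) = 0 := by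
  rw [J_cube, theta_none]
  intro j hj
  have h2 := tri_spec (j - 1)
  rw [hj] at h2
  obtain ⟨k, r, rfl, hr⟩ := mod7 j
  rcases hr with rfl | rfl | rfl | rfl | rfl | rfl | rfl <;> ring_nf at h2 <;> omega

lemma bound_sq (j : ℤ) : |j| ≤ ((j.natAbs ^ 2 : ℕ) : ℤ) + 1 := by
  push_cast
  rw [sq_abs, abs_le]
  constructor <;> nlinarith

lemma sq_mod (j : ℤ) (n : ℕ) (h : j.natAbs ^ 2 = n) :
    (n % 7 = 0 ∨ n % 7 = 1 ∨ n % 7 = 2 ∨ n % 7 = 4) ∧ (n % 7 = 0 → 7 ∣ j - 0) ∧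
    (n % 7 = 1 → 7 ∣ j - 1 ∨ 7 ∣ j + 1) ∧ (n % 7 = 4 → 7 ∣ j - 2 ∨ 7 ∣ j + 2) ∧
    (n % 7 = 2 → 7 ∣ j - 3 ∨ 7 ∣ j + 3) := by
  have h3 : (n : ℤ) = j * j := by rw [← h]; push_cast; rw [sq_abs]; ring
  obtain ⟨k, r, rfl, hr⟩ := mod7 j
  rcases hr with rfl | rfl | rfl | rfl | rfl | rfl | rfl <;> ring_nf at h3 <;> omega

def th (a b : ℕ) : PowerSeries ℤ := theta sg (fun j => a * tri j + b * tri (j - 1))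

lemma th_cls (a b : ℕ) (ha : 7 ∣ a) (hb : 7 ∣ b) (n : ℕ) (hn : ¬ 7 ∣ n) : coeff n (th a b) = 0 := by
  rw [th, theta_none]
  rintro j rfl
  apply hn
  exact dvd_add (ha.mul_right _) (hb.mul_right _)

lemma bound_th (a b : ℕ) (ha : 1 ≤ a) (hb : 1 ≤ b) (j : ℤ) : |j| ≤ ((a * tri j + b * tri (j - 1) : ℕ) : ℤ) + 1 := by
  have h1 := tri_spec j
  have h2 := tri_spec (j - 1)
  have h3 : tri j ≤ a * tri j := Nat.le_mul_of_pos_left _ ha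
  have h4 : tri (j - 1) ≤ b * tri (j - 1) := Nat.le_mul_of_pos_left _ hb
  zify at h3 h4
  push_cast
  rw [abs_le]
  constructor <;> nlinarith

lemma Phi_split : Phi = expand 49 (by norm_num) Phi + C (-2) * (th 63 35 * X ^ 1) + C (-2) * (th 91 7 * X ^ 9)
    + C 2 * (th 77 21 * X ^ 4) := by
  have hev : ∀ j : ℤ, sg (-j) = sg j := by intro j; simp [sg, Int.negOnePow_neg]
  have hee : ∀ j : ℤ, (-j).natAbs ^ 2 = j.natAbs ^ 2 := by intro j; simp
  have z0 : ∀ n, ¬ n % 7 = 0 → coeff n (expand 49 (by norm_num) Phi) = 0 := by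
    intro n hn
    rw [coeff_expand_of_not_dvd]; intro h; omega
  have z1 : ∀ (n a b k : ℕ) (x : ℤ), 7 ∣ a → 7 ∣ b → n % 7 ≠ k % 7 → coeff n (C x * (th a b * X ^ k)) = 0 := by
    intro n a b k x ha hb hn
    rw [coeff_C_mul, coeff_mul_X_pow']
    split_ifs
    · rw [th_cls a b ha hb _ (by omega), mul_zero]
    · simp
  have p1 : ∀ (n : ℕ) (s : ℤ) (a b K : ℕ) (ε δ : ℤ), 2 * ε = δ → 1 ≤ a → 1 ≤ b → ¬ 7 ∣ 2 * s →
      (∀ j : ℤ, j.natAbs ^ 2 = n → 7 ∣ j - s ∨ 7 ∣ j + s) → (∀ m : ℤ, (7 * m + s).natAbs ^ 2 = a * tri m + b * tri (m - 1) + K)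
      → sg s = ε → coeff n Phi = coeff n (C δ * (th a b * X ^ K)) := by
    intro n s a b K ε δ hδ ha hb hs hn hm hε
    rw [← hδ]
    apply theta_pair sg sg (fun j => j.natAbs ^ 2) _ bound_sq (bound_th a b ha hb) n s hs K ε hn hev hee hm
    intro m
    rw [sg_add, sg_seven, hε, mul_comm]
  ext n
  simp only [map_add]
  by_cases h0 : n % 7 = 0
  · rw [z1 n _ _ _ _ (by norm_num) (by norm_num) (by omega), z1 n _ _ _ _ (by norm_num) (by norm_num) (by omega),
      z1 n _ _ _ _ (by norm_num) (by norm_num) (by omega)]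
    simp only [add_zero]
    have := theta_single sg sg (fun j => j.natAbs ^ 2) (fun j => 49 * j.natAbs ^ 2) bound_sq
      (by intro j; have := bound_sq j; have : 0 ≤ |j| ^ 2 := by positivity
          push_cast at *; omega) n 0 0 1
      (fun j hj => (sq_mod j n hj).2.1 h0)
      (by intro m; zify; simp only [sq_abs]; ring)
      (by intro m; rw [sg_add, sg_seven]; simp [sg])
    rw [Phi, this, theta_expand _ _ bound_sq]
    simp
  · rw [z0 n h0, zero_add]
    by_cases h1 : n % 7 = 1
    · rw [z1 n 91 _ _ _ (by norm_num) (by norm_num) (by omega), z1 n 77 _ _ _ (by norm_num) (by norm_num) (by omega)]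
      simp only [add_zero]
      refine p1 n 1 63 35 1 (-1) (-2) (by norm_num) (by norm_num) (by norm_num) (by norm_num) (fun j hj => (sq_mod j n hj).2.2.1 h1) ?_ (by simp [sg])
      intro m
      have h1 := tri_spec m
      have h2 := tri_spec (m - 1)
      zify; rw [sq_abs]
      generalize tri (m - 1) = T at *
      generalize tri m = T' at *
      linarith [sq_nonneg m]
    by_cases h2 : n % 7 = 2
    · rw [z1 n 63 _ _ _ (by norm_num) (by norm_num) (by omega), z1 n 77 _ _ _ (by norm_num) (by norm_num) (by omega)]
      simp only [add_zero, zero_add]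
      refine p1 n 3 91 7 9 (-1) (-2) (by norm_num) (by norm_num) (by norm_num) (by norm_num) (fun j hj => (sq_mod j n hj).2.2.2.2 h2) ?_ (by decide)
      intro m
      have h1 := tri_spec m
      have h2 := tri_spec (m - 1)
      zify; rw [sq_abs]
      generalize tri (m - 1) = T at *
      generalize tri m = T' at *
      linarith [sq_nonneg m]
    by_cases h4 : n % 7 = 4
    · rw [z1 n 63 _ _ _ (by norm_num) (by norm_num) (by omega), z1 n 91 _ _ _ (by norm_num) (by norm_num) (by omega)]
      simp only [zero_add]
      refine p1 n 2 77 21 4 1 2 (by norm_num) (by norm_num) (by norm_num) (by norm_num) (fun j hj => (sq_mod j n hj).2.2.2.1 h4) ?_ (by decide)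
      intro m
      have h1 := tri_spec m
      have h2 := tri_spec (m - 1)
      zify; rw [sq_abs]
      generalize tri (m - 1) = T at *
      generalize tri m = T' at *
      linarith [sq_nonneg m]
    · rw [z1 n 63 _ _ _ (by norm_num) (by norm_num) (by omega), z1 n 91 _ _ _ (by norm_num) (by norm_num) (by omega), z1 n 77 _ _ _ (by norm_num) (by norm_num) (by omega)]
      rw [Phi, theta_none]
      · simp
      · intro j hj
        have := (sq_mod j n hj).1
        omega

lemma th_prod : th 63 35 * th 91 7 * th 77 21 * (J 14 * J 49) = J 98 ^ 4 * J 7 := by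
  have e1 := JTP 63 35 (by norm_num) (by norm_num)
  have e2 := JTP 91 7 (by norm_num) (by norm_num)
  have e3 := JTP 77 21 (by norm_num) (by norm_num)
  have s1 := Pinf_split 7 7 2 (by norm_num) (by norm_num) (by norm_num)
  have s2 := Pinf_split 7 14 7 (by norm_num) (by norm_num) (by norm_num)
  have s3 := Pinf_split 49 49 2 (by norm_num) (by norm_num) (by norm_num)
  simp only [Finset.prod_range_succ, Finset.prod_range_zero] at s1 s2 s3
  norm_num at e1 e2 e3 s1 s2 s3
  have d1 : th 63 35 = Pinf 98 98 * (Pinf 63 98 * Pinf 35 98) := by rw [e1]; rfl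
  have d2 : th 91 7 = Pinf 98 98 * (Pinf 91 98 * Pinf 7 98) := by rw [e2]; simp [th]
  have d3 : th 77 21 = Pinf 98 98 * (Pinf 77 98 * Pinf 21 98) := by rw [e3]; rfl
  rw [d1, d2, d3, J_eq, J_eq, J_eq, J_eq, ← s1, ← s3, ← s2]
  ring

lemma Phi49 : expand 49 (by norm_num) Phi * J 98 = J 49 ^ 2 := by
  have h := congrArg (expand 49 (by norm_num)) J2_Phi
  rw [map_pow, map_mul, expand_J _ _ _ (by norm_num), expand_J _ _ _ (by norm_num)] at h
  rw [h]; ring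

end S12

namespace S12
open PowerSeries Filter Topology
open scoped PowerSeries.WithPiTopology

def nU {K : Type*} [CommRing K] (a b c d : K) : K := (d^3-c*d^2+c^3-b*d^2-b*c*d-b*c^2+b^3-a*d^2-a*c*d-a*b*d+3*a*b*c-a*b^2-a^2*c+a^3)
def nW {K : Type*} [CommRing K] (a b c d : K) : K := (-c*d^2+c^2*d-b*d^2-b*c^2+b^2*d+b^2*c-a*d^2+a*c^2+a*b*c-a*b^2+a^2*d-a^2*c+a^2*b)
def nN {K : Type*} [CommRing K] (a b c d : K) : K :=
  (a + b + c + d) * (nU a b c d ^ 2 - nU a b c d * nW a b c d + 2 * nW a b c d ^ 2)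

lemma norm3 {K : Type*} [CommRing K] (a b c d z : K) (hz : 1 + z + z^2 + z^3 + z^4 + z^5 + z^6 = 0) :
    (a + z * b + z^5 * c + z^2 * d) * (a + z^2 * b + z^3 * c + z^4 * d) * (a + z^4 * b + z^6 * c + z * d)
      = nU a b c d + (z + z^2 + z^4) * nW a b c d := by
  unfold nU nW
  linear_combination (-1*d^3+1*d^3*z+1*c*d^2-1*c*d^2*z^3+1*c*d^2*z^4-1*c*d^2*z^5+1*c*d^2*z^6-1*c^2*d*z+1*c^2*d*z^3-1*c^2*d*z^4+1*c^2*d*z^5-1*c^2*d*z^8+1*c^2*d*z^9-1*c^3+1*c^3*z-1*c^3*z^7+1*c^3*z^8+1*b*d^2-1*b*d^2*z^3+1*b*d^2*z^4+1*b*c*d-1*b*c*d*z+1*b*c*d*z^5-1*b*c*d*z^6+1*b*c*d*z^7+1*b*c^2-1*b*c^2*z^3+1*b*c^2*z^4-1*b*c^2*z^5+1*b*c^2*z^7-1*b^2*d*z+1*b^2*d*z^3-1*b^2*c*z+1*b^2*c*z^3-1*b^2*c*z^4+1*b^2*c*z^5-1*b^3+1*b^3*z+1*a*d^2+1*a*c*d-1*a*c*d*z+1*a*c*d*z^4-1*a*c^2*z+1*a*c^2*z^3-1*a*c^2*z^4+1*a*c^2*z^5+1*a*b*d-1*a*b*d*z+1*a*b*d*z^2-3*a*b*c+2*a*b*c*z+1*a*b*c*z^3+1*a*b^2+1*a^2*c)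 * hz

lemma norm7 {K : Type*} [CommRing K] (a b c d z : K) (hz : 1 + z + z^2 + z^3 + z^4 + z^5 + z^6 = 0) :
    ∏ j ∈ Finset.range 7, (a + z^j * b + (z^j)^5 * c + (z^j)^2 * d) = nN a b c d := by
  have h7 : z ^ 7 = 1 := by linear_combination (z - 1) * hz
  have h1 := norm3 a b c d z hz
  have r : ∀ n, z ^ (n + 7) = z ^ n := by intro n; rw [pow_add, h7, mul_one]
  have h2 := norm3 a b c d (z ^ 6) (by
    simp only [← pow_mul]; norm_num
    rw [show z ^ 12 = z ^ 5 from r 5, show z ^ 18 = z ^ 4 by rw [r 11, r 4], show z ^ 24 = z ^ 3 by rw [r 17, r 10, r 3],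
      show z ^ 30 = z ^ 2 by rw [r 23, r 16, r 9, r 2], show z ^ 36 = z ^ 1 by rw [r 29, r 22, r 15, r 8, r 1]]
    linear_combination hz)
  simp only [Finset.prod_range_succ, Finset.prod_range_zero, ← pow_mul] at h2 ⊢
  norm_num at h2 ⊢
  rw [show z ^ 12 = z ^ 5 from r 5, show z ^ 18 = z ^ 4 by rw [r 11, r 4], show z ^ 24 = z ^ 3 by rw [r 17, r 10, r 3],
      show z ^ 30 = z ^ 2 by rw [r 23, r 16, r 9, r 2], show z ^ 36 = z by rw [r 29, r 22, r 15, r 8, r 1, pow_one]] at h2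
  rw [show z ^ 12 = z ^ 5 from r 5, show z ^ 10 = z ^ 3 from r 3, show z ^ 15 = z by rw [r 8, r 1, pow_one],
    show z ^ 8 = z by rw [r 1, pow_one], show z ^ 20 = z ^ 6 by rw [r 13, r 6], show z ^ 25 = z ^ 4 by rw [r 18, r 11, r 4],
    show z ^ 30 = z ^ 2 by rw [r 23, r 16, r 9, r 2]]
  have h3 : z ^ 6 + z ^ 5 + z ^ 3 = - 1 - (z + z ^ 2 + z ^ 4) := by linear_combination hz
  rw [h3] at h2
  have h4 : (z + z ^ 2 + z ^ 4) * (-1 - (z + z ^ 2 + z ^ 4)) = 2 := by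
    linear_combination (-2 + z - z ^ 2) * hz
  have key : ∀ f0 f1 f2 f3 f4 f5 f6 : K, f0*f1*f2*f3*f4*f5*f6 = f0*(f1*f2*f4)*(f6*f5*f3) := by
    intros; ring
  rw [key, h1, h2, nN]
  generalize nU a b c d = u
  generalize nW a b c d = w
  linear_combination (a + b + c + d) * w ^ 2 * h4

end S12

namespace S12
open PowerSeries Filter Topology
open scoped PowerSeries.WithPiTopology

abbrev mC : PowerSeries ℤ →+* PowerSeries ℂ := PowerSeries.map (Int.castRingHom ℂ)

lemma mC_inj : Function.Injective mC := by
  intro f g h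
  ext n
  have := congrArg (coeff n) h
  simpa using this

lemma rs_tendsto (z : ℂ) (a r : ℕ) (ha : 1 ≤ a) (hr : 1 ≤ r) (φ : ℕ → ℕ) (hφ : ∀ n, n ≤ φ n) :
    Tendsto (fun n => rescale z (mC (Pt a r (φ n)))) atTop (𝓝 (rescale z (mC (Pinf a r)))) := by
  rw [PowerSeries.WithPiTopology.tendsto_iff_coeff_tendsto]
  intro d
  apply tendsto_const_nhds.congr'
  filter_upwards [eventually_ge_atTop (d + 1)] with N hN
  simp only [coeff_rescale, coeff_map]
  rw [Pt_stab a r ha hr]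
  exact hN.trans (hφ N)

lemma prod_rs (z : ℂ) (hz : IsPrimitiveRoot z 7) (k : ℕ) :
    ∏ j ∈ Finset.range 7, rescale (z ^ j) (mC (1 - X ^ k)) = if 7 ∣ k then (1 - X ^ k) ^ 7 else 1 - (X : PowerSeries ℂ) ^ (7 * k) := by
  have e : ∀ j, rescale (z ^ j) (mC (1 - X ^ k)) = 1 - C ((z ^ k) ^ j) * X ^ k := by
    intro j
    simp only [map_sub, map_one, map_pow, PowerSeries.map_X, rescale_X]
    rw [mul_pow, ← map_pow]
    simp only [← map_pow]
    congr 3; ring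
  split_ifs with h
  · have : z ^ k = 1 := (hz.pow_eq_one_iff_dvd k).2 h
    rw [Finset.prod_congr rfl (fun j _ => e j), this]
    simp
  · have h1 : z ^ k ≠ 1 := fun h' => h ((hz.pow_eq_one_iff_dvd k).1 h')
    have h7 : (z ^ k) ^ 7 = 1 := by rw [← pow_mul, mul_comm, pow_mul, hz.pow_eq_one, one_pow]
    set w := z ^ k
    have hw : 1 + w + w^2 + w^3 + w^4 + w^5 + w^6 = 0 := by
      apply mul_left_cancel₀ (sub_ne_zero.2 h1)
      linear_combination h7
    have hw' := congrArg (C (R := ℂ)) hw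
    simp only [map_add, map_pow, map_one, map_zero] at hw'
    have := norm7 (1 : PowerSeries ℂ) (-X ^ k) 0 0 (C w) hw'
    rw [Finset.prod_congr rfl (fun j _ => e j)]
    have e2 : ∀ j, 1 - C (w ^ j) * (X : PowerSeries ℂ) ^ k = 1 + C w ^ j * (-X ^ k) + (C w ^ j) ^ 5 * 0 + (C w ^ j) ^ 2 * 0 := by
      intro j; rw [map_pow]; ring
    rw [Finset.prod_congr rfl (fun j _ => e2 j), this, nN, nU, nW, mul_comm 7 k, pow_mul]
    ring

lemma normJ_fin (z : ℂ) (hz : IsPrimitiveRoot z 7) (m : ℕ) :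
    (∏ j ∈ Finset.range 7, rescale (z ^ j) (mC (Pt 1 1 (7 * m)))) * rescale 1 (mC (Pt 49 49 m))
      = rescale 1 (mC (Pt 7 7 (7 * m))) * rescale 1 (mC (Pt 7 7 m)) ^ 7 := by
  have h1 : ∏ j ∈ Finset.range 7, rescale (z ^ j) (mC (Pt 1 1 (7 * m)))
      = ∏ k ∈ Finset.range (7 * m), (if 7 ∣ k + 1 then (1 - X ^ (k + 1)) ^ 7 else 1 - (X : PowerSeries ℂ) ^ (7 + 7 * k)) := by
    simp only [Pt, map_prod]
    rw [Finset.prod_comm]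
    apply Finset.prod_congr rfl
    intro k _
    rw [show 7 + 7 * k = 7 * (k + 1) by ring, ← prod_rs z hz]
    apply Finset.prod_congr rfl
    intro j _
    rw [one_mul, add_comm]
  rw [h1]
  simp only [rescale_one, RingHom.id_apply, Pt, map_prod, map_sub, map_one, map_pow, PowerSeries.map_X]
  clear h1
  induction m with
  | zero => simp
  | succ m ih =>
    rw [show 7 * (m + 1) = 7 * m + 1 + 1 + 1 + 1 + 1 + 1 + 1 by ring]
    simp only [Finset.prod_range_succ] at ih ⊢
    rw [if_neg (by omega), if_neg (by omega), if_neg (by omega), if_neg (by omega), if_neg (by omega), if_neg (by omega),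
      if_pos (by omega)]
    rw [show 7 * m + 1 + 1 + 1 + 1 + 1 + 1 + 1 = 7 + 7 * m by ring, 
      show 7 + 7 * (7 * m + 1 + 1 + 1 + 1 + 1 + 1) = 49 + 49 * m by ring]
    generalize (1 - (X : PowerSeries ℂ) ^ (7 + 7 * (7 * m))) = f0
    generalize (1 - (X : PowerSeries ℂ) ^ (7 + 7 * (7 * m + 1))) = f1
    generalize (1 - (X : PowerSeries ℂ) ^ (7 + 7 * (7 * m + 1 + 1))) = f2
    generalize (1 - (X : PowerSeries ℂ) ^ (7 + 7 * (7 * m + 1 + 1 + 1))) = f3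
    generalize (1 - (X : PowerSeries ℂ) ^ (7 + 7 * (7 * m + 1 + 1 + 1 + 1))) = f4
    generalize (1 - (X : PowerSeries ℂ) ^ (7 + 7 * (7 * m + 1 + 1 + 1 + 1 + 1))) = f5
    generalize (1 - (X : PowerSeries ℂ) ^ (49 + 49 * m)) = f6
    generalize (1 - (X : PowerSeries ℂ) ^ (7 + 7 * m)) = f7
    generalize (∏ k ∈ Finset.range (7 * m), (if 7 ∣ k + 1 then (1 - X ^ (k + 1)) ^ 7 else 1 - (X : PowerSeries ℂ) ^ (7 + 7 * k))) = g1 at *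
    generalize (∏ k ∈ Finset.range m, (1 - (X : PowerSeries ℂ) ^ (49 + 49 * k))) = g2 at *
    generalize (∏ k ∈ Finset.range (7 * m), (1 - (X : PowerSeries ℂ) ^ (7 + 7 * k))) = g3 at *
    generalize (∏ k ∈ Finset.range m, (1 - (X : PowerSeries ℂ) ^ (7 + 7 * k))) = g4 at *
    calc _ = (g1 * g2) * (f0 * f1 * f2 * f3 * f4 * f5 * f7 ^ 7 * f6) := by ring
      _ = _ := by rw [ih]; ring

lemma normJ (z : ℂ) (hz : IsPrimitiveRoot z 7) :
    (∏ j ∈ Finset.range 7, rescale (z ^ j) (mC (J 1))) * mC (J 49) = mC (J 7) ^ 8 := by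
  have h1 : Tendsto (fun m => (∏ j ∈ Finset.range 7, rescale (z ^ j) (mC (Pt 1 1 (7 * m)))) * rescale 1 (mC (Pt 49 49 m)))
      atTop (𝓝 ((∏ j ∈ Finset.range 7, rescale (z ^ j) (mC (Pinf 1 1))) * rescale 1 (mC (Pinf 49 49)))) := by
    refine Tendsto.mul ?_ (rs_tendsto 1 49 49 (by norm_num) (by norm_num) id (fun n => le_rfl))
    apply tendsto_finsetProd
    intro j _
    exact rs_tendsto _ 1 1 (by norm_num) (by norm_num) (fun m => 7 * m) (fun n => by show n ≤ 7 * n; omega)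
  have h2 : Tendsto (fun m => rescale 1 (mC (Pt 7 7 (7 * m))) * rescale 1 (mC (Pt 7 7 m)) ^ 7)
      atTop (𝓝 (rescale 1 (mC (Pinf 7 7)) * rescale 1 (mC (Pinf 7 7)) ^ 7)) := by
    refine Tendsto.mul ?_ (Tendsto.pow ?_ 7)
    · exact rs_tendsto _ 7 7 (by norm_num) (by norm_num) (fun m => 7 * m) (fun n => by show n ≤ 7 * n; omega)
    · exact rs_tendsto 1 7 7 (by norm_num) (by norm_num) id (fun n => le_rfl)
  have h3 := tendsto_nhds_unique h1 (h2.congr (fun m => (normJ_fin z hz m).symm))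
  simp only [rescale_one, RingHom.id_apply] at h3
  rw [J_eq, J_eq, J_eq, h3]; ring

lemma rs_pr (z : ℂ) (hz : z ^ 7 = 1) (r : ℕ) (f : PowerSeries ℤ) :
    rescale z (mC (pr r f)) = C (z ^ r) * mC (pr r f) := by
  ext n
  simp only [coeff_rescale, coeff_C_mul, coeff_map, pr, coeff_mk]
  split_ifs with h
  · congr 1
    rw [← Nat.div_add_mod n 7, h, pow_add, pow_mul, hz, one_pow, one_mul]
  · simp

lemma normJ_int : nN (pr 0 (J 1)) (pr 1 (J 1)) (pr 5 (J 1)) (-(X ^ 2 * J 49)) * J 49 = J 7 ^ 8 := by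
  apply mC_inj
  have hz := Complex.isPrimitiveRoot_exp 7 (by norm_num)
  set z := Complex.exp (2 * Real.pi * Complex.I / (7 : ℕ))
  have h7 : z ^ 7 = 1 := hz.pow_eq_one
  have hw : 1 + z + z^2 + z^3 + z^4 + z^5 + z^6 = 0 := by
    apply mul_left_cancel₀ (sub_ne_zero.2 (hz.ne_one (by norm_num)))
    linear_combination h7
  have hw' := congrArg (C (R := ℂ)) hw
  simp only [map_add, map_pow, map_one, map_zero] at hw'
  have h := normJ z hz
  have hs : ∀ j, rescale (z ^ j) (mC (J 1)) = mC (pr 0 (J 1)) + C z ^ j * mC (pr 1 (J 1)) + (C z ^ j) ^ 5 * mC (pr 5 (J 1))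
      + (C z ^ j) ^ 2 * mC (-(X ^ 2 * J 49)) := by
    intro j
    have hj : (z ^ j) ^ 7 = 1 := by rw [← pow_mul, mul_comm, pow_mul, h7, one_pow]
    conv_lhs => rw [J1_split]
    have e49 : rescale (z ^ j) (mC (J 49)) = mC (J 49) := by
      have : J 49 = pr 0 (J 49) := by
        have e : J 49 = expand 7 (by norm_num) (J 7) := by rw [expand_J _ _ _ (by norm_num)]
        ext n
        rw [pr, coeff_mk]
        split_ifs with h
        · rfl
        · rw [e, coeff_expand_of_not_dvd]; omega
      rw [this, rs_pr _ hj]; simp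
    simp only [map_sub, map_add, map_mul, map_pow, map_neg, rs_pr _ hj, e49, PowerSeries.map_X, rescale_X]
    simp only [pow_zero, pow_one, map_pow, map_one]
    ring
  rw [Finset.prod_congr rfl (fun j _ => hs j), norm7 _ _ _ _ _ hw'] at h
  rw [map_mul, map_pow, ← h]
  simp only [nN, nU, nW, map_mul, map_add, map_sub, map_neg, map_pow, map_ofNat]

end S12

namespace S12
open PowerSeries

def Ji (b : ℕ) : PowerSeries ℤ := invOfUnit (J b) 1
def E (b : ℕ) : R := io (J b)
def Ei (b : ℕ) : R := io (Ji b)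

lemma E_Ei (b : ℕ) (hb : 1 ≤ b) : E b * Ei b = 1 := by
  rw [E, Ei, ← map_mul, Ji, mul_invOfUnit _ _ (by rw [constCoeff_J b hb]; rfl), map_one]

lemma V_E (m : ℕ) (hm : 0 < m) (b : ℕ) (hb : 1 ≤ b) : V m hm (E b) = E (m * b) := by
  rw [E, V_io, expand_J _ _ _ hb, E]

lemma V_Ei (m : ℕ) (hm : 0 < m) (b : ℕ) (hb : 1 ≤ b) : V m hm (Ei b) = Ei (m * b) := by
  have h1 := congrArg (V m hm) (E_Ei b hb)
  rw [map_mul, map_one, V_E _ _ _ hb] at h1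
  have h2 := E_Ei (m * b) (Nat.mul_pos hm hb)
  linear_combination Ei (m * b) * h1 - V m hm (Ei b) * h2

/-- leading term -/
def Ld (n : ℤ) (ε : ℤ) (f : R) : Prop := ∃ g : PowerSeries ℤ, f = qp n * io g ∧ constantCoeff g = ε

lemma Ld.mul {m n ε δ : ℤ} {f g : R} (hf : Ld m ε f) (hg : Ld n δ g) : Ld (m + n) (ε * δ) (f * g) := by
  obtain ⟨u, rfl, hu⟩ := hf
  obtain ⟨v, rfl, hv⟩ := hg
  refine ⟨u * v, ?_, by rw [map_mul, hu, hv]⟩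
  rw [qp_add, map_mul]; ring

lemma Ld.cast {m n ε δ : ℤ} {f : R} (hf : Ld m ε f) (h : m = n) (h' : ε = δ) : Ld n δ f := by
  subst h; subst h'; exact hf

lemma Ld.neg {m ε : ℤ} {f : R} (hf : Ld m ε f) : Ld m (-ε) (-f) := by
  obtain ⟨u, rfl, hu⟩ := hf
  exact ⟨-u, by rw [map_neg]; ring, by rw [map_neg, hu]⟩

lemma Ld.V2 {m ε : ℤ} {f : R} (hf : Ld m ε f) : Ld (2 * m) ε (V 2 (by norm_num) f) := by
  obtain ⟨u, rfl, hu⟩ := hf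
  refine ⟨expand 2 (by norm_num) u, by rw [map_mul, V_qp, V_io]; rfl, ?_⟩
  rw [← coeff_zero_eq_constantCoeff_apply, coeff_expand]
  simpa using hu

lemma Ld.coeff {m ε : ℤ} {f : R} (hf : Ld m ε f) : f.coeff m = ε := by
  obtain ⟨u, rfl, hu⟩ := hf
  rw [qp_coeff, sub_self]
  exact (io_coeff_nat u 0).trans (by simpa using hu)

lemma Ld.coeff_lt {m ε : ℤ} {f : R} (hf : Ld m ε f) (k : ℤ) (hk : k < m) : f.coeff k = 0 := by
  obtain ⟨u, rfl, hu⟩ := hf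
  rw [qp_coeff, io_coeff_neg]
  omega

lemma Ld.inv {m ε : ℤ} {f g : R} (hf : Ld m ε f) (hε : ε * ε = 1) (h : f * g = 1) : Ld (-m) ε g := by
  obtain ⟨u, rfl, hu⟩ := hf
  let e : ℤˣ := ⟨ε, ε, hε, hε⟩
  have h1 := mul_invOfUnit u e (by rw [hu])
  refine ⟨invOfUnit u e, ?_, ?_⟩
  · have h2 := congrArg io h1
    rw [map_mul, map_one] at h2
    have h3 : qp (-m) * qp m = 1 := by rw [← qp_add]; simp [qp_zero]
    calc g = g * (qp (-m) * qp m) * (io u * io (invOfUnit u e)) := by rw [h2, h3]; ring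
      _ = (qp m * io u * g) * (qp (-m) * io (invOfUnit u e)) := by ring
      _ = _ := by rw [h, one_mul]
  · rw [constantCoeff_invOfUnit]; rfl

lemma Ld.ne {m ε : ℤ} {f : R} (hf : Ld m ε f) (h : ε ≠ 0) : f ≠ 0 := by
  rintro rfl
  apply h
  rw [← hf.coeff]; rfl

lemma Ld_io (f : PowerSeries ℤ) (k : ℕ) (ε : ℤ) (h : ∀ m < k, coeff m f = 0) (h2 : coeff k f = ε) : Ld k ε (io f) := by
  obtain ⟨g, rfl⟩ := X_pow_dvd_iff.2 h
  refine ⟨g, by rw [qp_nat, map_mul], ?_⟩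
  rw [← h2, coeff_X_pow_mul', if_pos le_rfl]; simp

lemma Ld_qp (n : ℤ) : Ld n 1 (qp n) := ⟨1, by simp, by simp⟩
lemma Ld_E (b : ℕ) (hb : 1 ≤ b) : Ld 0 1 (E b) := ⟨J b, by rw [qp_zero, one_mul, E], constCoeff_J b hb⟩
lemma Ld_Ei (b : ℕ) (hb : 1 ≤ b) : Ld 0 1 (Ei b) := by
  have := (Ld_E b hb).inv (by norm_num) (E_Ei b hb)
  simpa using this

def a : R := qp (-2) * io (pr 0 (J 1)) * Ei 49
def b : R := qp (-2) * io (pr 1 (J 1)) * Ei 49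
def c : R := qp (-2) * io (pr 5 (J 1)) * Ei 49
def xi : R := qp (-2) * E 1 * Ei 49

lemma qp_neg_mul (n : ℤ) : qp (-n) * qp n = 1 := by rw [← qp_add]; simp [qp_zero]

lemma xi_eq : xi = a + b + c - 1 := by
  have h := congrArg io J1_split
  rw [map_sub, map_add, map_add, map_mul, ← qp_nat] at h
  have h2 := E_Ei 49 (by norm_num)
  have h3 := qp_neg_mul 2
  rw [xi, E, h, a, b, c]
  change _ * (_ - qp 2 * E 49) * _ = _
  linear_combination (- E 49 * Ei 49) * h3 - h2

lemma Cls_io (r : ZMod 7) (f : PowerSeries ℤ) (h : ∀ n, coeff n f ≠ 0 → (n : ZMod 7) = r) : Cls r (io f) := by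
  intro n hn
  rcases lt_or_ge n 0 with h' | h'
  · exact absurd (io_coeff_neg _ _ h') hn
  · lift n to ℕ using h'
    rw [io_coeff_nat] at hn
    exact_mod_cast h n hn

lemma Cls_pr (r : ℕ) (f : PowerSeries ℤ) : Cls r (io (pr r f)) := by
  apply Cls_io
  intro n hn
  rw [pr, coeff_mk] at hn
  have : n % 7 = r := by by_contra h; simp [h] at hn
  rw [← this, ZMod.natCast_mod]

lemma Cls_E7 (k : ℕ) (hk : 1 ≤ k) : Cls 0 (E (7 * k)) := by
  rw [← V_E 7 (by norm_num) k hk]; exact Cls.V7 _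
lemma Cls_Ei7 (k : ℕ) (hk : 1 ≤ k) : Cls 0 (Ei (7 * k)) := by
  rw [← V_Ei 7 (by norm_num) k hk]; exact Cls.V7 _

lemma Cls_a : Cls 5 a := (((Cls.qp (-2)).mul (Cls_pr 0 _)).mul (Cls_Ei7 7 (by norm_num))).cast (by decide)
lemma Cls_b : Cls 6 b := (((Cls.qp (-2)).mul (Cls_pr 1 _)).mul (Cls_Ei7 7 (by norm_num))).cast (by decide)
lemma Cls_c : Cls 3 c := (((Cls.qp (-2)).mul (Cls_pr 5 _)).mul (Cls_Ei7 7 (by norm_num))).cast (by decide)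

lemma J1_c0 : coeff 0 (J 1) = 1 := by simpa using constCoeff_J 1 le_rfl
lemma J1_c1 : coeff 1 (J 1) = -1 := by
  rw [J, coeff_mk]
  simp only [Finset.prod_range_succ, Finset.prod_range_zero]
  rw [show (1 * (1 - X ^ (1 * (0 + 1))) * (1 - X ^ (1 * (1 + 1))) : PowerSeries ℤ) = 1 - X ^ 1 - X ^ 2 + X ^ 3 by ring]
  simp [coeff_X_pow, coeff_one]

lemma Ld_a : Ld (-2) 1 a := by
  have := ((Ld_qp (-2)).mul (Ld_io (pr 0 (J 1)) 0 1 (by simp) (by rw [pr, coeff_mk, if_pos rfl, J1_c0]))).mul (Ld_Ei 49 (by norm_num))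
  exact this.cast (by norm_num) (by norm_num)
lemma Ld_b : Ld (-1) (-1) b := by
  have := ((Ld_qp (-2)).mul (Ld_io (pr 1 (J 1)) 1 (-1) (by
    intro m hm; interval_cases m; rw [pr, coeff_mk]; rfl) (by rw [pr, coeff_mk, if_pos rfl, J1_c1]))).mul (Ld_Ei 49 (by norm_num))
  exact this.cast (by norm_num) (by norm_num)

lemma sum_zmod7 (f : ZMod 7 → R) : ∑ r, f r = f 0 + f 1 + f 2 + f 3 + f 4 + f 5 + f 6 := by
  exact Fin.sum_univ_seven f

lemma xi3_zero (r : ZMod 7) (hr : r = 3 ∨ r = 5 ∨ r = 6) (n : ℤ) (hn : (n : ZMod 7) = r) : (xi ^ 3).coeff n = 0 := by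
  have e : xi ^ 3 = Ei 49 ^ 3 * (qp (-6) * io (J 1 ^ 3)) := by
    rw [xi, map_pow, show (-6 : ℤ) = -2 + -2 + -2 by norm_num, qp_add, qp_add, E]; ring
  rw [e]
  have h0 : ∀ j, (qp (-6) * io (J 1 ^ 3)).coeff j ≠ 0 → ¬ ((j : ZMod 7) = 3 ∨ (j : ZMod 7) = 5 ∨ (j : ZMod 7) = 6) := by
    intro j hj hh
    apply hj
    rw [qp_coeff]
    rcases lt_or_ge (j - -6) 0 with h' | h'
    · exact io_coeff_neg _ _ h'
    · obtain ⟨k, hk⟩ := Int.eq_ofNat_of_zero_le h'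
      rw [hk, io_coeff_nat]
      apply J_cube_zero
      have hh' : (j : ZMod 7) = ((3 : ℤ) : ZMod 7) ∨ (j : ZMod 7) = ((5 : ℤ) : ZMod 7) ∨ (j : ZMod 7) = ((6 : ℤ) : ZMod 7) := by
        exact_mod_cast hh
      simp only [ZMod.intCast_eq_intCast_iff_dvd_sub] at hh'
      omega
  by_contra hc
  rw [HahnSeries.coeff_mul] at hc
  obtain ⟨⟨i, j⟩, hij, h⟩ := Finset.exists_ne_zero_of_sum_ne_zero hc
  simp only [Finset.mem_antidiagonal] at hij
  have h1 := left_ne_zero_of_mul h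
  have h2 := right_ne_zero_of_mul h
  have hE : Cls 0 (Ei 49 ^ 3) := by
    have := Cls_Ei7 7 (by norm_num)
    rw [show Ei 49 ^ 3 = Ei (7 * 7) * Ei (7 * 7) * Ei (7 * 7) by norm_num; ring]
    exact ((this.mul this).mul this).cast (by decide)
  have hi := hE i h1
  apply h0 j h2
  have : (n : ZMod 7) = (j : ZMod 7) := by rw [← hij.2.2]; push_cast; rw [hi, zero_add]
  rw [← this, hn]
  exact hr


lemma cls7 {f x0 x1 x2 x3 x4 x5 x6 : R} (h0 : Cls 0 x0) (h1 : Cls 1 x1) (h2 : Cls 2 x2) (h3 : Cls 3 x3) (h4 : Cls 4 x4)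
    (h5 : Cls 5 x5) (h6 : Cls 6 x6) (h : f = x0 + x1 + x2 + x3 + x4 + x5 + x6) (r : ZMod 7)
    (hf : ∀ n : ℤ, (n : ZMod 7) = r → f.coeff n = 0) : (![x0, x1, x2, x3, x4, x5, x6] : Fin 7 → R) r = 0 := by
  refine cls_zero (f := f) (![x0, x1, x2, x3, x4, x5, x6] : Fin 7 → R) ?_ ?_ r hf
  · intro r
    change Fin 7 at r
    fin_cases r
    · exact h0
    · exact h1
    · exact h2
    · exact h3
    · exact h4
    · exact h5
    · exact h6
  · exact h.trans (sum_zmod7 (![x0, x1, x2, x3, x4, x5, x6] : Fin 7 → R)).symm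

lemma Cls.smul {r : ZMod 7} {f : R} (k : ℤ) (hf : Cls r f) : Cls r ((k : R) * f) := ((Cls.int k).mul hf).cast (zero_add _)

lemma intR_C (k : ℤ) : (k : R) = HahnSeries.C k := by
  rw [← map_intCast (HahnSeries.C (Γ := ℤ) (R := ℤ)) k]; simp
lemma intR_ne (k : ℤ) (hk : k ≠ 0) : (k : R) ≠ 0 := by
  rw [intR_C]
  intro h
  apply hk
  exact HahnSeries.C_injective (by rw [h, map_zero])

lemma rel3 : c = a ^ 2 - a * b ^ 2 ∧ a = b ^ 2 - b * c ^ 2 ∧ b = c ^ 2 - c * a ^ 2 := by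
  have A := Cls_a
  have B := Cls_b
  have C := Cls_c
  have key := cls7 (f := xi ^ 3)
    (((((A.mul B).mul C).cast (by decide)).smul 6).sub Cls.one)
    (((((A.mul A).mul A).cast (by decide)).add ((((B.mul B).mul C).cast (by decide)).smul 3)).sub (((A.mul C).cast (by decide)).smul 6))
    (((((C.mul C).mul C).cast (by decide)).add ((((A.mul A).mul B).cast (by decide)).smul 3)).sub (((B.mul C).cast (by decide)).smul 6))
    ((((((A.mul B).mul B).cast (by decide)).smul 3).sub (((A.mul A).cast (by decide)).smul 3)).add (C.smul 3))
    (((((B.mul B).mul B).cast (by decide)).add ((((C.mul C).mul A).cast (by decide)).smul 3)).sub (((A.mul B).cast (by decide)).smul 6))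
    ((((((B.mul C).mul C).cast (by decide)).smul 3).sub (((B.mul B).cast (by decide)).smul 3)).add (A.smul 3))
    ((((((C.mul A).mul A).cast (by decide)).smul 3).sub (((C.mul C).cast (by decide)).smul 3)).add (B.smul 3))
    (by rw [xi_eq]; push_cast; ring)
  have k3 := key 3 (xi3_zero 3 (by simp))
  have k5 := key 5 (xi3_zero 5 (by simp))
  have k6 := key 6 (xi3_zero 6 (by simp))
  change _ + _ = _ at k3
  change _ + _ = _ at k5
  change _ + _ = _ at k6
  push_cast at k3 k5 k6
  have h3 : (3 : R) ≠ 0 := by exact_mod_cast intR_ne 3 (by norm_num)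
  refine ⟨?_, ?_, ?_⟩ <;> apply mul_left_cancel₀ h3
  · linear_combination k3
  · linear_combination k5
  · linear_combination k6

lemma abc : a * b * c = -1 := by
  obtain ⟨h1, h2, h3⟩ := rel3
  have : b * (a * b * c + 1) = 0 := by linear_combination h3 + c * h1
  rcases mul_eq_zero.1 this with h | h
  · exact absurd h (Ld_b.ne (by norm_num))
  · linear_combination h

lemma Ld_c : Ld 3 1 c := by
  have := (Ld_a.mul Ld_b).inv (by norm_num) (g := -c) (by linear_combination -abc)
  have := this.neg
  rw [neg_neg] at this
  exact this.cast (by norm_num) (by norm_num)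

def a2 : R := V 2 (by norm_num) a
def b2 : R := V 2 (by norm_num) b
def c2 : R := V 2 (by norm_num) c
def xi2 : R := V 2 (by norm_num) xi
lemma Cls_a2 : Cls 3 a2 := Cls_a.V2.cast (by decide)
lemma Cls_b2 : Cls 5 b2 := Cls_b.V2.cast (by decide)
lemma Cls_c2 : Cls 6 c2 := Cls_c.V2.cast (by decide)
lemma Ld_a2 : Ld (-4) 1 a2 := Ld_a.V2.cast (by norm_num) rfl
lemma Ld_b2 : Ld (-2) (-1) b2 := Ld_b.V2.cast (by norm_num) rfl
lemma Ld_c2 : Ld 6 1 c2 := Ld_c.V2.cast (by norm_num) rfl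
lemma abc2 : a2 * b2 * c2 = -1 := by
  have := congrArg (V 2 (by norm_num)) abc
  simpa [a2, b2, c2] using this
lemma xi2_eq : xi2 = a2 + b2 + c2 - 1 := by
  rw [xi2, xi_eq]; simp [a2, b2, c2]
lemma xi2_E : xi2 = qp (-4) * E 2 * Ei 98 := by
  rw [xi2, xi, map_mul, map_mul, V_qp, V_E _ _ _ (by norm_num), V_Ei _ _ _ (by norm_num)]; rfl

def f1 : R := io (C (-2) * (th 63 35 * X ^ 1)) * (E 98 * Ei 49 ^ 2)
def f2 : R := io (C (-2) * (th 91 7 * X ^ 9)) * (E 98 * Ei 49 ^ 2)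
def f4 : R := io (C 2 * (th 77 21 * X ^ 4)) * (E 98 * Ei 49 ^ 2)

lemma Cls_th (k : ℤ) (u v n : ℕ) (hu : 7 ∣ u) (hv : 7 ∣ v) : Cls n (io (C k * (th u v * X ^ n)) * (E 98 * Ei 49 ^ 2)) := by
  have h1 : Cls 0 (io (th u v)) := by
    apply Cls_io
    intro m hm
    rw [ZMod.natCast_eq_zero_iff]
    by_contra h
    exact hm (th_cls u v hu hv m h)
  have h2 : Cls 0 (io (C k)) := by
    have := Cls.int k
    rwa [show io (C k) = (k : R) by rw [show (C k : PowerSeries ℤ) = (k : PowerSeries ℤ) by simp]; simp]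
  rw [map_mul, map_mul, ← qp_nat, sq]
  have := (h2.mul (h1.mul (Cls.qp n))).mul ((Cls_E7 14 (by norm_num)).mul ((Cls_Ei7 7 (by norm_num)).mul (Cls_Ei7 7 (by norm_num))))
  exact this.cast (by simp)
lemma Cls_f1 : Cls 1 f1 := (Cls_th _ _ _ _ (by norm_num) (by norm_num)).cast (by decide)
lemma Cls_f2 : Cls 2 f2 := (Cls_th _ _ _ _ (by norm_num) (by norm_num)).cast (by decide)
lemma Cls_f4 : Cls 4 f4 := (Cls_th _ _ _ _ (by norm_num) (by norm_num)).cast (by decide)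

lemma xi_sq : xi ^ 2 = xi2 * (1 + f1 + f2 + f4) := by
  have h1 := congrArg io Phi_split
  simp only [map_add] at h1
  have h2 := congrArg io Phi49
  rw [map_mul, map_pow] at h2
  have h3 := congrArg io J2_Phi
  rw [map_mul, map_pow] at h3
  rw [xi2_E, xi, f1, f2, f4]
  generalize io (C (-2) * (th 63 35 * X ^ 1)) = x1 at *
  generalize io (C (-2) * (th 91 7 * X ^ 9)) = x2 at *
  generalize io (C 2 * (th 77 21 * X ^ 4)) = x4 at *
  generalize io (expand 49 _ Phi) = y at *
  change y * E 98 = E 49 ^ 2 at h2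
  change E 1 ^ 2 = E 2 * _ at h3
  have h4 := E_Ei 49 (by norm_num)
  have h5 := E_Ei 98 (by norm_num)
  have h6 : qp (-4) = qp (-2) * qp (-2) := by rw [← qp_add]; norm_num
  rw [h6]
  have e1 : (1 : R) + x1 * (E 98 * Ei 49 ^ 2) + x2 * (E 98 * Ei 49 ^ 2) + x4 * (E 98 * Ei 49 ^ 2) = io Phi * (E 98 * Ei 49 ^ 2) := by
    rw [h1]
    linear_combination (-1 - E 49 * Ei 49) * h4 - Ei 49 ^ 2 * h2
  rw [e1]
  calc (qp (-2) * E 1 * Ei 49) ^ 2 = qp (-2) * qp (-2) * E 1 ^ 2 * Ei 49 ^ 2 * 1 := by ring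
    _ = _ := by rw [h3, ← h5]; ring

lemma relf : (-f1 + c2 * f2 = 2 * (a * c)) ∧ (-f2 + b2 * f4 = 2 * (b * c)) ∧ (-f4 + a2 * f1 = 2 * (a * b)) ∧
    (a2 + c2 * f4 = a ^ 2 - 2 * c) ∧ (b2 + a2 * f2 = b ^ 2 - 2 * a) ∧ (c2 + b2 * f1 = c ^ 2 - 2 * b) := by
  have A := Cls_a
  have B := Cls_b
  have C := Cls_c
  have A2 := Cls_a2
  have B2 := Cls_b2
  have C2 := Cls_c2
  have F1 := Cls_f1
  have F2 := Cls_f2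
  have F4 := Cls_f4
  have key := cls7 (f := 0)
    (((((A2.mul F4).cast (by decide)).add ((B2.mul F2).cast (by decide))).add ((C2.mul F1).cast (by decide))).sub (Cls.int 2))
    ((((C2.mul F2).cast (by decide)).sub F1).sub (((A.mul C).cast (by decide)).smul 2))
    ((((B2.mul F4).cast (by decide)).sub F2).sub (((B.mul C).cast (by decide)).smul 2))
    ((A2.add ((C2.mul F4).cast (by decide))).sub (((A.mul A).cast (by decide)).sub (C.smul 2)))
    ((((A2.mul F1).cast (by decide)).sub F4).sub (((A.mul B).cast (by decide)).smul 2))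
    ((B2.add ((A2.mul F2).cast (by decide))).sub (((B.mul B).cast (by decide)).sub (A.smul 2)))
    ((C2.add ((B2.mul F1).cast (by decide))).sub (((C.mul C).cast (by decide)).sub (B.smul 2)))
    (by
      have := xi_sq
      rw [xi_eq, xi2_eq] at this
      push_cast
      linear_combination this)
  have k1 := key 1 (fun _ _ => rfl)
  have k2 := key 2 (fun _ _ => rfl)
  have k3 := key 3 (fun _ _ => rfl)
  have k4 := key 4 (fun _ _ => rfl)
  have k5 := key 5 (fun _ _ => rfl)
  have k6 := key 6 (fun _ _ => rfl)
  change _ - _ = _ at k1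
  change _ - _ = _ at k2
  change _ - _ = _ at k3
  change _ - _ = _ at k4
  change _ - _ = _ at k5
  change _ - _ = _ at k6
  push_cast at k1 k2 k3 k4 k5 k6
  refine ⟨?_, ?_, ?_, ?_, ?_, ?_⟩
  · linear_combination k1
  · linear_combination k2
  · linear_combination k4
  · linear_combination k3
  · linear_combination k5
  · linear_combination k6

end S12

namespace S12
open PowerSeries

def xX : R := a ^ 3 * b
def xY : R := b ^ 3 * c
def xZ : R := c ^ 3 * a
def la : R := -(a * b * a2)
def mu : R := -(b * c * b2)
def nu : R := -(a * c * c2)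

lemma Ld_la : Ld (-7) 1 la := ((Ld_a.mul Ld_b).mul Ld_a2).neg.cast (by norm_num) (by norm_num)
lemma Ld_mu : Ld 0 (-1) mu := ((Ld_b.mul Ld_c).mul Ld_b2).neg.cast (by norm_num) (by norm_num)
lemma Ld_nu : Ld 7 (-1) nu := ((Ld_a.mul Ld_c).mul Ld_c2).neg.cast (by norm_num) (by norm_num)
lemma Ld_X : Ld (-7) (-1) xX := by
  have := (((Ld_a.mul Ld_a).mul Ld_a).mul Ld_b)
  rw [show a * a * a * b = xX by rw [xX]; ring] at this
  exact this.cast (by norm_num) (by norm_num)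
lemma Ld_Y : Ld 0 (-1) xY := by
  have := (((Ld_b.mul Ld_b).mul Ld_b).mul Ld_c)
  rw [show b * b * b * c = xY by rw [xY]; ring] at this
  exact this.cast (by norm_num) (by norm_num)
lemma Ld_Z : Ld 7 1 xZ := by
  have := (((Ld_c.mul Ld_c).mul Ld_c).mul Ld_a)
  rw [show c * c * c * a = xZ by rw [xZ]; ring] at this
  exact this.cast (by norm_num) (by norm_num)

lemma la_c : a2 = la * c := by rw [la]; linear_combination a2 * abc
lemma mu_a : b2 = mu * a := by rw [mu]; linear_combination b2 * abc
lemma nu_b : c2 = nu * b := by rw [nu]; linear_combination c2 * abc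
lemma lmn : la * mu * nu = 1 := by
  rw [la, mu, nu]
  have h1 := abc
  have h2 := abc2
  linear_combination (-a2 * b2 * c2 * (a * b * c - 1)) * h1 - h2

lemma XYZ : xX * xY * xZ = 1 := by
  rw [xX, xY, xZ]
  have h1 := abc
  calc _ = (a * b * c) ^ 4 := by ring
    _ = 1 := by rw [h1]; ring
lemma XY : xX * (1 + xY) = -1 := by
  obtain ⟨h1, h2, h3⟩ := rel3
  rw [xX, xY]
  have h := abc
  linear_combination a ^ 2 * b ^ 3 * h - a * b * h1 + h
lemma YZ : xY * (1 + xZ) = -1 := by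
  obtain ⟨h1, h2, h3⟩ := rel3
  rw [xY, xZ]
  have h := abc
  linear_combination b ^ 2 * c ^ 3 * h - b * c * h2 + h
lemma ZX : xZ * (1 + xX) = -1 := by
  obtain ⟨h1, h2, h3⟩ := rel3
  rw [xZ, xX]
  have h := abc
  linear_combination c ^ 2 * a ^ 3 * h - c * a * h3 + h

lemma two_ne : (2 : R) ≠ 0 := by exact_mod_cast intR_ne 2 (by norm_num)

lemma f1_eq : f1 = -(a * c + b * c * c2 + a * b * b2 * c2) := by
  obtain ⟨e1, e2, e4, -⟩ := relf
  have h := abc2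
  apply mul_left_cancel₀ two_ne
  linear_combination (-1) * e1 - c2 * e2 - b2 * c2 * e4 + f1 * h
lemma f2_eq : f2 = -(b * c + a * b * b2 + a * c * a2 * b2) := by
  obtain ⟨e1, e2, e4, -⟩ := relf
  have h := abc2
  apply mul_left_cancel₀ two_ne
  linear_combination (-1) * e2 - b2 * e4 - a2 * b2 * e1 + f2 * h
lemma f4_eq : f4 = -(a * b + a * c * a2 + b * c * a2 * c2) := by
  obtain ⟨e1, e2, e4, -⟩ := relf
  have h := abc2
  apply mul_left_cancel₀ two_ne
  linear_combination (-1) * e4 - a2 * e1 - a2 * c2 * e2 + f4 * h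

lemma relI : (1 + nu) * (1 + la + xX) + 1 = la * nu ^ 2 * xY := by
  obtain ⟨-, -, -, e3, e5, e6⟩ := relf
  obtain ⟨h1, h2, h3⟩ := rel3
  have h := abc
  rw [f4_eq, la_c, nu_b] at e3
  apply mul_left_cancel₀ (Ld_c.ne (by norm_num))
  rw [xX, xY] 
  generalize la = l at *
  generalize nu = n at *
  linear_combination e3 + (a^2*(1+n) + l * n * c) * h + n * h1
lemma relJ : (1 + la) * (1 + mu + xY) + 1 = mu * la ^ 2 * xZ := by
  obtain ⟨-, -, -, e3, e5, e6⟩ := relf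
  obtain ⟨h1, h2, h3⟩ := rel3
  have h := abc
  rw [f2_eq, mu_a, la_c] at e5
  apply mul_left_cancel₀ (Ld_a.ne (by norm_num))
  rw [xY, xZ] 
  generalize la = l at *
  generalize mu = n at *
  linear_combination e5 + (b^2*(1+l) + l * n * a) * h + l * h2
lemma relK : (1 + mu) * (1 + nu + xZ) + 1 = nu * mu ^ 2 * xX := by
  obtain ⟨-, -, -, e3, e5, e6⟩ := relf
  obtain ⟨h1, h2, h3⟩ := rel3
  have h := abc
  rw [f1_eq, mu_a, nu_b] at e6
  apply mul_left_cancel₀ (Ld_b.ne (by norm_num))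
  rw [xX, xZ] 
  generalize nu = l at *
  generalize mu = n at *
  linear_combination e6 + (c^2*(1+n) + l * n * b) * h + n * h3

def pP : R := xX * mu - 1 - la
def pQ : R := xY * nu - 1 - mu
def pR : R := xZ * la - 1 - nu
def rr : R := 1 + la + mu + nu + la * mu + mu * nu + nu * la

/-- abstract cyc -/
lemma d1 (l m n X Y : R) (h : l * m * n = 1) (h1 : (1 + n) * (1 + l + X) + 1 = l * n ^ 2 * Y) :
    Y * n - 1 - m = (1 + l + m + n + l * m + m * n + n * l) + (1 + n) * (X * m - 1 - l) := by
  linear_combination (-m) * h1 + (1 - Y * n) * h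
lemma d1a : pQ = rr + (1 + nu) * pP := d1 la mu nu xX xY lmn relI
lemma d1b : pR = rr + (1 + la) * pQ := by
  have := d1 mu nu la xY xZ (by linear_combination lmn) relJ
  rw [pR, rr, pQ]; linear_combination this
lemma d1c : pP = rr + (1 + mu) * pR := by
  have := d1 nu la mu xZ xX (by linear_combination lmn) relK
  rw [pR, rr, pP]; linear_combination this
lemma d2 (l m n X Y : R) (h : l * m * n = 1) (h1 : X * (1 + Y) = -1) :
    (1 + l + m + n + l * m + m * n + n * l) + (X * m - 1 - l) * (1 + m + n) + (Y * n - 1 - m) * (1 + l) + (X * m - 1 - l) * (Y * n - 1 - m) = 0 := by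
  linear_combination (m * n) * h1 
lemma d2a : rr + pP * (1 + mu + nu) + pQ * (1 + la) + pP * pQ = 0 := d2 la mu nu xX xY lmn XY
lemma d2b : rr + pQ * (1 + nu + la) + pR * (1 + mu) + pQ * pR = 0 := by
  have := d2 mu nu la xY xZ (by linear_combination lmn) YZ
  rw [pR, rr, pQ]; linear_combination this
lemma d3 (l m n p q r s : R) (h : l * m * n = 1) (h1 : q = s + (1 + n) * p) (h2 : r = s + (1 + l) * q) (h3 : p = s + (1 + m) * r)
    (hs : s = (1 + l + m + n + l * m + m * n + n * l)) : s * (p + 1 + (1 + m) * (2 + l)) = 0 := by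
  linear_combination (-1) * h3 - (1 + m) * h2 - (1 + m) * (1 + l) * h1 - p * h + p * hs

lemma rr0 : rr = 0 := by
  by_contra hr
  have h := d3 mu nu la pQ pR pP rr (by linear_combination lmn) d1b d1c d1a (by rw [rr]; ring)
  rcases mul_eq_zero.1 h with h | h
  · exact hr h
  · have h2 : ((2 : ℤ) : R) + (xY * nu + nu + nu + mu * nu) = 0 := by
      rw [pQ] at h; push_cast; linear_combination h
    have h3 := congrArg (fun f : R => f.coeff 0) h2
    simp only [HahnSeries.coeff_add, HahnSeries.coeff_zero] at h3
    rw [(Ld_Y.mul Ld_nu).coeff_lt 0 (by norm_num), (Ld_mu.mul Ld_nu).coeff_lt 0 (by norm_num), Ld_nu.coeff_lt 0 (by norm_num), intR_C, HahnSeries.C_apply, HahnSeries.coeff_single_same] at h3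
    norm_num at h3

lemma pP0 : pP = 0 := by
  by_contra hp
  have h1 := d1a
  have h2 := d2a
  rw [rr0] at h1 h2
  have h : pP * ((1 + mu + nu) + (1 + nu) * (1 + la) + pQ) = 0 := by
    linear_combination h2 - (1 + la) * h1
  rcases mul_eq_zero.1 h with h | h
  · exact hp h
  · have h2 : xY * nu + nu + nu + 1 + la + nu * la = 0 := by
      rw [pQ] at h; linear_combination h
    have h3 := congrArg (fun f : R => f.coeff (-7)) h2
    simp only [HahnSeries.coeff_add, HahnSeries.coeff_zero, HahnSeries.coeff_one] at h3
    rw [(Ld_Y.mul Ld_nu).coeff_lt _ (by norm_num), (Ld_nu.mul Ld_la).coeff_lt _ (by norm_num), Ld_nu.coeff_lt _ (by norm_num), Ld_la.coeff] at h3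
    simp at h3
lemma pQ0 : pQ = 0 := by rw [d1a, rr0, pP0]; ring
lemma pR0 : pR = 0 := by rw [d1b, rr0, pQ0]; ring

lemma Xmu : xX * mu = 1 + la := by have := pP0; rw [pP] at this; linear_combination this
lemma Ynu : xY * nu = 1 + mu := by have := pQ0; rw [pQ] at this; linear_combination this
lemma Zla : xZ * la = 1 + nu := by have := pR0; rw [pR] at this; linear_combination this
lemma rr_eq : 1 + la + mu + nu + la * mu + mu * nu + nu * la = 0 := rr0

def vv : R := 1 + xX
def hh : R := a * b
def sS : R := la + mu + nu
def s0 : R := sS + 4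
def HH : R := qp (-7) * E 7 ^ 4 * Ei 49 ^ 4
def H2 : R := V 2 (by norm_num) HH

lemma XvY : xX * xY = -vv := by rw [vv]; linear_combination XY
lemma vZ : vv * xZ = -1 := by rw [vv]; linear_combination ZX
lemma vnu : vv * nu = -vv - la := by
  linear_combination (-vv) * Zla + la * vZ
lemma la_cubic : la ^ 3 = -(1 + vv) * la ^ 2 - vv * la - vv * (vv - 1) := by
  have h1 := Xmu
  have h2 := vnu
  have h3 := lmn
  have hX : xX = vv - 1 := by rw [vv]; ring
  rw [hX] at h1
  linear_combination (vv * nu * la) * h1 + (la ^ 2 + la) * h2 - vv * (vv - 1) * h3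
lemma va : vv * a = hh ^ 3 := by
  rw [vv, hh, xX]
  obtain ⟨h1, h2, h3⟩ := rel3
  grind [abc]
lemma bh : b * hh ^ 2 = vv := by
  rw [vv, hh, xX]
  obtain ⟨h1, h2, h3⟩ := rel3
  grind [abc]
lemma ch : c * hh = -1 := by rw [hh]; linear_combination abc
lemma h7 : hh ^ 7 = vv ^ 3 - vv ^ 2 := by
  have h1 := va
  have h2 := bh
  have : vv - 1 = a ^ 3 * b := by rw [vv, xX]; ring
  calc hh ^ 7 = (hh ^ 3) ^ 2 * hh := by ring
    _ = vv ^ 2 * (vv - 1) := by rw [← h1, this, hh]; ring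
    _ = _ := by ring
lemma Ld_h : Ld (-3) (-1) hh := (Ld_a.mul Ld_b).cast (by norm_num) (by norm_num)
lemma h_ne : hh ≠ 0 := Ld_h.ne (by norm_num)
lemma X_ne : xX ≠ 0 := Ld_X.ne (by norm_num)
lemma v_ne : vv ≠ 0 := by
  intro h
  have := vZ
  rw [h, zero_mul] at this
  simp at this
lemma vX : xX = vv - 1 := by rw [vv]; ring
end S12

namespace S12
open Polynomial

structure K where
  z : ℤ
  n : ℕ

def BB : ℤ := 2 ^ 600
def K.add (x y : K) : K := ⟨Int.add x.z y.z, Nat.add x.n y.n⟩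
def K.sub (x y : K) : K := ⟨Int.sub x.z y.z, Nat.add x.n y.n⟩
def K.mul (x y : K) : K := ⟨Int.mul x.z y.z, Nat.mul x.n y.n⟩
def K.zero : K := ⟨0, 0⟩
def K.test (x : K) : Bool := Int.beq' x.z 0 && Nat.blt x.n (2 ^ 600)

def Rel (r : R) (x : K) : Prop := ∃ f g : ℤ[X], aeval vv f = r ∧ f.eval BB = x.z ∧ g.eval 1 = (x.n : ℤ) ∧ ∀ i, |f.coeff i| ≤ g.coeff i

lemma Rel.add {r s : R} {x y : K} (h : Rel r x) (h' : Rel s y) : Rel (r + s) (x.add y) := by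
  obtain ⟨f, g, h1, h2, h3, h4⟩ := h
  obtain ⟨f', g', h1', h2', h3', h4'⟩ := h'
  refine ⟨f + f', g + g', by rw [map_add, h1, h1'], by rw [eval_add, h2, h2']; rfl, by rw [eval_add, h3, h3']; exact (Nat.cast_add _ _).symm, ?_⟩
  intro i
  rw [coeff_add, coeff_add]
  exact (abs_add_le _ _).trans (add_le_add (h4 i) (h4' i))
lemma Rel.sub {r s : R} {x y : K} (h : Rel r x) (h' : Rel s y) : Rel (r - s) (x.sub y) := by
  obtain ⟨f, g, h1, h2, h3, h4⟩ := h
  obtain ⟨f', g', h1', h2', h3', h4'⟩ := h'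
  refine ⟨f - f', g + g', by rw [map_sub, h1, h1'], by rw [eval_sub, h2, h2']; rfl, by rw [eval_add, h3, h3']; exact (Nat.cast_add _ _).symm, ?_⟩
  intro i
  rw [coeff_sub, coeff_add]
  exact (abs_sub _ _).trans (add_le_add (h4 i) (h4' i))
lemma Rel.mul {r s : R} {x y : K} (h : Rel r x) (h' : Rel s y) : Rel (r * s) (x.mul y) := by
  obtain ⟨f, g, h1, h2, h3, h4⟩ := h
  obtain ⟨f', g', h1', h2', h3', h4'⟩ := h'
  refine ⟨f * f', g * g', by rw [map_mul, h1, h1'], by rw [eval_mul, h2, h2']; rfl, by rw [eval_mul, h3, h3']; exact (Nat.cast_mul _ _).symm, ?_⟩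
  intro i
  rw [coeff_mul, coeff_mul]
  refine (Finset.abs_sum_le_sum_abs _ _).trans (Finset.sum_le_sum fun p _ => ?_)
  rw [abs_mul]
  exact mul_le_mul (h4 _) (h4' _) (abs_nonneg _) ((abs_nonneg _).trans (h4 _))
lemma Rel.int (k : ℤ) : Rel (k : R) ⟨k, k.natAbs⟩ := by
  refine ⟨C k, C |k|, by simp, by simp, by simp, ?_⟩
  intro i
  rw [coeff_C, coeff_C]
  split_ifs <;> simp
lemma Rel.v : Rel vv ⟨BB, 1⟩ := by
  refine ⟨X, X, by simp, by simp, by simp, ?_⟩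
  intro i
  rw [coeff_X]
  split_ifs <;> simp
lemma Rel.zero : Rel 0 K.zero := by
  have := Rel.int 0
  rw [Int.cast_zero] at this
  exact this

lemma poly_zero (B : ℤ) : ∀ (d : ℕ) (f : ℤ[X]), f.natDegree ≤ d → (∀ i, |f.coeff i| < B) → f.eval B = 0 → f = 0 := by
  intro d
  induction d with
  | zero =>
    intro f hd _ h
    rw [eq_C_of_natDegree_le_zero hd] at h ⊢
    simpa using h
  | succ d ih =>
    intro f hd hb h
    have e := divX_mul_X_add f
    have h0 : f.coeff 0 = 0 := by
      rw [← e, eval_add, eval_mul, eval_X, eval_C] at h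
      have : B ∣ f.coeff 0 := ⟨-(f.divX.eval B), by linarith⟩
      exact Int.eq_zero_of_abs_lt_dvd this (hb 0)
    have hB : B ≠ 0 := by
      have := hb 0
      have := abs_nonneg (f.coeff 0)
      omega
    have h1 : f.divX.eval B = 0 := by
      rw [← e, eval_add, eval_mul, eval_X, eval_C, h0, add_zero] at h
      rcases mul_eq_zero.1 h with h | h
      · exact h
      · exact absurd h hB
    have := ih f.divX (by rw [natDegree_divX_eq_natDegree_tsub_one]; omega) (fun i => by rw [coeff_divX]; exact hb _) h1
    rw [← e, this, h0]; simp

lemma Rel.test {r : R} {x : K} (h : Rel r x) (ht : x.test = true) : r = 0 := by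
  obtain ⟨f, g, h1, h2, h3, h4⟩ := h
  simp only [K.test, Bool.and_eq_true] at ht
  have hz : x.z = 0 := by simpa [Int.beq'_eq] using ht.1
  have hn : x.n < 2 ^ 600 := by simpa [Nat.blt_eq] using ht.2
  have : f = 0 := by
    apply poly_zero BB f.natDegree f le_rfl ?_ (by rw [h2, hz])
    intro i
    have hg : ∀ i, 0 ≤ g.coeff i := fun i => (abs_nonneg _).trans (h4 i)
    have : g.coeff i ≤ g.eval 1 := by
      rw [eval_eq_sum_range]
      simp only [one_pow, mul_one]
      by_cases hi : i ∈ Finset.range (g.natDegree + 1)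
      · exact Finset.single_le_sum (f := fun i => g.coeff i) (fun i _ => hg i) hi
      · rw [coeff_eq_zero_of_natDegree_lt (by simp at hi; omega)]
        exact Finset.sum_nonneg (fun i _ => hg i)
    have h5 : (x.n : ℤ) < BB := by rw [BB]; exact_mod_cast hn
    have := h4 i
    omega
  rw [← h1, this, map_zero]

/-- cubic extension -/
structure L where
  c0 : K
  c1 : K
  c2 : K
def Kv : K := ⟨BB, 1⟩
def Kw : K := ⟨BB * (BB - 1), 2⟩
def Kv1 : K := ⟨1 + BB, 2⟩
def L.add (x y : L) : L := ⟨x.c0.add y.c0, x.c1.add y.c1, x.c2.add y.c2⟩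
def L.sub (x y : L) : L := ⟨x.c0.sub y.c0, x.c1.sub y.c1, x.c2.sub y.c2⟩
def L.smul (k : K) (y : L) : L := ⟨k.mul y.c0, k.mul y.c1, k.mul y.c2⟩
def L.ml (y : L) : L := ⟨K.zero.sub (Kw.mul y.c2), y.c0.sub (Kv.mul y.c2), y.c1.sub (Kv1.mul y.c2)⟩
def L.mul (x y : L) : L := (L.smul x.c0 y).add ((L.smul x.c1 y).add (L.smul x.c2 y).ml).ml
def L.zero : L := ⟨K.zero, K.zero, K.zero⟩
def L.int (k : ℤ) : L := ⟨⟨k, k.natAbs⟩, K.zero, K.zero⟩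
def L.v : L := ⟨Kv, K.zero, K.zero⟩
def L.la : L := ⟨K.zero, ⟨1, 1⟩, K.zero⟩
def L.test (x : L) : Bool := x.c0.test && x.c1.test && x.c2.test
def L.pow (x : L) : ℕ → L
  | 0 => L.int 1
  | n + 1 => (L.pow x n).mul x

def RL (r : R) (x : L) : Prop := ∃ r0 r1 r2, Rel r0 x.c0 ∧ Rel r1 x.c1 ∧ Rel r2 x.c2 ∧ r = r0 + r1 * la + r2 * la ^ 2

lemma Rel_w : Rel (vv * (vv - 1)) Kw := by
  have := Rel.v.mul (Rel.v.sub (Rel.int 1))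
  rw [Int.cast_one] at this
  exact this
lemma Rel_v1 : Rel (1 + vv) Kv1 := by
  have := (Rel.int 1).add Rel.v
  rw [Int.cast_one] at this
  exact this

lemma RL.add {r s : R} {x y : L} (h : RL r x) (h' : RL s y) : RL (r + s) (x.add y) := by
  obtain ⟨r0, r1, r2, h0, h1, h2, rfl⟩ := h
  obtain ⟨s0, s1, s2, h0', h1', h2', rfl⟩ := h'
  exact ⟨_, _, _, h0.add h0', h1.add h1', h2.add h2', by ring⟩
lemma RL.sub {r s : R} {x y : L} (h : RL r x) (h' : RL s y) : RL (r - s) (x.sub y) := by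
  obtain ⟨r0, r1, r2, h0, h1, h2, rfl⟩ := h
  obtain ⟨s0, s1, s2, h0', h1', h2', rfl⟩ := h'
  exact ⟨_, _, _, h0.sub h0', h1.sub h1', h2.sub h2', by ring⟩
lemma RL.smul {k r : R} {c : K} {x : L} (hk : Rel k c) (h : RL r x) : RL (k * r) (L.smul c x) := by
  obtain ⟨r0, r1, r2, h0, h1, h2, rfl⟩ := h
  exact ⟨_, _, _, hk.mul h0, hk.mul h1, hk.mul h2, by ring⟩
lemma RL.ml {r : R} {x : L} (h : RL r x) : RL (r * la) x.ml := by
  obtain ⟨r0, r1, r2, h0, h1, h2, rfl⟩ := h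
  refine ⟨_, _, _, Rel.zero.sub (Rel_w.mul h2), h0.sub (Rel.v.mul h2), h1.sub (Rel_v1.mul h2), ?_⟩
  linear_combination r2 * la_cubic
lemma RL.mul {r s : R} {x y : L} (h : RL r x) (h' : RL s y) : RL (r * s) (x.mul y) := by
  obtain ⟨r0, r1, r2, h0, h1, h2, rfl⟩ := h
  have := (RL.smul h0 h').add ((RL.smul h1 h').add (RL.smul h2 h').ml).ml
  rw [L.mul]
  convert this using 1
  ring
lemma RL.int (k : ℤ) : RL (k : R) (L.int k) := ⟨_, _, _, Rel.int k, Rel.zero, Rel.zero, by ring⟩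
lemma RL.zero : RL 0 L.zero := ⟨_, _, _, Rel.zero, Rel.zero, Rel.zero, by ring⟩
lemma RL.v : RL vv L.v := ⟨_, _, _, Rel.v, Rel.zero, Rel.zero, by ring⟩
lemma RL.la : RL la L.la := ⟨_, _, _, Rel.zero, Rel.int 1, Rel.zero, by push_cast; ring⟩
lemma RL.pow {r : R} {x : L} (h : RL r x) (n : ℕ) : RL (r ^ n) (x.pow n) := by
  induction n with
  | zero => have := RL.int 1; rw [Int.cast_one] at this; rw [pow_zero]; exact this
  | succ n ih => rw [pow_succ]; exact ih.mul h
lemma RL.test {r : R} {x : L} (h : RL r x) (ht : x.test = true) : r = 0 := by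
  obtain ⟨r0, r1, r2, h0, h1, h2, rfl⟩ := h
  simp only [L.test, Bool.and_eq_true] at ht
  rw [h0.test ht.1.1, h1.test ht.1.2, h2.test ht.2]; ring

/-- degree seven extension -/
structure M where
  d0 : L
  d1 : L
  d2 : L
  d3 : L
  d4 : L
  d5 : L
  d6 : L
def Lw : K := ⟨BB * BB * (BB - 1), 2⟩
def M.add (x y : M) : M := ⟨x.d0.add y.d0, x.d1.add y.d1, x.d2.add y.d2, x.d3.add y.d3, x.d4.add y.d4, x.d5.add y.d5, x.d6.add y.d6⟩
def M.lmul (k : L) (y : M) : M := ⟨k.mul y.d0, k.mul y.d1, k.mul y.d2, k.mul y.d3, k.mul y.d4, k.mul y.d5, k.mul y.d6⟩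
def M.mh (x : M) : M := ⟨L.smul Lw x.d6, x.d0, x.d1, x.d2, x.d3, x.d4, x.d5⟩
def M.one : M := ⟨L.int 1, L.zero, L.zero, L.zero, L.zero, L.zero, L.zero⟩

def RM (r : R) (x : M) : Prop := ∃ r0 r1 r2 r3 r4 r5 r6, RL r0 x.d0 ∧ RL r1 x.d1 ∧ RL r2 x.d2 ∧ RL r3 x.d3 ∧ RL r4 x.d4 ∧ RL r5 x.d5 ∧ RL r6 x.d6 ∧
  r = r0 + r1 * hh + r2 * hh ^ 2 + r3 * hh ^ 3 + r4 * hh ^ 4 + r5 * hh ^ 5 + r6 * hh ^ 6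

lemma RM.add {r s : R} {x y : M} (h : RM r x) (h' : RM s y) : RM (r + s) (x.add y) := by
  obtain ⟨r0, r1, r2, r3, r4, r5, r6, h0, h1, h2, h3, h4, h5, h6, rfl⟩ := h
  obtain ⟨s0, s1, s2, s3, s4, s5, s6, g0, g1, g2, g3, g4, g5, g6, rfl⟩ := h'
  exact ⟨_, _, _, _, _, _, _, h0.add g0, h1.add g1, h2.add g2, h3.add g3, h4.add g4, h5.add g5, h6.add g6, by ring⟩
lemma RM.lmul {k r : R} {c : L} {x : M} (hk : RL k c) (h : RM r x) : RM (k * r) (M.lmul c x) := by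
  obtain ⟨r0, r1, r2, r3, r4, r5, r6, h0, h1, h2, h3, h4, h5, h6, rfl⟩ := h
  exact ⟨_, _, _, _, _, _, _, hk.mul h0, hk.mul h1, hk.mul h2, hk.mul h3, hk.mul h4, hk.mul h5, hk.mul h6, by ring⟩
lemma Rel_Lw : Rel (vv * vv * (vv - 1)) Lw := by
  have := (Rel.v.mul Rel.v).mul (Rel.v.sub (Rel.int 1))
  rw [Int.cast_one] at this
  exact this
lemma RM.mh {r : R} {x : M} (h : RM r x) : RM (hh * r) x.mh := by
  obtain ⟨r0, r1, r2, r3, r4, r5, r6, h0, h1, h2, h3, h4, h5, h6, rfl⟩ := h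
  refine ⟨_, _, _, _, _, _, _, RL.smul Rel_Lw h6, h0, h1, h2, h3, h4, h5, ?_⟩
  linear_combination r6 * h7
lemma RM.one : RM 1 M.one := by
  refine ⟨_, _, _, _, _, _, _, RL.int 1, RL.zero, RL.zero, RL.zero, RL.zero, RL.zero, RL.zero, ?_⟩
  push_cast; ring

/-- class zero -/
lemma Cls_X : Cls 0 xX := by
  have := ((Cls_a.mul Cls_a).mul Cls_a).mul Cls_b
  rw [show a * a * a * b = xX by rw [xX]; ring] at this
  exact this.cast (by decide)
lemma Cls_v : Cls 0 vv := (Cls.one.add Cls_X)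
lemma Cls_la : Cls 0 la := (((Cls_a.mul Cls_b).mul Cls_a2).neg).cast (by decide)
lemma Cls_h : Cls 4 hh := (Cls_a.mul Cls_b).cast (by decide)
lemma Cls.pow {r : ZMod 7} {f : R} (hf : Cls r f) (n : ℕ) : Cls (n * r) (f ^ n) := by
  induction n with
  | zero => simpa using Cls.one
  | succ n ih => rw [pow_succ]; exact (ih.mul hf).cast (by push_cast; ring)
lemma Rel.cls {r : R} {x : K} (h : Rel r x) : Cls 0 r := by
  obtain ⟨f, g, rfl, -⟩ := h
  rw [aeval_eq_sum_range]
  clear g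
  generalize f.natDegree + 1 = N
  induction N with
  | zero => simpa using Cls.zero 0
  | succ N ih =>
    rw [Finset.sum_range_succ]
    refine ih.add ?_
    rw [Algebra.smul_def, eq_intCast]
    exact ((Cls_v.pow N).cast (by simp)).smul _
lemma RL.cls {r : R} {x : L} (h : RL r x) : Cls 0 r := by
  obtain ⟨r0, r1, r2, h0, h1, h2, rfl⟩ := h
  exact (h0.cls.add ((h1.cls.mul Cls_la).cast (by decide))).add ((h2.cls.mul (Cls_la.pow 2)).cast (by decide))

end S12

namespace S12
open PowerSeries

lemma nN_poly (h v : R) : nN (h ^ 5) (v ^ 2) (-(v * h)) (-(v * h ^ 2)) =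
    v^14 + h^7 * (-v^7-7*v^8-14*v^9+7*v^11) + (h^7)^2 * (-8*v^7+14*v^8) + (h^7)^3 * (14*v^4) + (h^7)^4*(-7*v^2) + (h^7)^5 := by
  unfold nN nU nW; ring

lemma nN_hom (d x y z w : R) : nN (d*x) (d*y) (d*z) (d*w) = d^7 * nN x y z w := by
  have hu : nU (d*x) (d*y) (d*z) (d*w) = d^3 * nU x y z w := by unfold nU; ring
  have hw : nW (d*x) (d*y) (d*z) (d*w) = d^3 * nW x y z w := by unfold nW; ring
  unfold nN; rw [hu, hw]; ring

lemma nN_io (x y z w : PowerSeries ℤ) : io (nN x y z w) = nN (io x) (io y) (io z) (io w) := by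
  simp only [nN, nU, nW, map_mul, map_add, map_sub, map_neg, map_pow, map_ofNat]

lemma HH_sq : HH ^ 2 = nN a b c (-1) := by
  have h := congrArg io normJ_int
  rw [map_mul, nN_io, map_neg, map_mul, ← qp_nat, map_pow] at h
  have e := E_Ei 49 (by norm_num)
  have e2 := qp_neg_mul 2
  have ha : (qp 2 * E 49) * a = io (pr 0 (J 1)) := by
    rw [a]; linear_combination io (pr 0 (J 1)) * e * qp (-2) * qp 2 + io (pr 0 (J 1)) * e2
  have hb : (qp 2 * E 49) * b = io (pr 1 (J 1)) := by
    rw [b]; linear_combination io (pr 1 (J 1)) * e * qp (-2) * qp 2 + io (pr 1 (J 1)) * e2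
  have hc : (qp 2 * E 49) * c = io (pr 5 (J 1)) := by
    rw [c]; linear_combination io (pr 5 (J 1)) * e * qp (-2) * qp 2 + io (pr 5 (J 1)) * e2
  rw [← ha, ← hb, ← hc, show -(qp ((2:ℕ):ℤ) * io (J 49)) = (qp 2 * E 49) * (-1) by rw [E]; push_cast; ring, nN_hom] at h
  change _ * E 49 = E 7 ^ 8 at h
  rw [HH]
  have e3 : qp (-7) ^ 2 * qp 2 ^ 7 = 1 := by
    have h7 : qp (-7) * qp 7 = 1 := qp_neg_mul 7
    have h2 : qp 2 ^ 7 = qp 7 ^ 2 := by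
      simp only [pow_succ, pow_zero, one_mul, ← qp_add]; norm_num
    rw [h2, ← mul_pow, h7, one_pow]
  have e4 : E 49 ^ 8 * Ei 49 ^ 8 = 1 := by rw [← mul_pow, e, one_pow]
  calc (qp (-7) * E 7 ^ 4 * Ei 49 ^ 4) ^ 2 = qp (-7) ^ 2 * E 7 ^ 8 * Ei 49 ^ 8 := by ring
    _ = (qp (-7) ^ 2 * qp 2 ^ 7) * (E 49 ^ 8 * Ei 49 ^ 8) * nN a b c (-1) := by rw [← h]; ring
    _ = _ := by rw [e3, e4]; ring

lemma Ld_HH : Ld (-7) 1 HH := by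
  have h1 := Ld_E 7 (by norm_num)
  have h2 := Ld_Ei 49 (by norm_num)
  have := (((Ld_qp (-7)).mul (((h1.mul h1).mul h1).mul h1))).mul (((h2.mul h2).mul h2).mul h2)
  rw [show qp (-7) * (E 7 * E 7 * E 7 * E 7) * (Ei 49 * Ei 49 * Ei 49 * Ei 49) = HH by rw [HH]; ring] at this
  exact this.cast (by norm_num) (by norm_num)

lemma HH_eq : HH = -8 - (xX + xY + xZ) := by
  have hD : (vv * hh ^ 2) ^ 7 * HH ^ 2 = nN (hh ^ 5) (vv ^ 2) (-(vv * hh)) (-(vv * hh ^ 2)) := by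
    rw [HH_sq, ← nN_hom]
    congr 1
    · linear_combination hh ^ 2 * va
    · linear_combination vv * bh
    · linear_combination vv * hh * ch
    · ring
  rw [nN_poly, h7] at hD
  have hS : xX * vv * (8 + xX + xY + xZ) = 8 * xX * vv + xX ^ 2 * vv - vv ^ 2 - xX := by
    linear_combination vv * XvY + xX * vZ
  have h14 : (vv * hh ^ 2) ^ 7 = vv ^ 7 * (vv ^ 3 - vv ^ 2) ^ 2 := by rw [← h7]; ring
  have hsq : HH ^ 2 = (8 + xX + xY + xZ) ^ 2 := by
    have h0 : (xX * vv) ^ 2 * (vv * hh ^ 2) ^ 7 ≠ 0 := by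
      exact mul_ne_zero (pow_ne_zero _ (mul_ne_zero X_ne v_ne)) (pow_ne_zero _ (mul_ne_zero v_ne (pow_ne_zero _ h_ne)))
    apply mul_left_cancel₀ h0
    rw [mul_assoc, hD, show (xX * vv) ^ 2 * (vv * hh ^ 2) ^ 7 * (8 + xX + xY + xZ) ^ 2 = (vv * hh ^ 2) ^ 7 * (xX * vv * (8 + xX + xY + xZ)) ^ 2 by ring, hS, h14, vX]
    ring
  have hf : (HH - (8 + xX + xY + xZ)) * (HH + (8 + xX + xY + xZ)) = 0 := by linear_combination hsq
  rcases mul_eq_zero.1 hf with h | h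
  · exfalso
    have h8 : (8 : R).coeff (-7) = 0 := by
      have := intR_C 8
      rw [show (8 : R) = ((8 : ℤ) : R) by norm_num, this, HahnSeries.C_apply, HahnSeries.coeff_single_of_ne (by norm_num)]
    have := congrArg (fun f : R => f.coeff (-7)) h
    simp only [HahnSeries.coeff_sub, HahnSeries.coeff_add, HahnSeries.coeff_zero] at this
    rw [Ld_HH.coeff, Ld_X.coeff, Ld_Y.coeff_lt _ (by norm_num), Ld_Z.coeff_lt _ (by norm_num), h8] at this
    norm_num at this
  · linear_combination h

lemma H_poly : xX * vv * HH = -8 * (xX * vv) - xX ^ 2 * vv + vv ^ 2 + xX := by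
  rw [HH_eq]; linear_combination -vv * XvY - xX * vZ
lemma X2_eq : V 2 (by norm_num) xX = la ^ 2 * mu + la := by
  have : V 2 (by norm_num) xX = a2 ^ 3 * b2 := by simp only [xX, map_mul, map_pow]; rfl
  rw [this, la_c, mu_a]
  have : (la * c) ^ 3 * (mu * a) = la ^ 2 * mu * (xZ * la) := by rw [xZ]; ring
  rw [this, Zla]; linear_combination la * lmn
lemma Y2_eq : V 2 (by norm_num) xY = mu ^ 2 * nu + mu := by
  have : V 2 (by norm_num) xY = b2 ^ 3 * c2 := by simp only [xY, map_mul, map_pow]; rfl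
  rw [this, mu_a, nu_b]
  have : (mu * a) ^ 3 * (nu * b) = mu ^ 2 * nu * (xX * mu) := by rw [xX]; ring
  rw [this, Xmu]; linear_combination mu * lmn
lemma Z2_eq : V 2 (by norm_num) xZ = nu ^ 2 * la + nu := by
  have : V 2 (by norm_num) xZ = c2 ^ 3 * a2 := by simp only [xZ, map_mul, map_pow]; rfl
  rw [this, nu_b, la_c]
  have : (nu * b) ^ 3 * (la * c) = nu ^ 2 * la * (xY * nu) := by rw [xY]; ring
  rw [this, Ynu]; linear_combination nu * lmn
lemma H2_eq : H2 = -8 - (la ^ 2 * mu + la + (mu ^ 2 * nu + mu) + (nu ^ 2 * la + nu)) := by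
  rw [H2, HH_eq]
  simp only [map_sub, map_neg, map_add, X2_eq, Y2_eq, Z2_eq, map_ofNat]

/-- cleared generators -/
lemma Xvmu : xX * vv * mu = vv * (1 + la) := by linear_combination vv * Xmu
lemma Xvnu : xX * vv * nu = xX * (-vv - la) := by linear_combination xX * vnu
end S12

namespace S12
open PowerSeries

def D0 : R := xX * vv
lemma D0_ne : D0 ≠ 0 := mul_ne_zero X_ne v_ne
def LX : L := L.v.sub (L.int 1)
lemma RX : RL xX LX := by rw [vX]; have := RL.v.sub (RL.int 1); rw [Int.cast_one] at this; exact this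
def LD : L := LX.mul L.v
lemma RD : RL D0 LD := RX.mul RL.v
def Lmu : L := L.v.mul ((L.int 1).add L.la)
lemma Rmu : RL (D0 * mu) Lmu := by
  rw [D0, Xvmu]; have := RL.v.mul ((RL.int 1).add RL.la); rw [Int.cast_one] at this; exact this
def Lnu : L := LX.mul ((L.zero.sub L.v).sub L.la)
lemma Rnu : RL (D0 * nu) Lnu := by
  rw [D0, Xvnu]; have := RX.mul ((RL.zero.sub RL.v).sub RL.la); rw [zero_sub] at this; exact this
def Ls : L := ((LD.mul L.la).add Lmu).add Lnu
lemma Rs : RL (D0 * sS) Ls := by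
  rw [sS, mul_add, mul_add]; exact ((RD.mul RL.la).add Rmu).add Rnu
def Ls0 : L := Ls.add (LD.mul (L.int 4))
lemma Rs0 : RL (D0 * s0) Ls0 := by
  rw [s0, mul_add]; have := Rs.add (RD.mul (RL.int 4)); rw [Int.cast_ofNat] at this; exact this
def LH : L := (((LD.mul (L.int (-8))).sub (LX.mul LD)).add (L.v.mul L.v)).add LX
lemma RH : RL (D0 * HH) LH := by
  have := (((RD.mul (RL.int (-8))).sub (RX.mul RD)).add (RL.v.mul RL.v)).add RX
  have e : D0 * HH = D0 * ((-8 : ℤ) : R) - xX * D0 + vv * vv + xX := by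
    rw [D0, H_poly]; push_cast; ring
  rw [e]; exact this
lemma H2_s : H2 = sS ^ 2 + sS - 12 - HH := by
  have h1 := (((RD.mul RL.la).pow 2).mul Rmu).add ((Rmu.pow 2).mul Rnu) |>.add ((Rnu.pow 2).mul (RD.mul RL.la))
  have h2 := ((Rs.pow 2).mul RD).add ((((Rs.mul (RL.int 2)).sub (RD.mul (RL.int 4))).sub RH).mul (RD.pow 2))
  have := (h1.add h2).test (by decide +kernel)
  have h0 : D0 ^ 3 * (H2 - (sS ^ 2 + sS - 12 - HH)) = 0 := by
    rw [H2_eq]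
    have e : sS = la + mu + nu := rfl
    push_cast at this
    linear_combination -this + D0 ^ 3 * e
  rcases mul_eq_zero.1 h0 with h | h
  · exact absurd h (pow_ne_zero _ D0_ne)
  · linear_combination h
def LH2 : L := ((Ls.mul Ls).add (Ls.mul LD)).sub (((LD.mul (L.int 12)).add LH).mul LD)
lemma RH2 : RL (D0 ^ 2 * H2) LH2 := by
  have := ((Rs.mul Rs).add (Rs.mul RD)).sub (((RD.mul (RL.int 12)).add RH).mul RD)
  have e : D0 ^ 2 * H2 = D0 * sS * (D0 * sS) + D0 * sS * D0 - (D0 * ((12 : ℤ) : R) + D0 * HH) * D0 := by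
    rw [H2_s]; push_cast; ring
  rw [e]; exact this

def FF : R := f1 * f2 * f4
lemma fgen (x y z l m n : R) (h : x * y * z = -1) (hr : z = x ^ 2 - x * y ^ 2) (hY : y ^ 3 * z * n = 1 + m)
    (hZ : z ^ 3 * x * l = 1 + n) (hZX : z ^ 3 * x * (1 + x ^ 3 * y) = -1) :
    -(x * z + y * z * (n * y) + x * y * (m * x) * (n * y)) * y = m * (x ^ 3 * y + l) := by
  have h1 : x ^ 2 * y ^ 3 = 1 + x ^ 3 * y := by linear_combination x * y * hr - h
  have h2 : (1 + x ^ 3 * y) * n = -(1 + x ^ 3 * y) - l := by linear_combination l * hZX - (1 + x ^ 3 * y) * hZ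
  linear_combination -h - hY - m * n * h1 - m * h2
lemma f1b : f1 * b = mu * (xX + la) := by
  rw [f1_eq, nu_b, mu_a]
  exact fgen a b c la mu nu abc rel3.1 Ynu Zla ZX
lemma f4c : f4 * c = nu * (xY + mu) := by
  have := fgen b c a mu nu la (by rw [← abc]; ring) rel3.2.1 Zla Xmu XY
  rw [f4_eq, la_c, nu_b, xY, ← this]; ring
lemma f2a : f2 * a = la * (xZ + nu) := by
  have := fgen c a b nu la mu (by rw [← abc]; ring) rel3.2.2 Xmu Ynu YZ
  rw [f2_eq, la_c, mu_a, xZ, ← this]; ring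
lemma FF_eq : FF = 8 + HH - s0 := by
  have hF : FF = -((xX + la) * (xY + mu) * (xZ + nu)) := by
    have : FF * (a * b * c) = (la * mu * nu) * ((xX + la) * (xY + mu) * (xZ + nu)) := by
      rw [FF]; calc _ = (f1 * b) * (f4 * c) * (f2 * a) := by ring
        _ = _ := by rw [f1b, f4c, f2a]; ring
    rw [abc, lmn] at this
    linear_combination -this
  have h1 : RL (D0 * (xX + la)) ((LD.mul LX).add (LD.mul L.la)) := by rw [mul_add]; exact (RD.mul RX).add (RD.mul RL.la)
  have h2 : RL (D0 * (xY + mu)) ((L.zero.sub (L.v.pow 2)).add Lmu) := by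
    rw [mul_add]; convert (RL.zero.sub (RL.v.pow 2)).add Rmu using 2
    rw [D0]; linear_combination vv * XvY
  have h3 : RL (D0 * (xZ + nu)) ((L.zero.sub LX).add Lnu) := by
    rw [mul_add]; convert (RL.zero.sub RX).add Rnu using 2
    rw [D0]; linear_combination xX * vZ
  have := (((h1.mul h2).mul h3).add (((RD.mul (RL.int 8)).add (RH.sub Rs0)).mul (RD.pow 2))).test (by decide +kernel)
  push_cast at this
  have h0 : D0 ^ 3 * (FF - (8 + HH - s0)) = 0 := by
    rw [hF]; linear_combination -this
  rcases mul_eq_zero.1 h0 with h | h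
  · exact absurd h (pow_ne_zero _ D0_ne)
  · linear_combination h
lemma FF_H : FF * H2 ^ 2 = HH * (HH + 7 * s0) := by
  have := ((((RD.mul (RL.int 8)).add (RH.sub Rs0)).mul (RH2.pow 2)).sub ((RH.mul (RH.add (Rs0.mul (RL.int 7)))).mul (RD.pow 3))).test (by decide +kernel)
  push_cast at this
  have h0 : D0 ^ 5 * (FF * H2 ^ 2 - (HH * (HH + 7 * s0))) = 0 := by
    rw [FF_eq]; linear_combination this
  rcases mul_eq_zero.1 h0 with h | h
  · exact absurd h (pow_ne_zero _ D0_ne)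
  · linear_combination h
end S12

namespace S12
open PowerSeries

abbrev W7 : R →+* R := V 7 (by norm_num)

lemma qp_pow (n : ℤ) (k : ℕ) : qp n ^ k = qp (k * n) := by
  induction k with
  | zero => simp [qp_zero]
  | succ k ih => rw [pow_succ, ih, ← qp_add]; congr 1; push_cast; ring
lemma H2_E : H2 = qp (-14) * E 14 ^ 4 * Ei 98 ^ 4 := by
  rw [H2, HH]
  simp only [map_mul, map_pow, V_qp, V_E 2 (by norm_num) 7 (by norm_num), V_Ei 2 (by norm_num) 49 (by norm_num)]
  norm_num
lemma HH_ne : HH ≠ 0 := Ld_HH.ne (by norm_num)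
lemma H2_ne : H2 ≠ 0 := (Ld_HH.V2).ne (by norm_num)
lemma E_ne (b : ℕ) (hb : 1 ≤ b) : E b ≠ 0 := left_ne_zero_of_mul_eq_one (E_Ei b hb)

lemma FF_E : FF * (E 14 * E 49 ^ 7) = 8 * qp 14 * E 98 ^ 7 * E 7 := by
  have h := congrArg io th_prod
  have e := E_Ei 49 (by norm_num)
  simp only [map_mul, map_pow] at h
  change _ * (E 14 * E 49) = E 98 ^ 4 * E 7 at h
  rw [FF, f1, f2, f4]
  simp only [map_mul, ← qp_nat]
  have q : qp ((1:ℕ):ℤ) * qp ((9:ℕ):ℤ) * qp ((4:ℕ):ℤ) = qp 14 := by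
    rw [← qp_add, ← qp_add]; norm_num
  have c2 : io (C (-2)) = -2 := by simp; exact map_ofNat io 2
  have c2' : io (C 2) = 2 := by simp; exact map_ofNat io 2
  rw [c2, c2', ← q]
  have e' : (Ei 49 * E 49) ^ 6 = 1 := by rw [mul_comm, e, one_pow]
  linear_combination (8 * (qp ((1:ℕ):ℤ) * qp ((9:ℕ):ℤ) * qp ((4:ℕ):ℤ)) * E 98 ^ 3) * h + 8 * (qp ((1:ℕ):ℤ) * qp ((9:ℕ):ℤ) * qp ((4:ℕ):ℤ)) * E 98 ^ 3 * io (th 63 35) * io (th 91 7) * io (th 77 21) * E 14 * E 49 * e'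

lemma dict_t (t : PowerSeries ℤ) (ht : t * (J 1) ^ 4 = PowerSeries.X * (J 7) ^ 4) : W7 (io t) * HH = 1 := by
  have h := congrArg (fun f => W7 (io f)) ht
  simp only [map_mul, map_pow] at h
  rw [show io X = qp 1 by rw [show (1:ℤ) = ((1:ℕ):ℤ) by norm_num, qp_nat, pow_one]] at h
  change _ * W7 (E 1) ^ 4 = _ * W7 (E 7) ^ 4 at h
  rw [V_E 7 (by norm_num) 1 (by norm_num), V_E 7 (by norm_num) 7 (by norm_num), V_qp] at h
  norm_num at h
  rw [HH]
  have e := E_Ei 49 (by norm_num)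
  have e4 : (E 49 * Ei 49) ^ 4 = 1 := by rw [e, one_pow]
  have q := qp_neg_mul 7
  linear_combination qp (-7) * Ei 49 ^ 4 * h + qp (-7) * qp 7 * e4 + q

lemma dict_p1 (p1 : R) (hp1 : p1 * HahnSeries.ofPowerSeries ℤ ℤ (PowerSeries.X * (J 1) ^ 4 * (J 14) ^ 4)
        = HahnSeries.ofPowerSeries ℤ ℤ ((J 2) ^ 4 * (J 7) ^ 4)) : W7 p1 * HH = H2 := by
  change p1 * io _ = io _ at hp1
  have h := congrArg W7 hp1
  simp only [map_mul, map_pow] at h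
  rw [show io X = qp 1 by rw [show (1:ℤ) = ((1:ℕ):ℤ) by norm_num, qp_nat, pow_one]] at h
  change W7 p1 * (_ * W7 (E 1) ^ 4 * W7 (E 14) ^ 4) = W7 (E 2) ^ 4 * W7 (E 7) ^ 4 at h
  rw [V_E 7 (by norm_num) 1 (by norm_num), V_E 7 (by norm_num) 7 (by norm_num), V_E 7 (by norm_num) 14 (by norm_num), V_E 7 (by norm_num) 2 (by norm_num), V_qp] at h
  norm_num at h
  rw [HH, H2_E]
  have e4 : (E 49 * Ei 49) ^ 4 = 1 := by rw [E_Ei 49 (by norm_num), one_pow]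
  have e5 : (E 98 * Ei 98) ^ 4 = 1 := by rw [E_Ei 98 (by norm_num), one_pow]
  have q := qp_neg_mul 7
  have q2 : qp (-14) = qp (-7) ^ 2 := by rw [qp_pow]; norm_num
  rw [q2]
  linear_combination qp (-7) ^ 2 * Ei 49 ^ 4 * Ei 98 ^ 4 * h + qp (-7) ^ 2 * E 14 ^ 4 * Ei 98 ^ 4 * e4 - qp (-7) * W7 p1 * E 7 ^ 4 * Ei 49 ^ 4 * (qp (-7) * qp 7) * e5 - qp (-7) * W7 p1 * E 7 ^ 4 * Ei 49 ^ 4 * q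

lemma dict_p0 (p0 : PowerSeries ℤ)
    (hp0 : (1 + 7 * p0) * ((J 1) ^ 7 * J 14) = 8 * (J 2) ^ 7 * J 7) : W7 (io p0) * HH = s0 := by
  have h := congrArg (fun f => W7 (io f)) hp0
  simp only [map_mul, map_pow, map_add, map_one, map_ofNat] at h
  change _ * (W7 (E 1) ^ 7 * W7 (E 14)) = 8 * W7 (E 2) ^ 7 * W7 (E 7) at h
  rw [V_E 7 (by norm_num) 1 (by norm_num), V_E 7 (by norm_num) 7 (by norm_num), V_E 7 (by norm_num) 14 (by norm_num), V_E 7 (by norm_num) 2 (by norm_num)] at h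
  norm_num at h
  have hF := FF_E
  have hH : HH * (E 49 ^ 4 * qp 7) = E 7 ^ 4 := by
    have e4 : (E 49 * Ei 49) ^ 4 = 1 := by rw [E_Ei 49 (by norm_num), one_pow]
    rw [HH]; linear_combination (qp (-7) * qp 7) * E 7 ^ 4 * e4 + E 7 ^ 4 * qp_neg_mul 7
  have hH2 : H2 * (E 98 ^ 4 * qp 14) = E 14 ^ 4 := by
    have e4 : (E 98 * Ei 98) ^ 4 = 1 := by rw [E_Ei 98 (by norm_num), one_pow]
    rw [H2_E]; linear_combination (qp (-14) * qp 14) * E 14 ^ 4 * e4 + E 14 ^ 4 * qp_neg_mul 14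
  have q2 : qp 14 = qp 7 ^ 2 := by rw [qp_pow]; norm_num
  rw [q2] at hF hH2
  have hk := FF_H
  have key : (1 + 7 * W7 (io p0)) * HH ^ 2 = FF * H2 ^ 2 := by
    have n0 : E 7 ^ 7 * E 98 * (E 49 ^ 8 * qp 7 ^ 2) * (E 98 ^ 8 * qp 7 ^ 2) * E 14 ≠ 0 := by
      have := E_ne 7 (by norm_num); have := E_ne 98 (by norm_num); have := E_ne 49 (by norm_num); have := E_ne 14 (by norm_num)
      have : qp 7 ≠ 0 := right_ne_zero_of_mul_eq_one (qp_neg_mul 7)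
      simp_all
    apply mul_left_cancel₀ n0
    generalize W7 (io p0) = p at *
    generalize E 7 = x7 at *
    generalize E 98 = x98 at *
    generalize E 49 = x49 at *
    generalize E 14 = x14 at *
    generalize qp 7 = q at *
    generalize HH = u at *
    generalize H2 = w at *
    generalize FF = f at *
    calc _ = ((1 + 7 * p) * (x7 ^ 7 * x98)) * (u * (x49 ^ 4 * q)) ^ 2 * (x98 ^ 8 * q ^ 2) * x14 := by ring
      _ = (f * (x14 * x49 ^ 7)) * (w * (x98 ^ 4 * q ^ 2)) ^ 2 * (x49 * x98 * x7 ^ 7) := by rw [h, hF, hH, hH2]; ring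
      _ = _ := by ring
  rw [hk] at key
  have h7 : (7 * HH) * (W7 (io p0) * HH - s0) = 0 := by linear_combination key
  rcases mul_eq_zero.1 h7 with h | h
  · exfalso
    rcases mul_eq_zero.1 h with h | h
    · exact intR_ne 7 (by norm_num) (by exact_mod_cast h)
    · exact HH_ne h
  · linear_combination h
end S12

namespace S12
open PowerSeries

def M.smul (k : K) (y : M) : M := ⟨L.smul k y.d0, L.smul k y.d1, L.smul k y.d2, L.smul k y.d3, L.smul k y.d4, L.smul k y.d5, L.smul k y.d6⟩
lemma RM.smul {k r : R} {c : K} {x : M} (hk : Rel k c) (h : RM r x) : RM (k * r) (M.smul c x) := by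
  obtain ⟨r0, r1, r2, r3, r4, r5, r6, h0, h1, h2, h3, h4, h5, h6, rfl⟩ := h
  exact ⟨_, _, _, _, _, _, _, RL.smul hk h0, RL.smul hk h1, RL.smul hk h2, RL.smul hk h3, RL.smul hk h4, RL.smul hk h5, RL.smul hk h6, by ring⟩
def M.test (x : M) : Bool := x.d0.test && x.d1.test && x.d2.test && x.d3.test && x.d4.test && x.d5.test && x.d6.test
lemma RM.test {r : R} {x : M} (h : RM r x) (ht : x.test = true) : r = 0 := by
  obtain ⟨r0, r1, r2, r3, r4, r5, r6, h0, h1, h2, h3, h4, h5, h6, rfl⟩ := h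
  simp only [M.test, Bool.and_eq_true] at ht
  obtain ⟨⟨⟨⟨⟨⟨t0, t1⟩, t2⟩, t3⟩, t4⟩, t5⟩, t6⟩ := ht
  rw [h0.test t0, h1.test t1, h2.test t2, h3.test t3, h4.test t4, h5.test t5, h6.test t6]; ring
def M.zero : M := ⟨L.zero, L.zero, L.zero, L.zero, L.zero, L.zero, L.zero⟩
lemma RM.zero : RM 0 M.zero := ⟨_, _, _, _, _, _, _, RL.zero, RL.zero, RL.zero, RL.zero, RL.zero, RL.zero, RL.zero, by ring⟩

def Kv2 : K := Kv.mul Kv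
def Kvn : K := K.zero.sub Kv
lemma Rvn : Rel (-vv) Kvn := by have := Rel.zero.sub Rel.v; rw [zero_sub] at this; exact this
def mx (y : M) : M := ((M.mh (M.mh (M.mh (M.mh (M.mh y))))).add (M.smul Kv2 y)).add (M.smul Kvn (y.mh.add y.mh.mh))
def xh : R := vv * hh ^ 2 * xi
lemma xh_eq : xh = hh ^ 5 + vv * vv - vv * (hh + hh ^ 2) := by
  rw [xh, xi_eq]; linear_combination hh ^ 2 * va + vv * bh + vv * hh * ch
lemma RM.mx {r : R} {y : M} (h : RM r y) : RM (xh * r) (mx y) := by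
  have := ((h.mh.mh.mh.mh.mh).add (RM.smul (Rel.v.mul Rel.v) h)).add (RM.smul Rvn (h.mh.add h.mh.mh))
  have e : xh * r = (hh * (hh * (hh * (hh * (hh * r)))) + vv * vv * r + -vv * (hh * r + hh * (hh * r))) := by
    rw [xh_eq]; ring
  rw [e]; exact this

def KDn : K := K.zero.sub ((Kv.sub ⟨1, 1⟩).mul Kv)
lemma RDn : Rel (-D0) KDn := by
  have := Rel.zero.sub ((Rel.v.sub (Rel.int 1)).mul Rel.v)
  rw [zero_sub, Int.cast_one, ← vX] at this
  exact this
def L1 : L := (L.int 1).add L.la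
def L2 : L := L.smul KDn L.la
def L3 : L := L.smul KDn (L.v.add L.la)
def mx2 (y : M) : M := (((M.mh (M.mh (M.mh (M.mh (M.mh (M.lmul L1 y)))))).add (M.lmul L3 y)).add (M.lmul L2 y.mh)).add (M.smul KDn y.mh.mh)
def xh2 : R := D0 * hh ^ 2 * xi2
lemma xh2_eq : xh2 = (1 + la) * hh ^ 5 - D0 * (vv + la) - D0 * la * hh - D0 * hh ^ 2 := by
  rw [xh2, xi2_eq, la_c, nu_b, mu_a, D0]
  linear_combination xX * mu * hh ^ 2 * va + hh ^ 5 * Xmu + xX * vv * nu * bh + xX * vv * vnu + xX * vv * la * hh * ch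
lemma RM.mx2 {r : R} {y : M} (h : RM r y) : RM (xh2 * r) (mx2 y) := by
  have h1 := (RL.int 1).add RL.la
  rw [Int.cast_one] at h1
  have := ((((RM.lmul h1 h).mh.mh.mh.mh.mh).add (RM.lmul (RL.smul RDn (RL.v.add RL.la)) h)).add (RM.lmul (RL.smul RDn RL.la) h.mh)).add (RM.smul RDn h.mh.mh)
  have e : xh2 * r = (hh * (hh * (hh * (hh * (hh * ((1 + la) * r))))) + -D0 * (vv + la) * r + -D0 * la * (hh * r) + -D0 * (hh * (hh * r))) := by
    rw [xh2_eq]; ring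
  rw [e]; exact this

/-- modular equation -/
def cD (k : ℤ) : ℕ → M
  | 0 => M.smul ⟨k, k.natAbs⟩ M.one
  | n + 1 => M.smul Kv (cD k n).mh.mh
lemma RcD (k : ℤ) (n : ℕ) : RM (k * (vv * hh ^ 2) ^ n) (cD k n) := by
  induction n with
  | zero => have := RM.smul (Rel.int k) RM.one; rw [mul_one] at this; rw [pow_zero, mul_one]; exact this
  | succ n ih =>
    have := RM.smul Rel.v ih.mh.mh
    rw [show (k * (vv * hh ^ 2) ^ (n + 1) : R) = vv * (hh * (hh * (k * (vv * hh ^ 2) ^ n))) by ring]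
    exact this
def vh : R := vv * hh ^ 2
lemma vh_ne : vh ≠ 0 := mul_ne_zero v_ne (pow_ne_zero _ h_ne)
set_option maxHeartbeats 1000000 in
lemma modeq : HH ^ 2 = xi ^ 7 + 7 * xi ^ 6 + 21 * xi ^ 5 + 49 * xi ^ 4 + 147 * xi ^ 3 + 343 * xi ^ 2 + 343 * xi + HH * (7 * xi ^ 3 + 35 * xi ^ 2 + 49 * xi) := by
  have A := ((((((RM.one.mx.add (RcD 7 1)).mx.add (RcD 21 2)).mx.add (RcD 49 3)).mx.add (RcD 147 4)).mx.add (RcD 343 5)).mx.add (RcD 343 6)).mx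
  have B := (((RcD 7 4).mx.add (RcD 35 5)).mx.add (RcD 49 6)).mx
  have Cc := (RcD 1 7)
  have := ((RM.lmul (RD.pow 2) A).add (RM.lmul (RH.mul RD) B)).add (RM.lmul (RL.int (-1)) (RM.lmul (RH.pow 2) Cc)) |>.test (by decide +kernel)
  push_cast at this
  have e : xh = vh * xi := rfl
  rw [e, show vv * hh ^ 2 = vh from rfl] at this
  have h0 : (vh ^ 7 * D0 ^ 2) * (HH ^ 2 - (xi ^ 7 + 7 * xi ^ 6 + 21 * xi ^ 5 + 49 * xi ^ 4 + 147 * xi ^ 3 + 343 * xi ^ 2 + 343 * xi + HH * (7 * xi ^ 3 + 35 * xi ^ 2 + 49 * xi))) = 0 := by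
    linear_combination -this
  rcases mul_eq_zero.1 h0 with h | h
  · exact absurd h (mul_ne_zero (pow_ne_zero _ vh_ne) (pow_ne_zero _ D0_ne))
  · linear_combination h

def M.get (x : M) : ℕ → L
  | 0 => x.d0
  | 1 => x.d1
  | 2 => x.d2
  | 3 => x.d3
  | 4 => x.d4
  | 5 => x.d5
  | _ => x.d6

lemma comp_aux (U : R → R) (hU : ∀ (f : R) (n : ℤ), (U f).coeff n = f.coeff (7 * n)) (r : R) (h : Cls 0 r) (i j : ℕ) (hi : i < 7) (hj : j < 7) :
    U (r * hh ^ i * (-c) ^ j) = if i = j then U r else 0 := by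
  split_ifs with e
  · subst e
    rw [mul_assoc, ← mul_pow, show hh * -c = 1 by linear_combination -ch, one_pow, mul_one]
  · refine U_cls U hU (0 + i * 4 + j * 3) ?_ _ ((h.mul (Cls_h.pow i)).mul (Cls_c.neg.pow j))
    interval_cases i <;> interval_cases j <;> first | exact absurd rfl e | decide

lemma RM.comp (U : R → R) (hU : ∀ (f : R) (n : ℤ), (U f).coeff n = f.coeff (7 * n)) {f r : R} {x : M} (h : RM r x) (i : ℕ) (hi : i < 7) (hf : r = hh ^ i * f) :
    RL (W7 (U f)) (x.get i) := by
  obtain ⟨r0, r1, r2, r3, r4, r5, r6, h0, h1, h2, h3, h4, h5, h6, e⟩ := h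
  have e1 : f = r0 * hh ^ 0 * (-c) ^ i + r1 * hh ^ 1 * (-c) ^ i + r2 * hh ^ 2 * (-c) ^ i + r3 * hh ^ 3 * (-c) ^ i + r4 * hh ^ 4 * (-c) ^ i + r5 * hh ^ 5 * (-c) ^ i + r6 * hh ^ 6 * (-c) ^ i := by
    have : f = r * (-c) ^ i := by
      rw [hf]
      have : (hh * -c) ^ i = 1 := by rw [show hh * -c = 1 by linear_combination -ch, one_pow]
      rw [mul_pow] at this
      linear_combination -f * this
    rw [this, e]; ring
  rw [e1]
  simp only [U_add U hU, comp_aux U hU _ h0.cls 0 i (by norm_num) hi, comp_aux U hU _ h1.cls 1 i (by norm_num) hi, comp_aux U hU _ h2.cls 2 i (by norm_num) hi, comp_aux U hU _ h3.cls 3 i (by norm_num) hi, comp_aux U hU _ h4.cls 4 i (by norm_num) hi, comp_aux U hU _ h5.cls 5 i (by norm_num) hi, comp_aux U hU _ h6.cls 6 i (by norm_num) hi]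
  interval_cases i <;> simp [M.get, U_cls0 U hU _ h0.cls, U_cls0 U hU _ h1.cls, U_cls0 U hU _ h2.cls, U_cls0 U hU _ h3.cls, U_cls0 U hU _ h4.cls, U_cls0 U hU _ h5.cls, U_cls0 U hU _ h6.cls] <;> assumption

/-- U on class zero multiples -/
lemma U_mul0 (U : R → R) (hU : ∀ (f : R) (n : ℤ), (U f).coeff n = f.coeff (7 * n)) (r f : R) (h : Cls 0 r) : W7 (U (r * f)) = r * W7 (U f) := by
  have e := U_cls0 U hU r h
  conv_lhs => rw [← e]
  rw [U_mul_V7 U hU, map_mul, e]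
end S12

namespace S12
open PowerSeries

def Pm (j κ : ℕ) : M := mx^[κ] (mx2^[j] M.one)
lemma RPm2 (j : ℕ) : RM (xh2 ^ j) (mx2^[j] M.one) := by
  induction j with
  | zero => rw [Function.iterate_zero, id_eq, pow_zero]; exact RM.one
  | succ j ih => rw [Function.iterate_succ_apply', pow_succ']; exact ih.mx2
lemma RPm1 (κ : ℕ) (f : R) (m : M) (h : RM f m) : RM (xh ^ κ * f) (mx^[κ] m) := by
  induction κ with
  | zero => rw [Function.iterate_zero, id_eq, pow_zero, one_mul]; exact h
  | succ κ ih => rw [Function.iterate_succ_apply', pow_succ', mul_assoc]; exact ih.mx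
lemma RPm (j κ : ℕ) : RM (xh ^ κ * xh2 ^ j) (Pm j κ) := RPm1 κ _ _ (RPm2 j)

def sc (j κ : ℕ) : R := vv ^ (j + κ) * xX ^ j * (vv ^ 3 - vv ^ 2) ^ (2 * (j + κ) / 7)
def Lsc (j κ : ℕ) : L := ((L.v.pow (j + κ)).mul (LX.pow j)).mul (((L.v.pow 3).sub (L.v.pow 2)).pow (2 * (j + κ) / 7))
lemma Rsc (j κ : ℕ) : RL (sc j κ) (Lsc j κ) :=
  ((RL.v.pow (j + κ)).mul (RX.pow j)).mul (((RL.v.pow 3).sub (RL.v.pow 2)).pow (2 * (j + κ) / 7))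
lemma sc_ne (j κ : ℕ) : sc j κ ≠ 0 := by
  rw [sc, ← h7]
  exact mul_ne_zero (mul_ne_zero (pow_ne_zero _ v_ne) (pow_ne_zero _ X_ne)) (pow_ne_zero _ (pow_ne_zero _ h_ne))

def cmp (j κ : ℕ) : L := (Pm j κ).get (2 * (j + κ) % 7)
lemma Rcmp (U : R → R) (hU : ∀ (f : R) (n : ℤ), (U f).coeff n = f.coeff (7 * n)) (j κ : ℕ) :
    RL (sc j κ * W7 (U (xi2 ^ j * xi ^ κ))) (cmp j κ) := by
  rw [← U_mul0 U hU _ _ (Rsc j κ).cls]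
  refine (RPm j κ).comp U hU _ (Nat.mod_lt _ (by norm_num)) ?_
  rw [sc, ← h7, xh, xh2, D0]
  have : hh ^ (2 * (j + κ)) = hh ^ (2 * (j + κ) % 7) * (hh ^ 7) ^ (2 * (j + κ) / 7) := by
    rw [← pow_mul, ← pow_add]; congr 1; omega
  calc _ = vv ^ (j + κ) * xX ^ j * hh ^ (2 * (j + κ)) * (xi2 ^ j * xi ^ κ) := by
        rw [pow_mul hh 2]
        ring
    _ = _ := by rw [this]; ring

def ev (x : R) : List ℤ → R
  | [] => 0
  | c :: l => c + x * ev x l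
def Q : List ℤ → L
  | [] => L.zero
  | c :: l => ((LD.pow (l.length + 1)).mul (L.int c)).add (LH.mul (Q l))
lemma RQ (l : List ℤ) : RL (D0 ^ l.length * ev HH l) (Q l) := by
  induction l with
  | nil => rw [ev, mul_zero]; exact RL.zero
  | cons c l ih =>
    have := ((RD.pow (l.length + 1)).mul (RL.int c)).add (RH.mul ih)
    rw [show D0 ^ (c :: l).length * ev HH (c :: l) = D0 ^ (l.length + 1) * c + D0 * HH * (D0 ^ l.length * ev HH l) by
      rw [List.length_cons, ev]; ring]
    exact this
abbrev D3 := List ℤ × List ℤ × List ℤ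
def D3.ok (d : D3) : Bool := Nat.beq d.1.length 6 && Nat.beq d.2.1.length 6 && Nat.beq d.2.2.length 6
def SS (d : D3) : R := ev HH d.1 + ev HH d.2.1 * s0 + ev HH d.2.2 * H2
def tot (d : D3) : L := (((Q d.1).mul (LD.pow 2)).add (((Q d.2.1).mul Ls0).mul LD)).add ((Q d.2.2).mul LH2)
lemma Rtot (d : D3) (h : d.ok = true) : RL (D0 ^ 8 * SS d) (tot d) := by
  simp only [D3.ok, Bool.and_eq_true] at h
  have h1 := RQ d.1; have h2 := RQ d.2.1; have h3 := RQ d.2.2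
  rw [Nat.eq_of_beq_eq_true h.1.1] at h1; rw [Nat.eq_of_beq_eq_true h.1.2] at h2; rw [Nat.eq_of_beq_eq_true h.2] at h3
  have := ((h1.mul (RD.pow 2)).add ((h2.mul Rs0).mul RD)).add (h3.mul RH2)
  rw [show D0 ^ 8 * SS d = D0 ^ 6 * ev HH d.1 * D0 ^ 2 + D0 ^ 6 * ev HH d.2.1 * (D0 * s0) * D0 + D0 ^ 6 * ev HH d.2.2 * (D0 ^ 2 * H2) by rw [SS]; ring]
  exact this

def LF : L := ((LD.mul (L.int 8)).add LH).sub Ls0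
lemma RF : RL (D0 * FF) LF := by
  have := ((RD.mul (RL.int 8)).add RH).sub Rs0
  rw [show D0 * FF = D0 * ((8 : ℤ) : R) + D0 * HH - D0 * s0 by rw [FF_eq]; push_cast; ring]
  exact this

def chkA (j κ : ℕ) (d : D3) : Bool :=
  d.ok && (((cmp j κ).mul (LH.mul (LD.pow 8))).sub (((Lsc j κ).mul (tot d)).mul LD)).test
def chkB (j κ : ℕ) (d : D3) : Bool :=
  d.ok && (((cmp j κ).mul ((LH.pow 2).mul (LD.pow 8))).sub (((Lsc j κ).mul (tot d)).mul LH2)).test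
def chkC (j κ i μ : ℕ) (d : D3) : Bool :=
  d.ok && (((((cmp j κ).mul LF).mul (Lsc i μ)).sub (((cmp i μ).mul LD).mul (Lsc j κ))).mul (LH.mul (LD.pow 8))
    |>.sub ((((Lsc j κ).mul (Lsc i μ)).mul ((tot d).mul (L.int 7))).mul (LD.pow 2))).test

lemma winA (U : R → R) (hU : ∀ (f : R) (n : ℤ), (U f).coeff n = f.coeff (7 * n)) (j κ : ℕ) (d : D3) (h : chkA j κ d = true) :
    W7 (U (xi2 ^ j * xi ^ κ)) * HH = SS d := by
  simp only [chkA, Bool.and_eq_true] at h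
  have := (((Rcmp U hU j κ).mul (RH.mul (RD.pow 8))).sub (((Rsc j κ).mul (Rtot d h.1)).mul RD)).test h.2
  apply mul_left_cancel₀ (mul_ne_zero (sc_ne j κ) (pow_ne_zero 9 D0_ne))
  linear_combination this
lemma winB (U : R → R) (hU : ∀ (f : R) (n : ℤ), (U f).coeff n = f.coeff (7 * n)) (j κ : ℕ) (d : D3) (h : chkB j κ d = true) :
    W7 (U (xi2 ^ j * xi ^ κ)) * HH ^ 2 = H2 * SS d := by
  simp only [chkB, Bool.and_eq_true] at h
  have := (((Rcmp U hU j κ).mul ((RH.pow 2).mul (RD.pow 8))).sub (((Rsc j κ).mul (Rtot d h.1)).mul RH2)).test h.2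
  apply mul_left_cancel₀ (mul_ne_zero (sc_ne j κ) (pow_ne_zero 10 D0_ne))
  linear_combination this
lemma winC (U : R → R) (hU : ∀ (f : R) (n : ℤ), (U f).coeff n = f.coeff (7 * n)) (j κ i μ : ℕ) (d : D3) (h : chkC j κ i μ d = true) :
    (FF * W7 (U (xi2 ^ j * xi ^ κ)) - W7 (U (xi2 ^ i * xi ^ μ))) * HH = 7 * SS d := by
  simp only [chkC, Bool.and_eq_true] at h
  have := (((((Rcmp U hU j κ).mul RF).mul (Rsc i μ)).sub (((Rcmp U hU i μ).mul RD).mul (Rsc j κ))).mul (RH.mul (RD.pow 8))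
    |>.sub ((((Rsc j κ).mul (Rsc i μ)).mul ((Rtot d h.1).mul (RL.int 7))).mul (RD.pow 2))).test h.2
  apply mul_left_cancel₀ (mul_ne_zero (mul_ne_zero (sc_ne j κ) (sc_ne i μ)) (pow_ne_zero 10 D0_ne))
  push_cast at this
  linear_combination this
def wd1 : List (List ℤ × List ℤ × List ℤ) := [
  ([0, 49, 0, 0, 0, 0], [0, 0, 0, 0, 0, 0], [0, 0, 0, 0, 0, 0]),
  ([0, 49, 10, 0, 0, 0], [0, 0, 0, 0, 0, 0], [0, 0, 0, 0, 0, 0]),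
  ([0, -7, -4, 0, 0, 0], [0, 0, 0, 0, 0, 0], [0, 0, 0, 0, 0, 0]),
  ([0, -7, 0, 0, 0, 0], [0, 0, 0, 0, 0, 0], [0, 0, 0, 0, 0, 0]),
  ([0, 1, 0, 0, 0, 0], [0, 0, 0, 0, 0, 0], [0, 0, 0, 0, 0, 0]),
  ([0, -1, 0, 0, 0, 0], [0, 0, 0, 0, 0, 0], [0, 0, 0, 0, 0, 0]),
  ([0, 1, 0, 0, 0, 0], [0, 0, 0, 0, 0, 0], [0, 0, 0, 0, 0, 0])]
def wdA : List (List ℤ × List ℤ × List ℤ) := [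
  ([0, 2401, 490, -6, 0, 0], [0, -686, -112, 0, 0, 0], [0, 98, 28, 0, 0, 0]),
  ([0, -343, -245, 0, 0, 0], [0, 0, 35, 0, 0, 0], [0, 0, -5, 0, 0, 0]),
  ([0, -343, 14, 0, 0, 0], [0, 98, 3, 0, 0, 0], [0, 7, 0, 0, 0, 0]),
  ([0, 49, 0, 0, 0, 0], [0, 0, 0, 0, 0, 0], [0, 0, 0, 0, 0, 0]),
  ([0, -49, 1, 0, 0, 0], [0, 7, 0, 0, 0, 0], [0, -4, 0, 0, 0, 0]),
  ([0, 42, 0, 0, 0, 0], [0, -7, 0, 0, 0, 0], [0, 1, 0, 0, 0, 0]),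
  ([0, -7, 0, 0, 0, 0], [0, 0, 0, 0, 0, 0], [0, 0, 0, 0, 0, 0])]
def wdp1 : List (List ℤ × List ℤ × List ℤ) := [
  ([-705894, -201684, -16807, -280, 0, 0], [100842, 28812, 2009, 8, 0, 0], [-14406, -1715, -7, 0, 0, 0]),
  ([117649, 40817, 3920, 35, 0, 0], [-16807, -5831, -532, -1, 0, 0], [2401, 441, 1, 0, 0, 0]),
  ([-16807, -2401, 0, 24, 0, 0], [2401, 343, 0, 0, 0, 0], [-343, 0, 0, 0, 0, 0]),
  ([16807, 3430, 182, 0, 0, 0], [-2401, -490, -10, 0, 0, 0], [343, 7, 0, 0, 0, 0]),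
  ([2401, 343, 0, 0, 0, 0], [-343, -49, 0, 0, 0, 0], [49, 0, 0, 0, 0, 0]),
  ([-2401, -441, -8, 0, 0, 0], [343, 63, 0, 0, 0, 0], [-49, 0, 0, 0, 0, 0]),
  ([-343, -49, -4, 0, 0, 0], [49, 7, 0, 0, 0, 0], [-7, 0, 0, 0, 0, 0])]
def wdAp1 : List (List ℤ × List ℤ × List ℤ) := [
  ([5764801, 2235331, 259308, 6174, 49, 0], [-823543, -319333, -32242, -147, 0, 0], [117649, 28812, 1176, -154, 0, 0]),
  ([-823543, -117649, 0, 2205, 0, 0], [117649, 16807, 0, -315, 0, 0], [-16807, 0, 0, 45, 0, 0]),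
  ([823543, 184877, 13034, -98, 0, 0], [-117649, -26411, -1862, -14, 0, 0], [16807, 1372, -28, -4, 0, 0]),
  ([117649, 16807, 0, 0, 0, 0], [-16807, -2401, 0, 0, 0, 0], [2401, 0, 0, 0, 0, 0]),
  ([-117649, -26411, -980, -7, 0, 0], [16807, 3773, 91, 0, 0, 0], [-2401, -196, 22, 0, 0, 0]),
  ([-16807, -2401, -392, 0, 0, 0], [2401, 343, 56, 0, 0, 0], [-343, 0, -8, 0, 0, 0]),
  ([0, 0, 49, 0, 0, 0], [0, 0, 0, 0, 0, 0], [0, 0, 1, 0, 0, 0])]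
def wdp0 : List (List ℤ × List ℤ × List ℤ) := [
  ([0, 117649, 40817, 3136, -105, 0], [0, -16807, -8232, -910, -7, 0], [0, 4802, 735, 7, 0, 0]),
  ([0, -16807, -2401, 0, 64, 0], [0, 2401, 0, 0, 0, 0], [0, 0, 0, 0, 0, 0]),
  ([0, 16807, 3430, 273, 3, 0], [0, -2401, -294, 22, 0, 0], [0, 0, -28, 0, 0, 0]),
  ([0, 2401, 343, 0, 0, 0], [0, -343, 0, 0, 0, 0], [0, 0, 0, 0, 0, 0]),
  ([0, -2401, -441, 3, 0, 0], [0, 343, 84, 1, 0, 0], [0, -49, -1, 0, 0, 0]),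
  ([0, -343, -49, -12, 0, 0], [0, 49, 0, 0, 0, 0], [0, 0, 0, 0, 0, 0]),
  ([0, 0, -7, 0, 0, 0], [0, 0, -6, 0, 0, 0], [0, 7, 0, 0, 0, 0])]
def wdAp0 : List (List ℤ × List ℤ × List ℤ) := [
  ([0, -823543, -117649, 14406, 5439, 6], [0, 117649, 100842, 10290, -525, 0], [0, 0, 28812, 2940, 93, 0]),
  ([0, 823543, 184877, 14406, -490, 0], [0, -117649, -38416, -4998, -84, 0], [0, 0, -6860, -1078, -4, 0]),
  ([0, 117649, 16807, -686, -14, 0], [0, -16807, -2401, -147, 1, 0], [0, 16807, 2401, 63, 0, 0]),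
  ([0, -117649, -26411, -784, -35, 0], [0, 16807, 2058, -77, 0, 0], [0, -4802, -784, 70, 0, 0]),
  ([0, -16807, -2401, -784, 0, 0], [0, 2401, 0, 112, 0, 0], [0, 0, 0, -16, 0, 0]),
  ([0, 0, 0, 161, 0, 0], [0, 0, 343, 8, 0, 0], [0, -343, 56, 1, 0, 0]),
  ([0, 2401, 343, 0, 0, 0], [0, -343, 0, 0, 0, 0], [0, 0, 0, 0, 0, 0])]
def chkL (f : ℕ → D3 → Bool) (l : List D3) : Bool := (List.range 7).all fun n => f (6 - n) (l.getD n ([], [], []))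
lemma chkL_get {f : ℕ → D3 → Bool} {l : List D3} (h : chkL f l = true) (n : ℕ) (hn : n < 7) : f (6 - n) (l.getD n ([], [], [])) = true := by
  rw [chkL, List.all_eq_true] at h
  exact h n (List.mem_range.2 hn)
lemma ck1 : chkL (fun κ d => chkA 0 κ d) wd1 = true := by decide +kernel
lemma ckA : chkL (fun κ d => chkA 3 κ d) wdA = true := by decide +kernel
lemma ckp1 : chkL (fun κ d => chkB 4 κ d) wdp1 = true := by decide +kernel
lemma ckAp1 : chkL (fun κ d => chkB 7 κ d) wdAp1 = true := by decide +kernel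
lemma ckp0 : chkL (fun κ d => chkC 7 κ 0 (κ + 7) d) wdp0 = true := by decide +kernel
lemma ckAp0 : chkL (fun κ d => chkC 10 κ 3 (κ + 7) d) wdAp0 = true := by decide +kernel
end S12

namespace S12
open PowerSeries

structure Ctx where
  U : R → R
  hU : ∀ (f : R) (n : ℤ), (U f).coeff n = f.coeff (7 * n)
  p0 : PowerSeries ℤ
  hp0 : (1 + 7 * p0) * ((J 1) ^ 7 * J 14) = 8 * (J 2) ^ 7 * J 7

lemma E_Ei_pow (b : ℕ) (hb : 1 ≤ b) (k : ℕ) : E b ^ k * Ei b ^ k = 1 := by rw [← mul_pow, E_Ei b hb, one_pow]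
lemma Ei_E_pow (b : ℕ) (hb : 1 ≤ b) (k : ℕ) : Ei b ^ k * E b ^ k = 1 := by rw [mul_comm, E_Ei_pow b hb]

def TT : Rˣ where
  val := qp 1 * E 7 ^ 4 * Ei 1 ^ 4
  inv := qp (-1) * E 1 ^ 4 * Ei 7 ^ 4
  val_inv := by
    rw [show qp 1 * E 7 ^ 4 * Ei 1 ^ 4 * (qp (-1) * E 1 ^ 4 * Ei 7 ^ 4) = (qp (-1) * qp 1) * (E 7 ^ 4 * Ei 7 ^ 4) * (E 1 ^ 4 * Ei 1 ^ 4) by ring,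
      qp_neg_mul, E_Ei_pow 7 (by norm_num), E_Ei_pow 1 (by norm_num)]; ring
  inv_val := by
    rw [show qp (-1) * E 1 ^ 4 * Ei 7 ^ 4 * (qp 1 * E 7 ^ 4 * Ei 1 ^ 4) = (qp (-1) * qp 1) * (E 7 ^ 4 * Ei 7 ^ 4) * (E 1 ^ 4 * Ei 1 ^ 4) by ring,
      qp_neg_mul, E_Ei_pow 7 (by norm_num), E_Ei_pow 1 (by norm_num)]; ring
abbrev Tv : R := (TT : R)
abbrev Ti : R := ((TT⁻¹ : Rˣ) : R)
lemma Ti_def : Ti = qp (-1) * E 1 ^ 4 * Ei 7 ^ 4 := rfl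
lemma Tv_def : Tv = qp 1 * E 7 ^ 4 * Ei 1 ^ 4 := rfl
lemma TTi : Tv * Ti = 1 := TT.mul_inv
lemma W7_Ti : W7 Ti = HH := by
  rw [Ti_def, HH]
  simp only [map_mul, map_pow, V_qp, V_E 7 (by norm_num) 1 (by norm_num), V_Ei 7 (by norm_num) 7 (by norm_num)]
  norm_num
def uu : R := qp 2 * E 49 * Ei 1
lemma uu_xi : uu * xi = 1 := by
  rw [uu, xi, show qp 2 * E 49 * Ei 1 * (qp (-2) * E 1 * Ei 49) = (qp (-2) * qp 2) * (E 49 * Ei 49) * (E 1 * Ei 1) by ring,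
      qp_neg_mul, E_Ei 49 (by norm_num), E_Ei 1 (by norm_num)]; ring
lemma Tv_uu : Tv = uu ^ 4 * HH := by
  rw [Tv_def, uu, HH]
  have q : qp 1 = qp 2 ^ 4 * qp (-7) := by rw [qp_pow, ← qp_add]; norm_num
  rw [q]
  linear_combination (-qp 2 ^ 4 * qp (-7) * E 7 ^ 4 * Ei 1 ^ 4) * E_Ei_pow 49 (by norm_num) 4
def pp1 : R := qp (-1) * E 2 ^ 4 * Ei 1 ^ 4 * E 7 ^ 4 * Ei 14 ^ 4
def ww : R := pp1 * Tv
lemma pp1_ww : pp1 = ww * Ti := by rw [ww, mul_assoc, TTi, mul_one]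
lemma pp1_xi : pp1 * H2 = HH * (xi2 ^ 4 * uu ^ 4) := by
  rw [pp1, H2_E, HH, xi2_E, uu]
  have q : qp (-1) * qp (-14) = qp (-7) * qp (-4) ^ 4 * qp 2 ^ 4 := by rw [qp_pow, qp_pow, ← qp_add, ← qp_add, ← qp_add]; norm_num
  have a := E_Ei_pow 49 (by norm_num) 4
  have b := E_Ei_pow 14 (by norm_num) 4
  generalize E 49 = x at *; generalize Ei 49 = x' at *; generalize E 14 = y at *; generalize Ei 14 = y' at *
  linear_combination E 2 ^ 4 * Ei 1 ^ 4 * E 7 ^ 4 * Ei 98 ^ 4 * (y ^ 4 * y' ^ 4) * q + qp (-7) * qp (-4) ^ 4 * qp 2 ^ 4 * E 2 ^ 4 * Ei 1 ^ 4 * E 7 ^ 4 * Ei 98 ^ 4 * (b - a)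
lemma W7_pp1 : W7 pp1 * HH = H2 := by
  rw [pp1, H2_E, HH]
  simp only [map_mul, map_pow, V_qp, V_E 7 (by norm_num) 2 (by norm_num), V_E 7 (by norm_num) 7 (by norm_num), V_Ei 7 (by norm_num) 14 (by norm_num), V_Ei 7 (by norm_num) 1 (by norm_num)]
  norm_num
  have q : qp (-7) * qp (-7) = qp (-14) := by rw [← qp_add]; norm_num
  linear_combination qp (-7) * qp (-7) * E 14 ^ 4 * Ei 98 ^ 4 * (E_Ei_pow 49 (by norm_num) 4 + Ei_E_pow 7 (by norm_num) 4 * (E 49 ^ 4 * Ei 49 ^ 4)) + E 14 ^ 4 * Ei 98 ^ 4 * q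
lemma W7_ww : W7 (ww * Ti ^ 2) = H2 := by
  have h := congrArg W7 pp1_ww
  rw [map_mul W7, W7_Ti] at h
  rw [map_mul W7, map_pow W7, W7_Ti, ← W7_pp1, h]
  ring
def AA : R := xi2 ^ 3 * uu ^ 10
lemma A_eq (A3 : LaurentSeries ℤ)
    (hA3 : A3 * HahnSeries.ofPowerSeries ℤ ℤ ((J 1) ^ 10 * (J 98) ^ 3)
        = HahnSeries.ofPowerSeries ℤ ℤ (PowerSeries.X ^ 8 * (J 2) ^ 3 * (J 49) ^ 10)) : A3 = AA := by
  change A3 * io _ = io _ at hA3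
  simp only [map_mul, map_pow] at hA3
  rw [show io X = qp 1 by rw [show (1:ℤ) = ((1:ℕ):ℤ) by norm_num, qp_nat, pow_one]] at hA3
  change A3 * (E 1 ^ 10 * E 98 ^ 3) = _ * E 2 ^ 3 * E 49 ^ 10 at hA3
  have q : qp 1 ^ 8 = qp (-4) ^ 3 * qp 2 ^ 10 := by rw [qp_pow, qp_pow, qp_pow, ← qp_add]; norm_num
  rw [q] at hA3
  rw [AA, xi2_E, uu]
  have a := E_Ei_pow 1 (by norm_num) 10
  have b := E_Ei_pow 98 (by norm_num) 3
  generalize E 1 = x at *; generalize Ei 1 = x' at *; generalize E 98 = y at *; generalize Ei 98 = y' at *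
  linear_combination x' ^ 10 * y' ^ 3 * hA3 - A3 * (y ^ 3 * y' ^ 3) * a - A3 * b
lemma p1_eq (p1 : R) (hp1 : p1 * HahnSeries.ofPowerSeries ℤ ℤ (PowerSeries.X * (J 1) ^ 4 * (J 14) ^ 4)
        = HahnSeries.ofPowerSeries ℤ ℤ ((J 2) ^ 4 * (J 7) ^ 4)) : p1 = pp1 := by
  apply V_inj 7 (by norm_num)
  apply mul_right_cancel₀ HH_ne
  exact (dict_p1 p1 hp1).trans W7_pp1.symm
lemma t_eq (t : PowerSeries ℤ) (ht : t * (J 1) ^ 4 = PowerSeries.X * (J 7) ^ 4) : io t = Tv := by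
  apply V_inj 7 (by norm_num)
  apply mul_right_cancel₀ HH_ne
  refine (dict_t t ht).trans ?_
  have := congrArg W7 TTi
  rw [map_mul, W7_Ti, map_one] at this
  exact this.symm

namespace Ctx
variable (c : Ctx)
def P : R := io c.p0
lemma WP : W7 c.P * HH = s0 := dict_p0 c.p0 c.hp0
lemma P7 : 7 * c.P = FF * (xi2 ^ 7 * uu ^ 7) - 1 := by
  have h := congrArg io c.hp0
  simp only [map_mul, map_pow, map_add, map_one, map_ofNat] at h
  change (1 + 7 * c.P) * (E 1 ^ 7 * E 14) = 8 * E 2 ^ 7 * E 7 at h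
  have hF := FF_E
  have q : qp 14 * qp (-4) ^ 7 * qp 2 ^ 7 = 1 := by rw [qp_pow, qp_pow, ← qp_add, ← qp_add]; norm_num [qp_zero]
  have h' : (1 + 7 * c.P) = 8 * E 2 ^ 7 * E 7 * (Ei 1 ^ 7 * Ei 14) := by
    linear_combination (Ei 1 ^ 7 * Ei 14) * h - (1 + 7 * c.P) * (E 1 ^ 7 * Ei 1 ^ 7) * E_Ei 14 (by norm_num) - (1 + 7 * c.P) * E_Ei_pow 1 (by norm_num) 7
  have hF' : FF * E 49 ^ 7 = 8 * qp 14 * E 98 ^ 7 * E 7 * Ei 14 := by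
    linear_combination Ei 14 * hF - FF * E 49 ^ 7 * E_Ei 14 (by norm_num)
  rw [xi2_E, uu]
  have a := E_Ei_pow 98 (by norm_num) 7
  generalize E 98 = x at *; generalize Ei 98 = x' at *
  linear_combination h' - qp (-4) ^ 7 * qp 2 ^ 7 * E 2 ^ 7 * x' ^ 7 * Ei 1 ^ 7 * hF' - 8 * E 7 * Ei 14 * E 2 ^ 7 * Ei 1 ^ 7 * (qp 14 * qp (-4) ^ 7 * qp 2 ^ 7 * a + q)

def Win (g : R) (d : D3) : Prop := g = ev Ti d.1 * Tv + ev Ti d.2.1 * c.P + ev Ti d.2.2 * (ww * Ti)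
lemma ev_map (f : R →+* R) (x : R) (l : List ℤ) : f (ev x l) = ev (f x) l := by
  induction l with
  | nil => rw [ev, ev, map_zero]
  | cons a l ih => rw [ev, ev, map_add, map_mul, ih, map_intCast]
lemma win (g : R) (d : D3) (h : W7 g * HH = SS d) : c.Win g d := by
  have e : g * Ti = (ev Ti d.1 * Tv + ev Ti d.2.1 * c.P + ev Ti d.2.2 * (ww * Ti)) * Ti := by
    apply V_inj 7 (by norm_num)
    change W7 _ = W7 _
    rw [map_mul, W7_Ti, h, SS, ← W7_ww, ← c.WP, ← W7_Ti, ← ev_map, ← ev_map, ← ev_map, ← map_mul, ← map_mul, ← map_mul, ← map_add, ← map_add]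
    congr 1
    linear_combination (-ev Ti d.1) * TTi
  have := congrArg (· * Tv) e
  simp only [mul_assoc] at this
  rw [mul_comm Ti Tv, TTi, mul_one, mul_one] at this
  exact this

def gg (ψ : R) (n : ℕ) : R := c.U (ψ * uu ^ n)
lemma uxi (K n : ℕ) (h : n ≤ K) : xi ^ K * uu ^ n = xi ^ (K - n) := by
  obtain ⟨k, rfl⟩ := Nat.exists_eq_add_of_le h
  rw [Nat.add_sub_cancel_left, pow_add, show xi ^ n * xi ^ k * uu ^ n = (uu * xi) ^ n * xi ^ k by ring, uu_xi]; ring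
lemma uxi' (K : ℕ) : uu ^ K * xi ^ K = 1 := by rw [← mul_pow, uu_xi, one_pow]
lemma xu1 (K k n : ℕ) (hn : n ≤ k) : uu ^ K * xi ^ (K + k) * uu ^ n = xi ^ (k - n) := by
  rw [pow_add, show uu ^ K * (xi ^ K * xi ^ k) * uu ^ n = (uu ^ K * xi ^ K) * (xi ^ k * uu ^ n) by ring, uxi', uxi k n hn, one_mul]

def D (l : List D3) (n : ℕ) : D3 := l.getD n ([], [], [])
lemma g1 (n : ℕ) (hn : n < 7) : c.Win (c.gg (xi ^ 6) n) (D wd1 n) := by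
  apply c.win
  rw [gg, uxi 6 n (by omega)]
  have := winA c.U c.hU _ _ _ (chkL_get ck1 n hn)
  rwa [pow_zero, one_mul] at this
lemma gA (n : ℕ) (hn : n < 7) : c.Win (c.gg (AA * xi ^ 16) n) (D wdA n) := by
  apply c.win
  rw [gg, AA, show xi2 ^ 3 * uu ^ 10 * xi ^ 16 * uu ^ n = xi2 ^ 3 * (uu ^ 10 * xi ^ (10 + 6) * uu ^ n) by ring, xu1 10 6 n (by omega)]
  exact winA c.U c.hU _ _ _ (chkL_get ckA n hn)
lemma ClsH : Cls 0 HH := by rw [← W7_Ti]; exact Cls.V7 _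
lemma ClsH2 : Cls 0 H2 := by rw [← W7_ww]; exact Cls.V7 _
lemma ClsF (c : Ctx) : Cls 0 FF := by
  rw [FF_eq]
  refine ((((Cls.int 8).cast rfl).add ClsH).sub ?_)
  rw [← Ctx.WP c, ← W7_Ti, ← map_mul]; exact Cls.V7 _
lemma winB' (g : R) (j κ : ℕ) (d : D3) (h : chkB j κ d = true) (f : R) (hf : H2 * f = HH * (xi2 ^ j * xi ^ κ)) (hg : g = c.U f) : c.Win g d := by
  apply c.win
  have h1 := winB c.U c.hU _ _ _ h
  have h2 := U_mul0 c.U c.hU HH (xi2 ^ j * xi ^ κ) ClsH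
  rw [← hf, U_mul0 c.U c.hU H2 f ClsH2, ← hg] at h2
  apply mul_left_cancel₀ H2_ne
  linear_combination h1 + HH * h2
lemma gp1 (n : ℕ) (hn : n < 7) : c.Win (c.gg (pp1 * xi ^ 10) n) (D wdp1 n) := by
  refine c.winB' _ _ _ _ (chkL_get ckp1 n hn) _ ?_ rfl
  rw [← xu1 4 6 n (by omega)]
  linear_combination xi ^ 10 * uu ^ n * pp1_xi
lemma gAp1 (n : ℕ) (hn : n < 7) : c.Win (c.gg (AA * pp1 * xi ^ 20) n) (D wdAp1 n) := by
  refine c.winB' _ _ _ _ (chkL_get ckAp1 n hn) _ ?_ rfl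
  rw [← xu1 14 6 n (by omega), AA]
  linear_combination xi2 ^ 3 * uu ^ 10 * xi ^ 20 * uu ^ n * pp1_xi
lemma winC' (g : R) (j κ i μ : ℕ) (d : D3) (h : chkC j κ i μ d = true) (f : R) (hf : 7 * f = FF * (xi2 ^ j * xi ^ κ) - xi2 ^ i * xi ^ μ) (hg : g = c.U f) : c.Win g d := by
  apply c.win
  have h1 := winC c.U c.hU _ _ _ _ _ h
  have h2 := U_mul0 c.U c.hU FF (xi2 ^ j * xi ^ κ) c.ClsF
  rw [show FF * (xi2 ^ j * xi ^ κ) = ((7 : ℤ) : R) * f + xi2 ^ i * xi ^ μ by push_cast; linear_combination - hf, U_add c.U c.hU, map_add,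
    U_mul0 c.U c.hU _ f (Cls.int 7), ← hg] at h2
  have h7 : (7 : R) ≠ 0 := by
    have := intR_ne 7 (by norm_num); exact_mod_cast this
  apply mul_left_cancel₀ h7
  push_cast at h2
  linear_combination h1 + HH * h2
lemma gp0 (n : ℕ) (hn : n < 7) : c.Win (c.gg (c.P * xi ^ 13) n) (D wdp0 n) := by
  refine c.winC' _ _ _ _ _ _ (chkL_get ckp0 n hn) _ ?_ rfl
  rw [show 6 - n + 7 = 13 - n by omega, ← uxi 13 n (by omega), ← xu1 7 6 n (by omega)]
  linear_combination xi ^ 13 * uu ^ n * c.P7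
lemma gAp0 (n : ℕ) (hn : n < 7) : c.Win (c.gg (AA * c.P * xi ^ 23) n) (D wdAp0 n) := by
  refine c.winC' _ _ _ _ _ _ (chkL_get ckAp0 n hn) _ ?_ rfl
  rw [show 6 - n + 7 = 13 - n by omega, ← xu1 10 13 n (by omega), ← xu1 17 6 n (by omega), AA]
  linear_combination xi2 ^ 3 * uu ^ 10 * xi ^ 23 * uu ^ n * c.P7
end Ctx
end S12

namespace S12
open PowerSeries
namespace Ctx
variable (c : Ctx)

def bs (i : Fin 3) : R := if i = 0 then 1 else if i = 1 then c.P else ww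
def gen (i : Fin 3) (m : ℤ) (N : ℕ) : R := 7 ^ N * c.bs i * ((TT ^ m : Rˣ) : R)
def Lt (Q : Fin 3 → ℤ → ℕ → Prop) : AddSubgroup R := AddSubgroup.closure {x | ∃ i m N, Q i m N ∧ x = c.gen i m N}
variable {c}
lemma Lt_gen {Q : Fin 3 → ℤ → ℕ → Prop} {i : Fin 3} {m : ℤ} {N : ℕ} (h : Q i m N) : c.gen i m N ∈ c.Lt Q :=
  AddSubgroup.subset_closure ⟨i, m, N, h, rfl⟩
lemma Lt_ind {Q : Fin 3 → ℤ → ℕ → Prop} (S : AddSubgroup R) (f : R →+ R) (h : ∀ i m N, Q i m N → f (c.gen i m N) ∈ S) {x : R} (hx : x ∈ c.Lt Q) : f x ∈ S := by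
  have : c.Lt Q ≤ S.comap f := by
    refine (AddSubgroup.closure_le _).2 ?_
    rintro _ ⟨i, m, N, hQ, rfl⟩
    exact h i m N hQ
  exact this hx
lemma Lt_int {Q : Fin 3 → ℤ → ℕ → Prop} (k : ℤ) {x : R} (hx : x ∈ c.Lt Q) : (k : R) * x ∈ c.Lt Q := by
  rw [← zsmul_eq_mul]; exact AddSubgroup.zsmul_mem _ hx k
lemma Lt_shift {Q Q' : Fin 3 → ℤ → ℕ → Prop} (r : ℕ) (j : ℤ) (h : ∀ i m N, Q i m N → Q' i (m + j) (N + r)) {x : R} (hx : x ∈ c.Lt Q) :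
    7 ^ r * ((TT ^ j : Rˣ) : R) * x ∈ c.Lt Q' := by
  refine Lt_ind (c.Lt Q') (AddMonoidHom.mulLeft (7 ^ r * ((TT ^ j : Rˣ) : R))) ?_ hx
  intro i m N hQ
  have : (AddMonoidHom.mulLeft (7 ^ r * ((TT ^ j : Rˣ) : R))) (c.gen i m N) = c.gen i (m + j) (N + r) := by
    rw [AddMonoidHom.coe_mulLeft, gen, gen, zpow_add, Units.val_mul, pow_add]; ring
  rw [this]
  exact Lt_gen (h _ _ _ hQ)
lemma Lt_mono {Q Q' : Fin 3 → ℤ → ℕ → Prop} (h : ∀ i m N, Q i m N → Q' i m N) {x : R} (hx : x ∈ c.Lt Q) : x ∈ c.Lt Q' := by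
  have := Lt_shift (Q' := Q') 0 0 (by simpa using h) hx
  simpa using this

def Pf (e s : Fin 3 → ℤ) (k : ℤ) (i : Fin 3) (m : ℤ) (N : ℕ) : Prop := 7 * m - 2 * k + e i ≤ 4 * N ∧ s i ≤ 7 * m - 2 * k

def mchk (e s k : ℤ) : ℤ → List ℤ → Bool
  | _, [] => true
  | m, a :: l => (decide (a = 0) || (decide (s ≤ 7 * m - 2 * k) && decide (a % (7 ^ ((7 * m - 2 * k + e + 3) / 4).toNat) = 0))) && mchk e s k (m - 1) l
lemma mchk_mem (e s : Fin 3 → ℤ) (k : ℤ) (i : Fin 3) (m : ℤ) (l : List ℤ) (h : mchk (e i) (s i) k m l = true) :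
    ev Ti l * c.bs i * ((TT ^ m : Rˣ) : R) ∈ c.Lt (Pf e s k) := by
  induction l generalizing m with
  | nil => rw [ev, zero_mul, zero_mul]; exact AddSubgroup.zero_mem _
  | cons a l ih =>
    simp only [mchk, Bool.and_eq_true, Bool.or_eq_true, decide_eq_true_eq] at h
    have e1 : ev Ti (a :: l) * c.bs i * ((TT ^ m : Rˣ) : R) = (a : R) * c.bs i * ((TT ^ m : Rˣ) : R) + ev Ti l * c.bs i * ((TT ^ (m - 1) : Rˣ) : R) := by
      rw [ev, zpow_sub_one, Units.val_mul]; ring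
    rw [e1]
    refine AddSubgroup.add_mem _ ?_ (ih (m - 1) h.2)
    rcases h.1 with h0 | ⟨h1, h2⟩
    · rw [h0]; simp
    · obtain ⟨b, hb⟩ := Int.dvd_of_emod_eq_zero h2
      have : (a : R) * c.bs i * ((TT ^ m : Rˣ) : R) = (b : R) * c.gen i m ((7 * m - 2 * k + e i + 3) / 4).toNat := by
        rw [hb, gen]; push_cast; ring
      rw [this]
      refine Lt_int b (Lt_gen ⟨?_, h1⟩)
      have := Int.self_le_toNat ((7 * m - 2 * k + e i + 3) / 4)
      omega
def wchk (e s : Fin 3 → ℤ) (k0 : ℤ) (l : List D3) : Bool :=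
  (List.range 7).all fun n => mchk (e 0) (s 0) (k0 + n) 1 (D l n).1 && mchk (e 1) (s 1) (k0 + n) 0 (D l n).2.1 && mchk (e 2) (s 2) (k0 + n) (-1) (D l n).2.2
lemma wmem (e s : Fin 3 → ℤ) (k0 : ℤ) (l : List D3) (h : wchk e s k0 l = true) (n : ℕ) (hn : n < 7) (g : R) (hg : c.Win g (D l n)) :
    g ∈ c.Lt (Pf e s (k0 + n)) := by
  rw [wchk, List.all_eq_true] at h
  have h' := h n (List.mem_range.2 hn)
  simp only [Bool.and_eq_true] at h'
  have m0 := mchk_mem (c := c) e s (k0 + n) 0 _ _ h'.1.1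
  have m1 := mchk_mem (c := c) e s (k0 + n) 1 _ _ h'.1.2
  have m2 := mchk_mem (c := c) e s (k0 + n) 2 _ _ h'.2
  have := AddSubgroup.add_mem _ (AddSubgroup.add_mem _ m0 m1) m2
  rw [show g = _ from hg]
  convert this using 2
  · simp [bs]
  · simp [bs, mul_assoc]

lemma ured : uu ^ 7 = W7 (Tv ^ 2) * (1 + 7 * uu + 21 * uu ^ 2 + 49 * uu ^ 3 + 147 * uu ^ 4 + 343 * uu ^ 5 + 343 * uu ^ 6) + W7 Tv * (7 * uu ^ 4 + 35 * uu ^ 5 + 49 * uu ^ 6) := by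
  have hT : W7 Tv * HH = 1 := by rw [← W7_Ti, ← map_mul, TTi, map_one]
  have hm := modeq
  have e := uu_xi
  have e7 := uxi 7 7 le_rfl
  have e6 := uxi 6 6 le_rfl
  have e5 := uxi 5 5 le_rfl
  have e4 := uxi 4 4 le_rfl
  have e3 := uxi 3 3 le_rfl
  have e2 := uxi 2 2 le_rfl
  simp only [Nat.sub_self, pow_zero] at e7 e6 e5 e4 e3 e2
  rw [map_pow]
  generalize W7 Tv = τ at *
  have key : uu ^ 7 * HH ^ 2 = (1 + 7 * uu + 21 * uu ^ 2 + 49 * uu ^ 3 + 147 * uu ^ 4 + 343 * uu ^ 5 + 343 * uu ^ 6) + HH * (7 * uu ^ 4 + 35 * uu ^ 5 + 49 * uu ^ 6) := by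
    linear_combination uu ^ 7 * hm + e7 + 7 * uu * e6 + 21 * uu ^ 2 * e5 + (49 * uu ^ 3) * e4 + (147 * uu ^ 4 + 7 * HH * uu ^ 4) * e3 + (343 * uu ^ 5 + 35 * HH * uu ^ 5) * e2 + (343 * uu ^ 6 + 49 * HH * uu ^ 6) * e
  linear_combination τ ^ 2 * key + (-uu ^ 7 * (τ * HH + 1) + τ * (7 * uu ^ 4 + 35 * uu ^ 5 + 49 * uu ^ 6)) * hT
def UU (c : Ctx) : R →+ R := AddMonoidHom.mk' c.U (U_add c.U c.hU)
lemma UU_V (g f : R) : c.UU (W7 g * f) = g * c.UU f := U_mul_V7 c.U c.hU g f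
lemma UU_Z (k : ℕ) (f : R) : c.UU ((k : R) * f) = (k : R) * c.UU f := by
  have := UU_V (c := c) (k : R) f
  rwa [map_natCast] at this
lemma grec (ψ : R) (n : ℕ) : c.gg ψ (n + 7) = Tv ^ 2 * (c.gg ψ n + 7 * c.gg ψ (n + 1) + 21 * c.gg ψ (n + 2) + 49 * c.gg ψ (n + 3) + 147 * c.gg ψ (n + 4) + 343 * c.gg ψ (n + 5) + 343 * c.gg ψ (n + 6))
    + Tv * (7 * c.gg ψ (n + 4) + 35 * c.gg ψ (n + 5) + 49 * c.gg ψ (n + 6)) := by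
  have h : ∀ k, c.gg ψ k = c.UU (ψ * uu ^ k) := fun k => rfl
  rw [h (n + 7), pow_add, ured]
  rw [show ψ * (uu ^ n * (W7 (Tv ^ 2) * (1 + 7 * uu + 21 * uu ^ 2 + 49 * uu ^ 3 + 147 * uu ^ 4 + 343 * uu ^ 5 + 343 * uu ^ 6) + W7 Tv * (7 * uu ^ 4 + 35 * uu ^ 5 + 49 * uu ^ 6)))
    = W7 (Tv ^ 2) * (ψ * uu ^ n + (7 : ℕ) * (ψ * uu ^ (n + 1)) + (21 : ℕ) * (ψ * uu ^ (n + 2)) + (49 : ℕ) * (ψ * uu ^ (n + 3)) + (147 : ℕ) * (ψ * uu ^ (n + 4)) + (343 : ℕ) * (ψ * uu ^ (n + 5)) + (343 : ℕ) * (ψ * uu ^ (n + 6)))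
      + W7 Tv * ((7 : ℕ) * (ψ * uu ^ (n + 4)) + (35 : ℕ) * (ψ * uu ^ (n + 5)) + (49 : ℕ) * (ψ * uu ^ (n + 6))) by
      push_cast; generalize W7 (Tv ^ 2) = x; generalize W7 Tv = y; ring]
  simp only [map_add, UU_V, UU_Z, ← h]
  push_cast
  rfl

lemma fam (e s : Fin 3 → ℤ) (k0 : ℤ) (ψ : R) (h : ∀ n : ℕ, n < 7 → c.gg ψ n ∈ c.Lt (Pf e s (k0 + n))) (n : ℕ) : c.gg ψ n ∈ c.Lt (Pf e s (k0 + n)) := by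
  induction n using Nat.strong_induction_on with
  | _ n ih =>
    rcases Nat.lt_or_ge n 7 with hn | hn
    · exact h n hn
    · obtain ⟨n, rfl⟩ := Nat.exists_eq_add_of_le' hn
      have T2 : ∀ (a : ℤ) (r v : ℕ), r < 7 → r ≤ 2 * v → (a : R) * (7 ^ v * ((TT ^ (2 : ℤ) : Rˣ) : R) * c.gg ψ (n + r)) ∈ c.Lt (Pf e s (k0 + (n + 7 : ℕ))) := by
        intro a r v hr hv
        refine Lt_int a (Lt_shift v 2 ?_ (ih (n + r) (by omega)))
        rintro i m N ⟨h1, h2⟩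
        constructor <;> push_cast at * <;> linarith
      have T1 : ∀ (a : ℤ) (r v : ℕ), r < 7 → 4 ≤ r → 2 * r ≤ 4 * v + 7 → (a : R) * (7 ^ v * ((TT ^ (1 : ℤ) : Rˣ) : R) * c.gg ψ (n + r)) ∈ c.Lt (Pf e s (k0 + (n + 7 : ℕ))) := by
        intro a r v hr hr' hv
        refine Lt_int a (Lt_shift v 1 ?_ (ih (n + r) (by omega)))
        rintro i m N ⟨h1, h2⟩
        constructor <;> push_cast at * <;> linarith
      have := AddSubgroup.add_mem _ (AddSubgroup.add_mem _ (AddSubgroup.add_mem _ (AddSubgroup.add_mem _ (AddSubgroup.add_mem _ (AddSubgroup.add_mem _ (AddSubgroup.add_mem _ (AddSubgroup.add_mem _ (AddSubgroup.add_mem _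
        (T2 1 0 0 (by omega) (by omega)) (T2 1 1 1 (by omega) (by omega))) (T2 3 2 1 (by omega) (by omega))) (T2 1 3 2 (by omega) (by omega)))
        (T2 3 4 2 (by omega) (by omega))) (T2 1 5 3 (by omega) (by omega))) (T2 1 6 3 (by omega) (by omega)))
        (T1 1 4 1 (by omega) (by omega) (by omega))) (T1 5 5 1 (by omega) (by omega) (by omega))) (T1 1 6 2 (by omega) (by omega) (by omega))
      rw [grec]
      convert this using 1
      rw [zpow_one, zpow_ofNat, Units.val_pow_eq_pow_val]
      push_cast
      rw [add_zero]
      ring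
def PU (e s : Fin 3 → ℤ) (n : ℕ) (i : Fin 3) (m : ℤ) (N : ℕ) : Prop := 7 * m - n + e i ≤ 4 * N ∧ s i ≤ 7 * m - n
lemma famT (e s : Fin 3 → ℤ) (K : ℕ) (φ : R) (l : List D3) (hl : wchk e s (-K) l = true) (h : ∀ n : ℕ, n < 7 → c.Win (c.gg (φ * xi ^ K) n) (D l n)) (n : ℕ) :
    c.UU (φ * Tv ^ n) ∈ c.Lt (PU e s n) := by
  have h1 := fam e s (-K) _ (fun n hn => wmem e s _ l hl n hn _ (h n hn)) (4 * n + K)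
  have h2 : c.UU (φ * Tv ^ n) = 7 ^ 0 * ((TT ^ (-(n : ℤ)) : Rˣ) : R) * c.gg (φ * xi ^ K) (4 * n + K) := by
    have : φ * Tv ^ n = W7 (Ti ^ n) * (φ * xi ^ K * uu ^ (4 * n + K)) := by
      have e := uxi K K le_rfl
      rw [Nat.sub_self, pow_zero] at e
      rw [map_pow, W7_Ti, Tv_uu, mul_pow, ← pow_mul, pow_add]
      linear_combination (-φ * uu ^ (4 * n) * HH ^ n) * e
    rw [this, UU_V, pow_zero, one_mul, zpow_neg, zpow_natCast, ← inv_pow, Units.val_pow_eq_pow_val]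
    rfl
  rw [h2]
  refine Lt_shift 0 _ ?_ h1
  rintro i m N ⟨h1, h2⟩
  constructor <;> push_cast at * <;> linarith

lemma f1 (n : ℕ) : c.UU (Tv ^ n) ∈ c.Lt (PU ![-4, 100, 100] ![0, 100, 100] n) := by
  have := famT (c := c) ![-4, 100, 100] ![0, 100, 100] 6 1 wd1 (by decide +kernel) (by simpa using c.g1) n
  rwa [one_mul] at this
lemma fp1 (n : ℕ) : c.UU (pp1 * Tv ^ n) ∈ c.Lt (PU ![-3, 0, 3] ![1, -3, -3] n) :=
  famT _ _ 10 _ wdp1 (by decide +kernel) c.gp1 n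
lemma fp0 (n : ℕ) : c.UU (c.P * Tv ^ n) ∈ c.Lt (PU ![-4, -1, 3] ![1, -3, -3] n) :=
  famT _ _ 13 _ wdp0 (by decide +kernel) c.gp0 n
lemma fA (n : ℕ) : c.UU (AA * Tv ^ n) ∈ c.Lt (PU ![-18, -14, -10] ![17, 14, 8] n) :=
  famT _ _ 16 _ wdA (by decide +kernel) c.gA n
lemma fAp1 (n : ℕ) : c.UU (AA * pp1 * Tv ^ n) ∈ c.Lt (PU ![-17, -14, -11] ![18, 15, 7] n) :=
  famT _ _ 20 _ wdAp1 (by decide +kernel) c.gAp1 n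
lemma fAp0 (n : ℕ) : c.UU (AA * c.P * Tv ^ n) ∈ c.Lt (PU ![-18, -15, -11] ![18, 14, 8] n) :=
  famT _ _ 23 _ wdAp0 (by decide +kernel) c.gAp0 n
end Ctx
end S12

namespace S12
open PowerSeries
namespace Ctx
variable {c : Ctx}

def PM (i : Fin 3) (m : ℤ) (N : ℕ) : Prop := 7 * m + (![-10, -7, -3] : Fin 3 → ℤ) i ≤ 4 * N ∧ (![1, 0, 0] : Fin 3 → ℤ) i ≤ m
def PN (i : Fin 3) (m : ℤ) (N : ℕ) : Prop := 7 * m + (![-19, -16, -12] : Fin 3 → ℤ) i ≤ 4 * N ∧ (![3, 2, 2] : Fin 3 → ℤ) i ≤ m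
def PE (i : Fin 3) (m : ℤ) (N : ℕ) : Prop := (7 * m + (![-6, -3, 1] : Fin 3 → ℤ) i ≤ 4 * N ∧ 1 ≤ N ∧ (![1, 0, 0] : Fin 3 → ℤ) i ≤ m) ∨ (i = 1 ∧ m = 0)

lemma Lt_mul {Q Q' : Fin 3 → ℤ → ℕ → Prop} (r : ℕ) (h : ∀ i m N, Q i m N → Q' i m (N + r)) {x : R} (hx : x ∈ c.Lt Q) :
    ((7 ^ r : ℕ) : R) * x ∈ c.Lt Q' := by
  have := Lt_shift (Q' := Q') r 0 (by simpa using h) hx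
  push_cast
  simpa using this
lemma gen0 (n N : ℕ) : c.gen 0 n N = ((7 ^ N : ℕ) : R) * Tv ^ n := by
  rw [gen, zpow_natCast, Units.val_pow_eq_pow_val]; simp [bs]
lemma gen1 (n N : ℕ) : c.gen 1 n N = ((7 ^ N : ℕ) : R) * (c.P * Tv ^ n) := by
  rw [gen, zpow_natCast, Units.val_pow_eq_pow_val]; simp [bs, mul_assoc]
lemma gen2 (n N : ℕ) : c.gen 2 n N = ((7 ^ N : ℕ) : R) * (pp1 * Tv ^ (n + 1)) := by
  rw [gen, zpow_natCast, Units.val_pow_eq_pow_val]; simp [bs, mul_assoc, ww, pow_succ']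

lemma stepA {x : R} (hx : x ∈ c.Lt PM) : c.UU (AA * x) ∈ c.Lt PN := by
  refine Lt_ind (c.Lt PN) (c.UU.comp (AddMonoidHom.mulLeft AA)) ?_ hx
  rintro i m N ⟨h1, h2⟩
  change c.UU (AA * _) ∈ _
  fin_cases i <;> simp at h1 h2
  · obtain ⟨n, rfl⟩ := Int.eq_ofNat_of_zero_le (show 0 ≤ m by omega)
    change c.UU (AA * c.gen 0 n N) ∈ _
    rw [gen0, mul_left_comm, UU_Z]
    refine Lt_mul N ?_ (fA n)
    rintro i m' M ⟨h3, h4⟩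
    fin_cases i <;> simp [PN] at h3 h4 ⊢ <;> omega
  · obtain ⟨n, rfl⟩ := Int.eq_ofNat_of_zero_le (show 0 ≤ m by omega)
    change c.UU (AA * c.gen 1 n N) ∈ _
    rw [gen1, mul_left_comm, UU_Z, ← mul_assoc AA]
    refine Lt_mul N ?_ (fAp0 n)
    rintro i m' M ⟨h3, h4⟩
    fin_cases i <;> simp [PN] at h3 h4 ⊢ <;> omega
  · obtain ⟨n, rfl⟩ := Int.eq_ofNat_of_zero_le (show 0 ≤ m by omega)
    change c.UU (AA * c.gen 2 n N) ∈ _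
    rw [gen2, mul_left_comm, UU_Z, ← mul_assoc AA]
    refine Lt_mul N ?_ (fAp1 (n + 1))
    rintro i m' M ⟨h3, h4⟩
    fin_cases i <;> simp [PN] at h3 h4 ⊢ <;> omega
lemma baseA : c.UU (AA * 1) ∈ c.Lt PN := by
  have := fA (c := c) 0
  rw [pow_zero] at this
  refine Lt_mono ?_ this
  rintro i m' M ⟨h3, h4⟩
  fin_cases i <;> simp [PN] at h3 h4 ⊢ <;> omega
lemma stepB {x : R} (hx : x ∈ c.Lt PN) : c.UU x ∈ c.Lt PE := by
  refine Lt_ind (c.Lt PE) c.UU ?_ hx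
  rintro i m N ⟨h1, h2⟩
  fin_cases i <;> simp at h1 h2
  · obtain ⟨n, rfl⟩ := Int.eq_ofNat_of_zero_le (show 0 ≤ m by omega)
    change c.UU (c.gen 0 n N) ∈ _
    rw [gen0, UU_Z]
    refine Lt_mul N ?_ (f1 n)
    rintro i m' M ⟨h3, h4⟩
    fin_cases i <;> simp [PE] at h3 h4 ⊢ <;> omega
  · obtain ⟨n, rfl⟩ := Int.eq_ofNat_of_zero_le (show 0 ≤ m by omega)
    change c.UU (c.gen 1 n N) ∈ _
    rw [gen1, UU_Z]
    refine Lt_mul N ?_ (fp0 n)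
    rintro i m' M ⟨h3, h4⟩
    fin_cases i <;> simp [PE] at h3 h4 ⊢ <;> omega
  · obtain ⟨n, rfl⟩ := Int.eq_ofNat_of_zero_le (show 0 ≤ m by omega)
    change c.UU (c.gen 2 n N) ∈ _
    rw [gen2, UU_Z]
    refine Lt_mul N ?_ (fp1 (n + 1))
    rintro i m' M ⟨h3, h4⟩
    fin_cases i <;> simp [PE] at h3 h4 ⊢ <;> omega

lemma splitE {x : R} (hx : x ∈ c.Lt PE) : ∃ y ∈ c.Lt PM, ∃ d : ℤ, x = 7 * y + d * c.P := by
  refine AddSubgroup.closure_induction (p := fun x _ => ∃ y ∈ c.Lt PM, ∃ d : ℤ, x = 7 * y + d * c.P) ?_ ?_ ?_ ?_ hx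
  · rintro _ ⟨i, m, N, h | ⟨rfl, rfl⟩, rfl⟩
    · obtain ⟨h1, h2, h3⟩ := h
      obtain ⟨N, rfl⟩ := Nat.exists_eq_add_of_le' h2
      refine ⟨c.gen i m N, Lt_gen ?_, 0, ?_⟩
      · fin_cases i <;> simp [PM] at h1 h3 ⊢ <;> omega
      · rw [gen, gen, pow_succ]; push_cast; ring
    · refine ⟨0, AddSubgroup.zero_mem _, 7 ^ N, ?_⟩
      have := gen1 (c := c) 0 N
      rw [pow_zero, mul_one] at this
      rw [mul_zero, zero_add]
      push_cast at this ⊢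
      exact this
  · exact ⟨0, AddSubgroup.zero_mem _, 0, by simp⟩
  · rintro _ _ _ _ ⟨y, hy, d, rfl⟩ ⟨y', hy', d', rfl⟩
    exact ⟨y + y', AddSubgroup.add_mem _ hy hy', d + d', by push_cast; ring⟩
  · rintro _ _ ⟨y, hy, d, rfl⟩
    exact ⟨-y, AddSubgroup.neg_mem _ hy, -d, by push_cast; ring⟩

def cf0 : R →+ ℤ := AddMonoidHom.mk' (fun f => f.coeff 0) (fun a b => by rfl)
lemma cf0_io (f : PowerSeries ℤ) : cf0 (io f) = constantCoeff f := by
  have := io_coeff_nat f 0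
  rw [← coeff_zero_eq_constantCoeff_apply]
  exact this
lemma cf0_int (k : ℤ) (f : R) : cf0 ((k : R) * f) = k * cf0 f := by
  rw [← zsmul_eq_mul, map_zsmul, smul_eq_mul]
lemma cf0_P : cf0 c.P = 1 := by
  rw [P, cf0_io]
  have h := congrArg constantCoeff c.hp0
  simp only [map_mul, map_pow, map_add, map_one, map_ofNat, constCoeff_J 1 (by norm_num), constCoeff_J 14 (by norm_num), constCoeff_J 2 (by norm_num), constCoeff_J 7 (by norm_num)] at h
  have : constantCoeff (7 : PowerSeries ℤ) = 7 := map_ofNat _ 7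
  have : constantCoeff (8 : PowerSeries ℤ) = 8 := map_ofNat _ 8
  omega
lemma io_ww : ∃ f, ww = io f := by
  have e : ww = (qp (-1) * qp 1) * (E 2 ^ 4 * Ei 1 ^ 8 * E 7 ^ 8 * Ei 14 ^ 4) := by
    rw [ww, pp1, Tv_def]; ring
  rw [e, qp_neg_mul, one_mul]
  simp only [E, Ei, ← map_pow, ← map_mul]
  exact ⟨_, rfl⟩
lemma io_bs (i : Fin 3) : ∃ f, c.bs i = io f := by
  obtain ⟨f, hf⟩ := io_ww
  fin_cases i
  · exact ⟨1, by simp [bs]⟩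
  · exact ⟨c.p0, by simp [bs, P]⟩
  · exact ⟨f, by simp [bs, hf]⟩
lemma io_T : ∃ f, Tv = io (X * f) := by
  refine ⟨J 7 ^ 4 * Ji 1 ^ 4, ?_⟩
  rw [Tv_def, show (1:ℤ) = ((1:ℕ):ℤ) by norm_num, qp_nat, pow_one]
  simp only [E, Ei, ← map_pow, ← map_mul, mul_assoc]
lemma cfN {x : R} (hx : x ∈ c.Lt PN) : cf0 x = 0 := by
  have : c.Lt PN ≤ cf0.ker := by
    refine (AddSubgroup.closure_le _).2 ?_
    rintro _ ⟨i, m, N, ⟨h1, h2⟩, rfl⟩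
    have hm : 1 ≤ m := by fin_cases i <;> simp at h2 <;> omega
    obtain ⟨n, rfl⟩ := Int.eq_ofNat_of_zero_le (show 0 ≤ m by omega)
    obtain ⟨n, rfl⟩ := Nat.exists_eq_add_of_le' (show 1 ≤ n by omega)
    obtain ⟨f, hf⟩ := io_bs (c := c) i
    obtain ⟨g, hg⟩ := io_T
    change cf0 _ = 0
    have : c.gen i (n + 1 : ℕ) N = ((7 ^ N : ℤ) : R) * io (X * (f * g * (X * g) ^ n)) := by
      rw [gen, zpow_natCast, Units.val_pow_eq_pow_val, hf]
      change _ * Tv ^ _ = _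
      rw [hg]
      simp only [map_mul, map_pow]
      push_cast; ring
    rw [this, cf0_int, cf0_io, map_mul, constantCoeff_X]; simp
  exact this hx
lemma stepC {x : R} (hx : x ∈ c.Lt PN) : ∃ y ∈ c.Lt PM, c.UU x = 7 * y := by
  obtain ⟨y, hy, d, h⟩ := splitE (stepB hx)
  have h0 : cf0 (c.UU x) = 0 := by
    rw [← cfN hx]
    have := c.hU x 0
    rwa [mul_zero] at this
  have e : (7 : R) = ((7 : ℤ) : R) := by norm_num
  have h1 := h0
  rw [h, map_add, e, cf0_int, cf0_int, cf0_P] at h1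
  refine ⟨y + ((-cf0 y : ℤ) : R) * c.P, AddSubgroup.add_mem _ hy (Lt_int _ ?_), ?_⟩
  · have := gen1 (c := c) 0 0
    rw [pow_zero, pow_zero, mul_one, Nat.cast_one, one_mul] at this
    rw [← this]
    apply Lt_gen
    simp [PM]
  · rw [h, show d = -(7 * cf0 y) by omega]; push_cast; ring

lemma UU_pow (a : ℕ) (f : R) : c.UU (7 ^ a * f) = 7 ^ a * c.UU f := by
  have := UU_Z (c := c) (7 ^ a) f
  push_cast at this; exact this
lemma tower (L : ℕ → R) (hL0 : L 0 = 1)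
    (hLodd : ∀ β : ℕ, L (2 * β + 1) = c.U (AA * L (2 * β)))
    (hLeven : ∀ β : ℕ, L (2 * β + 2) = c.U (L (2 * β + 1))) (α : ℕ) :
    ∃ x ∈ c.Lt PM, L (2 * (α + 1)) = 7 ^ (α + 1) * x := by
  change ∀ β : ℕ, L (2 * β + 1) = c.UU (AA * L (2 * β)) at hLodd
  change ∀ β : ℕ, L (2 * β + 2) = c.UU (L (2 * β + 1)) at hLeven
  induction α with
  | zero =>
    have h1 := hLodd 0
    have h2 := hLeven 0
    rw [mul_zero, hL0] at h1
    rw [mul_zero] at h2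
    rw [h1] at h2
    obtain ⟨y, hy, h⟩ := stepC (baseA (c := c))
    exact ⟨y, hy, by rw [zero_add, pow_one, ← h]; exact h2⟩
  | succ α ih =>
    obtain ⟨x, hx, e⟩ := ih
    obtain ⟨y, hy, h⟩ := stepC (stepA hx)
    refine ⟨y, hy, ?_⟩
    have h1 := hLodd (α + 1)
    have h2 := hLeven (α + 1)
    rw [e, mul_left_comm, UU_pow] at h1
    rw [h1, UU_pow, h] at h2
    rw [show 2 * (α + 1 + 1) = 2 * (α + 1) + 2 by ring, h2]; ring
end Ctx
end S12

namespace S12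
open PowerSeries

lemma tps_add (t : PowerSeries ℤ) (f g : ℕ → ℤ) : tpowSum t (f + g) = tpowSum t f + tpowSum t g := by
  ext m
  simp only [tpowSum, coeff_mk, map_add, Pi.add_apply, add_mul, Finset.sum_add_distrib]
lemma tps_zero (t : PowerSeries ℤ) : tpowSum t 0 = 0 := by
  ext m
  simp [tpowSum]
lemma tps_single (t : PowerSeries ℤ) (ht : X ∣ t) (n : ℕ) (a : ℤ) : tpowSum t (Pi.single n a) = C a * t ^ n := by
  ext m
  rw [coeff_C_mul]
  simp only [tpowSum, coeff_mk]
  by_cases h : n ≤ m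
  · rw [Finset.sum_eq_single n]
    · simp
    · intro b _ hb
      rw [Pi.single_eq_of_ne hb, zero_mul]
    · intro hn
      exact absurd (Finset.mem_range.2 (by omega)) hn
  · have h0 : coeff m (t ^ n) = 0 := X_pow_dvd_iff.1 (pow_dvd_pow_of_dvd ht n) m (by omega)
    rw [h0, mul_zero]
    apply Finset.sum_eq_zero
    intro k hk
    have : k ≠ n := by have := Finset.mem_range.1 hk; omega
    rw [Pi.single_eq_of_ne this, zero_mul]

def cof (ε : ℕ → ℕ) (α j : ℕ) (d : ℕ → ℕ → ℤ) : ℕ → ℤ := fun n => if 1 ≤ n then d n j * 7 ^ (ε n + α) else 0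
lemma cof_add (ε : ℕ → ℕ) (α j : ℕ) (d d' : ℕ → ℕ → ℤ) : cof ε α j (d + d') = cof ε α j d + cof ε α j d' := by
  funext n
  simp only [cof, Pi.add_apply]
  split_ifs
  · ring
  · rfl
def dd (n j : ℕ) (a : ℤ) : ℕ → ℕ → ℤ := fun k i => if k = n ∧ i = j then a else 0
lemma cof_dd (ε : ℕ → ℕ) (α j : ℕ) (n : ℕ) (hn : 1 ≤ n) (a : ℤ) : cof ε α j (dd n j a) = Pi.single n (a * 7 ^ (ε n + α)) := by
  funext k
  by_cases h : k = n
  · subst h; simp [cof, dd, hn]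
  · rw [Pi.single_eq_of_ne h]; simp [cof, dd, h]
lemma cof_dd' (ε : ℕ → ℕ) (α j i : ℕ) (n : ℕ) (hij : i ≠ j) (a : ℤ) : cof ε α i (dd n j a) = 0 := by
  funext k
  simp [cof, dd, hij]
lemma cof_zero (ε : ℕ → ℕ) (α j : ℕ) : cof ε α j 0 = 0 := by
  funext k
  simp [cof]
def e0 (n : ℕ) : ℕ := (7 * n - 4) / 4
def e1 (n : ℕ) : ℕ := (7 * n - 7) / 4
namespace Ctx
variable (c : Ctx)
def form (t : PowerSeries ℤ) (α : ℕ) (x : ℤ × (ℕ → ℕ → ℤ)) : R :=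
  ((x.1 * 7 ^ α : ℤ) : R) * c.P + io (c.p0 * tpowSum t (cof e0 α 0 x.2)) + pp1 * io (tpowSum t (cof e1 α 1 x.2)) + io (tpowSum t (cof e1 α 2 x.2))
def formH (t : PowerSeries ℤ) (α : ℕ) : ℤ × (ℕ → ℕ → ℤ) →+ R := AddMonoidHom.mk' (c.form t α) (by
  intro x y
  simp only [form, Prod.fst_add, Prod.snd_add, cof_add, tps_add, map_add, mul_add]
  push_cast
  ring)
variable {c}
lemma ioC (a : ℤ) : io (C a) = (a : R) := by
  rw [← map_intCast io a, eq_intCast (C : ℤ →+* PowerSeries ℤ) a]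
lemma extract (t : PowerSeries ℤ) (ht : X ∣ t) (hT : io t = Tv) (α : ℕ) {x : R} (hx : x ∈ c.Lt PM) : ∃ y, c.form t α y = 7 ^ α * x := by
  have key : (AddMonoidHom.mulLeft (7 ^ α : R)) x ∈ (c.formH t α).range := by
    refine Lt_ind _ _ ?_ hx
    rintro i m N ⟨h1, h2⟩
    rw [AddMonoidHom.coe_mulLeft]
    change ∃ y, c.form t α y = _
    fin_cases i <;> simp at h1 h2
    · obtain ⟨n, rfl⟩ := Int.eq_ofNat_of_zero_le (show 0 ≤ m by omega)
      refine ⟨(0, dd n 2 (7 ^ (N - e1 n))), ?_⟩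
      have hn : 1 ≤ n := by omega
      have hN : N = N - e1 n + e1 n := by simp only [e1]; omega
      change _ = 7 ^ α * c.gen 0 n N
      rw [gen0, form]
      simp only [cof_dd e1 α 2 n hn, cof_dd' e1 α 2 1 n (by norm_num), cof_dd' e0 α 2 0 n (by norm_num), tps_zero, tps_single t ht]
      simp only [map_mul, map_zero, map_pow, ioC, hT]
      push_cast
      conv_rhs => rw [hN]
      ring
    · obtain ⟨n, rfl⟩ := Int.eq_ofNat_of_zero_le (show 0 ≤ m by omega)
      rcases Nat.eq_zero_or_pos n with rfl | hn
      · refine ⟨(7 ^ N, 0), ?_⟩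
        change _ = 7 ^ α * c.gen 1 (0 : ℕ) N
        rw [gen1, form]
        simp only [cof_zero, tps_zero, mul_zero, map_zero]
        push_cast
        ring
      · refine ⟨(0, dd n 0 (7 ^ (N - e0 n))), ?_⟩
        have hN : N = N - e0 n + e0 n := by simp only [e0]; omega
        change _ = 7 ^ α * c.gen 1 n N
        rw [gen1, form]
        simp only [cof_dd e0 α 0 n hn, cof_dd' e1 α 0 1 n (by norm_num), cof_dd' e1 α 0 2 n (by norm_num), tps_zero, tps_single t ht]
        simp only [map_mul, map_zero, map_pow, ioC, hT]
        change _ + c.P * _ + _ + _ = _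
        push_cast
        conv_rhs => rw [hN]
        ring
    · obtain ⟨n, rfl⟩ := Int.eq_ofNat_of_zero_le (show 0 ≤ m by omega)
      refine ⟨(0, dd (n + 1) 1 (7 ^ (N - e1 (n + 1)))), ?_⟩
      have hn : 1 ≤ n + 1 := by omega
      have hN : N = N - e1 (n + 1) + e1 (n + 1) := by simp only [e1]; omega
      change _ = 7 ^ α * c.gen 2 n N
      rw [gen2, form]
      simp only [cof_dd e1 α 1 (n + 1) hn, cof_dd' e1 α 1 2 (n + 1) (by norm_num), cof_dd' e0 α 1 0 (n + 1) (by norm_num), tps_zero, tps_single t ht]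
      simp only [map_mul, map_zero, map_pow, ioC, hT]
      push_cast
      conv_rhs => rw [hN]
      ring
  exact key
end Ctx
lemma X_dvd_t (t : PowerSeries ℤ) (ht : t * (J 1) ^ 4 = PowerSeries.X * (J 7) ^ 4) : X ∣ t := by
  have h := congrArg constantCoeff ht
  rw [map_mul, map_mul, map_pow, constCoeff_J 1 (by norm_num), constantCoeff_X] at h
  rw [X_dvd_iff]
  simpa using h
end S12

/-- in the d₃ tower, for every `α ≥ 1` there are integers `d(0,0)`, `d(n,i)`
with `L_{2α} = d(0,0)·7^α·p₀ + p₀·∑_{n≥1} d(n,0)·7^{⌊(7n−4)/4⌋+α}·tⁿ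
 + p₁·∑_{n≥1} d(n,1)·7^{⌊(7n−7)/4⌋+α}·tⁿ + ∑_{n≥1} d(n,2)·7^{⌊(7n−7)/4⌋+α}·tⁿ`.
Here `t = q·J_7^4/J_1^4`, `p₀ = (8·J_2^7·J_7/(J_1^7·J_14) − 1)/7`,
`p₁ = q⁻¹·J_2^4·J_7^4/(J_1^4·J_14^4)`, all given by their defining equations. -/
theorem stmt12
    (t : PowerSeries ℤ) (ht : t * (J 1) ^ 4 = PowerSeries.X * (J 7) ^ 4)
    (p0 : PowerSeries ℤ)
    (hp0 : (1 + 7 * p0) * ((J 1) ^ 7 * J 14) = 8 * (J 2) ^ 7 * J 7)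
    (p1 : LaurentSeries ℤ)
    (hp1 : p1 * HahnSeries.ofPowerSeries ℤ ℤ (PowerSeries.X * (J 1) ^ 4 * (J 14) ^ 4)
        = HahnSeries.ofPowerSeries ℤ ℤ ((J 2) ^ 4 * (J 7) ^ 4))
    (U : LaurentSeries ℤ → LaurentSeries ℤ)
    (hU : ∀ (f : LaurentSeries ℤ) (n : ℤ), (U f).coeff n = f.coeff (7 * n))
    (A3 : LaurentSeries ℤ)
    (hA3 : A3 * HahnSeries.ofPowerSeries ℤ ℤ ((J 1) ^ 10 * (J 98) ^ 3)
        = HahnSeries.ofPowerSeries ℤ ℤ (PowerSeries.X ^ 8 * (J 2) ^ 3 * (J 49) ^ 10))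
    (L : ℕ → LaurentSeries ℤ) (hL0 : L 0 = 1)
    (hLodd : ∀ β : ℕ, L (2 * β + 1) = U (A3 * L (2 * β)))
    (hLeven : ∀ β : ℕ, L (2 * β + 2) = U (L (2 * β + 1)))
    (α : ℕ) (hα : 1 ≤ α) :
    ∃ d00 : ℤ, ∃ d : ℕ → ℕ → ℤ,
      L (2 * α)
        = ((d00 * 7 ^ α : ℤ) : LaurentSeries ℤ) * HahnSeries.ofPowerSeries ℤ ℤ p0
        + HahnSeries.ofPowerSeries ℤ ℤ
            (p0 * tpowSum t fun n =>
              if 1 ≤ n then d n 0 * 7 ^ ((7 * n - 4) / 4 + α) else 0)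
        + p1 * HahnSeries.ofPowerSeries ℤ ℤ
            (tpowSum t fun n =>
              if 1 ≤ n then d n 1 * 7 ^ ((7 * n - 7) / 4 + α) else 0)
        + HahnSeries.ofPowerSeries ℤ ℤ
            (tpowSum t fun n =>
              if 1 ≤ n then d n 2 * 7 ^ ((7 * n - 7) / 4 + α) else 0) := by
  obtain rfl := S12.A_eq A3 hA3
  obtain rfl := S12.p1_eq p1 hp1
  obtain ⟨β, rfl⟩ := Nat.exists_eq_add_of_le' hα
  obtain ⟨x, hx, e⟩ := S12.Ctx.tower (c := ⟨U, hU, p0, hp0⟩) L hL0 hLodd hLeven β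
  obtain ⟨⟨d00, d⟩, h⟩ := S12.Ctx.extract t (S12.X_dvd_t t ht) (S12.t_eq t ht) (β + 1) hx
  rw [e, ← h]
  exact ⟨d00, d, rfl⟩
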